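/- Assume the strong Hardy–Littlewood conjecture (Conjecture B2): for n = k+1, k+2, π_n(x, {0}∪D_{n-1}) = S({0}∪D_{n-1}) x/(log x)^n (1 + E_n) uniformly for D_{n-1} ⊂ [2, (log x)^{k+1}] with S ≠ 0, where E_{k+1} = o(1/(log log x)²) and E_{k+2} = o(1). Then for all sufficiently large x, the greatest common divisor of the elements of every k-tuple jumping champion for x is squarefree. -/

import Mathlib

open Finset

/-- Number of residue classes mod `p` occupied by the elements of `D`. -/
def nu (D : Finset ℕ) (p : ℕ) : ℕ := (D.image (· % p)).card

/-- The Hardy–Littlewood singular series of a finite set `D`. -/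
noncomputable def singSeries (D : Finset ℕ) : ℝ :=
  ∏' p : Nat.Primes, ((1 - 1 / ((p : ℕ) : ℝ)) ^ D.card)⁻¹ * (1 - (nu D (p : ℕ) : ℝ) / ((p : ℕ) : ℝ))

/-- `primePi x D` counts positive integers `m ≤ x` with `m + d` prime for all `d ∈ D`. -/
noncomputable def primePi (x : ℝ) (D : Finset ℕ) : ℕ :=
  {m : ℕ | 0 < m ∧ (m : ℝ) ≤ x ∧ ∀ d ∈ D, Nat.Prime (m + d)}.ncard

/-- `Ncham x D` counts `n` such that `p_{n+k} ≤ x` and the gaps `p_{n+i} - p_n` for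
`i = 1, …, k` are exactly the elements of `D` (with `k = D.card`). -/
noncomputable def Ncham (x : ℝ) (D : Finset ℕ) : ℕ :=
  {n : ℕ | ((Nat.nth Nat.Prime (n + D.card) : ℝ) ≤ x) ∧
    (Finset.range D.card).image
      (fun i => Nat.nth Nat.Prime (n + i + 1) - Nat.nth Nat.Prime n) = D}.ncard

/-- `D` is a `k`-tuple jumping champion for `x`. -/
def IsChampion (k : ℕ) (x : ℝ) (D : Finset ℕ) : Prop :=
  D.card = k ∧ (∀ d ∈ D, 0 < d) ∧
    ∀ D' : Finset ℕ, D'.card = k → (∀ d ∈ D', 0 < d) → Ncham x D' ≤ Ncham x D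

/-- Number of prime factors counted with multiplicity. -/
def bigOmega (n : ℕ) : ℕ := n.primeFactorsList.length

/-- The `n`-th primorial `2·3·5⋯p_n`. -/
noncomputable def primorial' (n : ℕ) : ℕ := ∏ i ∈ Finset.range n, Nat.nth Nat.Prime i

/-- The largest primorial not exceeding `y` (equal to `1` if `y < 1`). -/
noncomputable def largestPrimorial (y : ℝ) : ℕ :=
  primorial' (sSup {n : ℕ | (primorial' n : ℝ) ≤ y})

/-!
Write `N(D)` for the number of prime tuples with gaps `D`. The Hardy–Littlewood asymptotics for
`k + 1` and `k + 2` points bound `N(D)` from below by `π({0} ∪ D) - ∑_j π({0, j} ∪ D)`, and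
Bonferroni's inequality, with Brun's sieve for the `k + 3` points of `{0, j, i} ∪ D`, bounds it from
above.

Comparison with multiples of a primorial, whose singular series is large, shows that a champion `D`
makes `{0} ∪ D` admissible and satisfies `max D ≤ η log x`. If `p² ∣ gcd D`, then `F = D / p` still
consists of multiples of `p`, so `S({0} ∪ F) = S({0} ∪ D)`. By Chebyshev's bound some prime
`q ≪ log log x` does not divide all of `F`, and passing from `F` to `qF` increases the singular
series by a factor `1 + 1 / q`; hence `max D ≥ ν log x / (log log x)²`, as otherwise `qF` would beat
`D`. Finally `F` itself has fewer intermediate primes than `D`: the gain, of relative order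
`max D / log x`, outweighs both the error in the asymptotics and the contribution
`(max D / log x)²` of pairs of intermediate primes, so `F` beats `D`.
-/

/-! ### The singular series -/

lemma nu_le_card (E : Finset ℕ) (q : ℕ) : nu E q ≤ E.card := card_image_le

lemma image_mod_subset_range (E : Finset ℕ) {q : ℕ} (hq : 0 < q) :
    E.image (· % q) ⊆ range q :=
  image_subset_iff.2 fun _ _ => mem_range.2 (Nat.mod_lt _ hq)

lemma nu_le_self (E : Finset ℕ) {q : ℕ} (hq : 0 < q) : nu E q ≤ q :=
  (card_le_card (image_mod_subset_range E hq)).trans_eq (card_range q)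

lemma one_le_nu {E : Finset ℕ} (hE : E.Nonempty) (q : ℕ) : 1 ≤ nu E q :=
  card_pos.2 (hE.image _)

lemma nu_insert_of_mem {E : Finset ℕ} {j q : ℕ} (h : j % q ∈ E.image (· % q)) :
    nu (insert j E) q = nu E q := by
  rw [nu, image_insert, insert_eq_of_mem h, nu]

lemma nu_insert_of_notMem {E : Finset ℕ} {j q : ℕ} (h : j % q ∉ E.image (· % q)) :
    nu (insert j E) q = nu E q + 1 := by
  rw [nu, image_insert, card_insert_of_notMem h, nu]

lemma nu_eq_card_of_forall_lt {E : Finset ℕ} {q : ℕ} (h : ∀ e ∈ E, e < q) :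
    nu E q = E.card :=
  card_image_of_injOn fun a ha b hb hab => by
    simpa only [Nat.mod_eq_of_lt (h a ha), Nat.mod_eq_of_lt (h b hb)] using hab

/-- The factor at `q` of the Euler product `singSeries E`. -/
noncomputable def localFactor (E : Finset ℕ) (q : ℕ) : ℝ :=
  ((1 - 1 / (q : ℝ)) ^ E.card)⁻¹ * (1 - (nu E q : ℝ) / (q : ℝ))

lemma one_sub_one_div_pos {q : ℕ} (hq : 2 ≤ q) : (0 : ℝ) < 1 - 1 / (q : ℝ) := by
  have hq' : (2 : ℝ) ≤ q := mod_cast hq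
  rw [sub_pos, div_lt_one (by linarith)]
  linarith

lemma nu_div_le_one (E : Finset ℕ) {q : ℕ} (hq : 0 < q) : (nu E q : ℝ) / q ≤ 1 :=
  div_le_one_of_le₀ (mod_cast nu_le_self E hq) q.cast_nonneg

lemma localFactor_nonneg (E : Finset ℕ) {q : ℕ} (hq : 2 ≤ q) : 0 ≤ localFactor E q :=
  mul_nonneg (inv_nonneg.2 (pow_nonneg (one_sub_one_div_pos hq).le _))
    (sub_nonneg.2 (nu_div_le_one E (by omega)))

lemma one_add_div_le_inv_one_sub_pow {q : ℕ} (hq : 2 ≤ q) (n : ℕ) :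
    1 + (n : ℝ) / q ≤ ((1 - 1 / (q : ℝ)) ^ n)⁻¹ := by
  have hpos := one_sub_one_div_pos hq
  have hinv : 1 + 1 / (q : ℝ) ≤ (1 - 1 / (q : ℝ))⁻¹ := by
    rw [le_inv_comm₀ (by positivity) hpos, ← one_div, le_div_iff₀ (by positivity)]
    nlinarith [sq_nonneg (1 / (q : ℝ))]
  calc 1 + (n : ℝ) / q = 1 + n * (1 / q) := by ring
    _ ≤ (1 + 1 / (q : ℝ)) ^ n :=
      one_add_mul_le_pow (by linarith [show (0 : ℝ) ≤ 1 / q by positivity]) n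
    _ ≤ ((1 - 1 / (q : ℝ))⁻¹) ^ n := by gcongr
    _ = _ := inv_pow _ _

lemma one_sub_sq_div_sq_le_localFactor (E : Finset ℕ) {q : ℕ} (hq : 2 ≤ q) (h : E.card ≤ q) :
    1 - (E.card : ℝ) ^ 2 / q ^ 2 ≤ localFactor E q := by
  have hq0 : (0 : ℝ) < q := by positivity
  have hcard : (E.card : ℝ) / q ≤ 1 := (div_le_one hq0).2 (mod_cast h)
  have hnu : (nu E q : ℝ) / q ≤ E.card / q := by
    gcongr
    exact nu_le_card E q
  calc 1 - (E.card : ℝ) ^ 2 / q ^ 2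
      = (1 + (E.card : ℝ) / q) * (1 - E.card / q) := by
        field_simp
        ring
    _ ≤ (1 + (E.card : ℝ) / q) * (1 - nu E q / q) := by gcongr
    _ ≤ localFactor E q :=
      mul_le_mul_of_nonneg_right (one_add_div_le_inv_one_sub_pow hq _) (by linarith)

lemma localFactor_le_one {E : Finset ℕ} {q : ℕ} (hq : 2 ≤ q) (h : nu E q = E.card) :
    localFactor E q ≤ 1 := by
  have hpos := one_sub_one_div_pos hq
  rw [localFactor, h, inv_mul_le_iff₀ (by positivity), mul_one]
  calc 1 - (E.card : ℝ) / q = 1 + (E.card : ℝ) * (-(1 / q)) := by ring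
    _ ≤ (1 + -(1 / (q : ℝ))) ^ E.card := one_add_mul_le_pow (by linarith) _
    _ = _ := by rw [sub_eq_add_neg]

lemma inv_le_localFactor {E : Finset ℕ} {q : ℕ} (hq : 2 ≤ q) (h : nu E q < q) :
    (q : ℝ)⁻¹ ≤ localFactor E q := by
  have hq0 : (0 : ℝ) < q := by positivity
  have hnu : (q : ℝ)⁻¹ ≤ 1 - nu E q / q := by
    rw [inv_eq_one_div, le_sub_iff_add_le, ← add_div, div_le_one hq0, add_comm]
    exact mod_cast h
  have hpow : 1 ≤ ((1 - 1 / (q : ℝ)) ^ E.card)⁻¹ :=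
    le_trans (le_add_of_nonneg_right (by positivity)) (one_add_div_le_inv_one_sub_pow hq _)
  calc (q : ℝ)⁻¹ = 1 * (q : ℝ)⁻¹ := (one_mul _).symm
    _ ≤ _ := mul_le_mul hpow hnu (by positivity) (by linarith)

lemma localFactor_eq_zero {E : Finset ℕ} {q : ℕ} (hq : q ≠ 0) (h : nu E q = q) :
    localFactor E q = 0 := by
  rw [localFactor, h, div_self (Nat.cast_ne_zero.2 hq), sub_self, mul_zero]

lemma multipliable_localFactor (E : Finset ℕ) :
    Multipliable fun p : Nat.Primes => localFactor E p := by
  have hsum : Summable fun p : Nat.Primes => (E.card : ℝ) ^ 2 / ((p : ℕ) : ℝ) ^ 2 := by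
    have := (Real.summable_one_div_nat_pow.2 one_lt_two).mul_left ((E.card : ℝ) ^ 2)
    simp only [mul_one_div] at this
    exact this.comp_injective Nat.Primes.coe_nat_injective
  have hbound : ∀ p : Nat.Primes, E.card + E.sup id < p →
      ‖localFactor E p - 1‖ ≤ (E.card : ℝ) ^ 2 / ((p : ℕ) : ℝ) ^ 2 := by
    intro p hp
    have hlt : ∀ e ∈ E, e < (p : ℕ) := fun e he => by
      have : e ≤ E.sup id := le_sup (f := id) he
      omega
    have hupper := localFactor_le_one p.2.two_le (nu_eq_card_of_forall_lt hlt)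
    have hlower := one_sub_sq_div_sq_le_localFactor E p.2.two_le (by omega)
    have : (0 : ℝ) ≤ (E.card : ℝ) ^ 2 / ((p : ℕ) : ℝ) ^ 2 := by positivity
    rw [Real.norm_eq_abs, abs_le]
    constructor <;> linarith
  have hfin : {p : Nat.Primes | (p : ℕ) ≤ E.card + E.sup id}.Finite :=
    (Set.finite_le_nat _).preimage Nat.Primes.coe_nat_injective.injOn
  have hsub : Summable fun p : Nat.Primes => localFactor E p - 1 :=
    hsum.of_norm_bounded_eventually <| hfin.subset fun p hp =>
      not_lt.1 fun h => hp (hbound p h)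
  simpa only [add_sub_cancel] using Real.multipliable_one_add_of_summable hsub

/-- The primes in the interval `[a, b)`. -/
def primesIco (a b : ℕ) : Finset ℕ := {q ∈ Ico a b | q.Prime}

lemma mem_primesIco {a b q : ℕ} : q ∈ primesIco a b ↔ (a ≤ q ∧ q < b) ∧ q.Prime := by
  rw [primesIco, mem_filter, mem_Ico]

lemma primesIco_subset {a b a' b' : ℕ} (ha : a' ≤ a) (hb : b ≤ b') :
    primesIco a b ⊆ primesIco a' b' :=
  filter_subset_filter _ (Ico_subset_Ico ha hb)

@[to_additive]
lemma prod_primesIco_mul_prod_primesIco {M : Type*} [CommMonoid M] (f : ℕ → M) {a b c : ℕ}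
    (hab : a ≤ b) (hbc : b ≤ c) :
    (∏ q ∈ primesIco a b, f q) * ∏ q ∈ primesIco b c, f q = ∏ q ∈ primesIco a c, f q := by
  simp only [primesIco, prod_filter]
  exact prod_Ico_consecutive _ hab hbc

/-- The partial product of `singSeries E` over the primes below `z`. -/
noncomputable def partialSeries (E : Finset ℕ) (z : ℕ) : ℝ :=
  ∏ q ∈ primesIco 0 z, localFactor E q

lemma tendsto_partialSeries (E : Finset ℕ) :
    Filter.Tendsto (partialSeries E) Filter.atTop (nhds (singSeries E)) := by
  have h : HasProd (Set.mulIndicator {p : ℕ | p.Prime} (localFactor E)) (singSeries E) :=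
    hasProd_subtype_iff_mulIndicator.1 (multipliable_localFactor E).hasProd
  refine h.tendsto_prod_nat.congr fun z => ?_
  simp only [partialSeries, primesIco, prod_filter, Nat.Ico_zero_eq_range,
    Set.mulIndicator_apply, Set.mem_ofPred_eq]

lemma partialSeries_nonneg (E : Finset ℕ) (z : ℕ) : 0 ≤ partialSeries E z :=
  prod_nonneg fun _ hq => localFactor_nonneg E (mem_primesIco.1 hq).2.two_le

lemma singSeries_nonneg (E : Finset ℕ) : 0 ≤ singSeries E :=
  ge_of_tendsto' (tendsto_partialSeries E) (partialSeries_nonneg E)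

lemma singSeries_le_mul_of_partialSeries {E E' : Finset ℕ} {B : ℝ} (Z : ℕ)
    (h : ∀ z, Z ≤ z → partialSeries E z ≤ B * partialSeries E' z) :
    singSeries E ≤ B * singSeries E' :=
  le_of_tendsto_of_tendsto (tendsto_partialSeries E) ((tendsto_partialSeries E').const_mul B)
    (Filter.eventually_atTop.2 ⟨Z, h⟩)

lemma one_sub_sum_le_prod_one_sub {ι : Type*} {s : Finset ι} {a : ι → ℝ}
    (h0 : ∀ i ∈ s, 0 ≤ a i) (h1 : ∀ i ∈ s, a i ≤ 1) :
    1 - ∑ i ∈ s, a i ≤ ∏ i ∈ s, (1 - a i) := by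
  classical
  induction s using Finset.induction_on with
  | empty => simp
  | insert i s hi ih =>
    rw [forall_mem_insert] at h0 h1
    rw [sum_insert hi, prod_insert hi]
    have hsum : 0 ≤ ∑ j ∈ s, a j := sum_nonneg h0.2
    nlinarith [mul_le_mul_of_nonneg_left (ih h0.2 h1.2) (sub_nonneg.2 h1.1), h0.1]

lemma sum_primesIco_one_div_sq_le {K : ℕ} (hK : 0 < K) (z : ℕ) :
    ∑ q ∈ primesIco K z, 1 / (q : ℝ) ^ 2 ≤ 2 / (K : ℝ) := by
  obtain ⟨K, rfl⟩ := Nat.exists_eq_add_of_lt hK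
  simp only [one_div, zero_add, Nat.cast_add, Nat.cast_one]
  refine (sum_le_sum_of_subset_of_nonneg (fun q hq => ?_) fun _ _ _ => by positivity).trans
    (sum_Ioo_inv_sq_le K z)
  have := mem_primesIco.1 hq
  exact mem_Ioo.2 (by omega)

lemma half_le_prod_primesIco {c : ℝ} (hc : 0 ≤ c) {K : ℕ} (hK : 0 < K) (hcK : 4 * c ≤ K)
    {z : ℕ} {f : ℕ → ℝ} (hf : ∀ q ∈ primesIco K z, 1 - c / (q : ℝ) ^ 2 ≤ f q) :
    1 / 2 ≤ ∏ q ∈ primesIco K z, f q := by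
  have hK1 : (1 : ℝ) ≤ K := mod_cast hK
  have hle : ∀ q ∈ primesIco K z, c / (q : ℝ) ^ 2 ≤ 1 := by
    intro q hq
    have hKq : (K : ℝ) ≤ q := mod_cast (mem_primesIco.1 hq).1.1
    rw [div_le_one (by nlinarith)]
    nlinarith
  have hsum : ∑ q ∈ primesIco K z, c / (q : ℝ) ^ 2 ≤ 1 / 2 := by
    calc ∑ q ∈ primesIco K z, c / (q : ℝ) ^ 2
        = c * ∑ q ∈ primesIco K z, 1 / (q : ℝ) ^ 2 := by simp only [mul_sum, mul_one_div]
      _ ≤ c * (2 / K) := by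
        gcongr
        exact sum_primesIco_one_div_sq_le hK z
      _ ≤ 1 / 2 := by
        rw [← mul_div_assoc, div_le_div_iff₀ (by linarith) two_pos]
        linarith
  calc (1 / 2 : ℝ) ≤ 1 - ∑ q ∈ primesIco K z, c / (q : ℝ) ^ 2 := by linarith
    _ ≤ ∏ q ∈ primesIco K z, (1 - c / (q : ℝ) ^ 2) :=
      one_sub_sum_le_prod_one_sub (fun q _ => by positivity) hle
    _ ≤ _ := prod_le_prod (fun q hq => sub_nonneg.2 (hle q hq)) hf

lemma half_le_prod_primesIco_localFactor (E : Finset ℕ) {K : ℕ} (hK : 0 < K)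
    (hc : 4 * E.card ^ 2 ≤ K) (z : ℕ) : 1 / 2 ≤ ∏ q ∈ primesIco K z, localFactor E q := by
  refine half_le_prod_primesIco (sq_nonneg (E.card : ℝ)) hK (mod_cast hc) fun q hmem => ?_
  obtain ⟨⟨hKq, -⟩, hq⟩ := mem_primesIco.1 hmem
  have hcard : E.card ≤ q := by nlinarith
  exact one_sub_sq_div_sq_le_localFactor E hq.two_le hcard

lemma partialSeries_le_two_mul_singSeries (E : Finset ℕ) {K : ℕ} (hK : 0 < K)
    (hc : 4 * E.card ^ 2 ≤ K) : partialSeries E K ≤ 2 * singSeries E := by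
  have : partialSeries E K / 2 ≤ singSeries E := by
    refine ge_of_tendsto (tendsto_partialSeries E) ?_
    filter_upwards [Filter.eventually_ge_atTop K] with z hz
    rw [partialSeries.eq_def E z, ← prod_primesIco_mul_prod_primesIco _ K.zero_le hz,
      ← partialSeries]
    nlinarith [partialSeries_nonneg E K, half_le_prod_primesIco_localFactor E hK hc z]
  linarith

/-- A set is admissible if it misses some residue class modulo every prime. -/
def IsAdmissible (E : Finset ℕ) : Prop := ∀ q : ℕ, q.Prime → nu E q < q

lemma exists_nu_eq_of_not_isAdmissible {E : Finset ℕ} (h : ¬ IsAdmissible E) :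
    ∃ q : ℕ, q.Prime ∧ nu E q = q := by
  simp only [IsAdmissible, not_forall, not_lt] at h
  obtain ⟨q, hq, hle⟩ := h
  exact ⟨q, hq, (nu_le_self E hq.pos).antisymm hle⟩

/-- A positive lower bound for the singular series of every admissible set with `n` elements. -/
noncomputable def singSeriesMin (n : ℕ) : ℝ :=
  1 / 2 * ∏ q ∈ primesIco 0 (4 * n ^ 2 + 1), (q : ℝ)⁻¹

lemma singSeriesMin_pos (n : ℕ) : 0 < singSeriesMin n :=
  mul_pos one_half_pos <| prod_pos fun _ hq =>
    inv_pos.2 (Nat.cast_pos.2 (mem_primesIco.1 hq).2.pos)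

lemma singSeriesMin_le_singSeries {E : Finset ℕ} (h : IsAdmissible E) :
    singSeriesMin E.card ≤ singSeries E := by
  have hprod : ∏ q ∈ primesIco 0 (4 * E.card ^ 2 + 1), (q : ℝ)⁻¹ ≤
      partialSeries E (4 * E.card ^ 2 + 1) :=
    prod_le_prod (fun _ _ => by positivity) fun q hq =>
      inv_le_localFactor (mem_primesIco.1 hq).2.two_le (h q (mem_primesIco.1 hq).2)
  have hpartial := partialSeries_le_two_mul_singSeries E
    (K := 4 * E.card ^ 2 + 1) (by omega) (by omega)
  rw [singSeriesMin]
  linarith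

lemma singSeries_eq_zero_of_not_isAdmissible {E : Finset ℕ} (h : ¬ IsAdmissible E) :
    singSeries E = 0 := by
  obtain ⟨q, hq, hnu⟩ := exists_nu_eq_of_not_isAdmissible h
  refine tendsto_nhds_unique (tendsto_partialSeries E) (tendsto_const_nhds.congr' ?_)
  filter_upwards [Filter.eventually_gt_atTop q] with z hz
  exact (prod_eq_zero (mem_primesIco.2 ⟨⟨q.zero_le, hz⟩, hq⟩)
    (localFactor_eq_zero hq.ne_zero hnu)).symm

lemma singSeries_ne_zero_iff {E : Finset ℕ} : singSeries E ≠ 0 ↔ IsAdmissible E :=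
  ⟨fun h => by_contra fun hc => h (singSeries_eq_zero_of_not_isAdmissible hc),
    fun h => ((singSeriesMin_pos _).trans_le (singSeriesMin_le_singSeries h)).ne'⟩

lemma primePi_le_card_of_not_isAdmissible {E : Finset ℕ} (h : ¬ IsAdmissible E) (x : ℝ) :
    primePi x E ≤ E.card := by
  obtain ⟨q, hq, hnu⟩ := exists_nu_eq_of_not_isAdmissible h
  have himage : E.image (· % q) = range q :=
    eq_of_subset_of_card_le (image_mod_subset_range E hq.pos) (by rw [card_range]; exact hnu.ge)
  have hle : ∀ m : ℕ, (∀ d ∈ E, (m + d).Prime) → m ≤ q := by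
    intro m hm
    have hmem : (q - m % q) % q ∈ E.image (· % q) := by
      rw [himage]
      exact mem_range.2 (Nat.mod_lt _ hq.pos)
    obtain ⟨d, hd, hdq⟩ := mem_image.1 hmem
    have hdvd : q ∣ m + d := by
      have := Nat.mod_lt m hq.pos
      rw [Nat.dvd_iff_mod_eq_zero, Nat.add_mod, hdq, Nat.add_mod_mod,
        Nat.add_sub_cancel' this.le, Nat.mod_self]
    have := (Nat.prime_dvd_prime_iff_eq hq (hm d hd)).1 hdvd
    omega
  calc primePi x E ≤ (Icc 1 q : Set ℕ).ncard := by
        refine Set.ncard_le_ncard ?_ (finite_toSet _)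
        rintro m ⟨hm, -, hprime⟩
        exact mem_coe.2 (mem_Icc.2 ⟨hm, hle m hprime⟩)
    _ = nu E q := by rw [Set.ncard_coe_finset, Nat.card_Icc, hnu, Nat.add_sub_cancel]
    _ ≤ E.card := nu_le_card E q

/-! ### Counting in residue classes -/

lemma abs_card_filter_modEq_sub_le (N r : ℕ) {M : ℕ} (hM : 0 < M) :
    |(#{m ∈ Icc 1 N | m ≡ r [MOD M]} : ℝ) - (N : ℝ) / M| ≤ 1 := by
  set α : ℚ := ((N : ℚ) - r) / M with hα
  set β : ℚ := (((0 : ℕ) : ℚ) - r) / M with hβ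
  have hdiff : (N : ℚ) / M = α - β := by rw [hα, hβ]; push_cast; ring
  have hβα : β ≤ α := by rw [← sub_nonneg, ← hdiff]; positivity
  have hcount : (#{m ∈ Icc 1 N | m ≡ r [MOD M]} : ℤ) = ⌊α⌋ - ⌊β⌋ := by
    have h := Nat.Ioc_filter_modEq_card (a := 0) (b := N) hM r
    rwa [max_eq_left (sub_nonneg.2 (Int.floor_le_floor hβα))] at h
  have hbound : |(#{m ∈ Icc 1 N | m ≡ r [MOD M]} : ℚ) - (N : ℚ) / M| ≤ 1 := by
    have hcount' : (#{m ∈ Icc 1 N | m ≡ r [MOD M]} : ℚ) = ⌊α⌋ - ⌊β⌋ := mod_cast hcount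
    rw [hcount', hdiff, abs_le]
    constructor <;>
      linarith [Int.floor_le α, Int.lt_floor_add_one α, Int.floor_le β, Int.lt_floor_add_one β]
  simpa using (Rat.cast_le (K := ℝ)).2 hbound

lemma card_filter_forall_insert {u : Finset ℕ} {p M : ℕ} [NeZero p] (hpM : p.Coprime M)
    (A : (q : ℕ) → Finset (ZMod q)) (s : Finset ℕ) (r : ℕ) :
    #{m ∈ s | m ≡ r [MOD M] ∧ ∀ q ∈ insert p u, (m : ZMod q) ∈ A q} =
      ∑ c ∈ A p, #{m ∈ s | m ≡ Nat.chineseRemainder hpM c.val r [MOD p * M] ∧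
        ∀ q ∈ u, (m : ZMod q) ∈ A q} := by
  have hmod (m : ℕ) (c : ZMod p) :
      m ≡ Nat.chineseRemainder hpM c.val r [MOD p * M] ↔ (m : ZMod p) = c ∧ m ≡ r [MOD M] := by
    have hc := (Nat.chineseRemainder hpM c.val r).2
    rw [← Nat.modEq_and_modEq_iff_modEq_mul hpM, ← ZMod.natCast_eq_natCast_iff,
      (ZMod.natCast_eq_natCast_iff _ _ _).2 hc.1, ZMod.natCast_zmod_val]
    exact and_congr_right fun _ => ⟨fun h => h.trans hc.2, fun h => h.trans hc.2.symm⟩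
  rw [← card_biUnion]
  · congr 1
    ext m
    simp only [mem_filter, mem_biUnion, mem_insert, forall_eq_or_imp, hmod]
    grind
  · intro c _ c' _ hne
    rw [Function.onFun, disjoint_left]
    intro m hm hm'
    exact hne (((hmod m c).1 (mem_filter.1 hm).2.1).1.symm.trans
      ((hmod m c').1 (mem_filter.1 hm').2.1).1)

lemma abs_card_filter_modEq_forall_sub_le {u : Finset ℕ} (hu : ∀ q ∈ u, q.Prime)
    (A : (q : ℕ) → Finset (ZMod q)) (N r : ℕ) {M : ℕ} (hM : 0 < M) (hco : ∀ q ∈ u, q.Coprime M) :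
    |(#{m ∈ Icc 1 N | m ≡ r [MOD M] ∧ ∀ q ∈ u, (m : ZMod q) ∈ A q} : ℝ) -
      (N : ℝ) / M * ∏ q ∈ u, (#(A q) : ℝ) / q| ≤ ∏ q ∈ u, (#(A q) : ℝ) := by
  induction u using Finset.induction_on generalizing M r with
  | empty => simpa using abs_card_filter_modEq_sub_le N r hM
  | insert p u hpu ih =>
    have hp := hu p (mem_insert_self _ _)
    have hpM := hco p (mem_insert_self _ _)
    have : NeZero p := ⟨hp.ne_zero⟩
    have hp0 : (p : ℝ) ≠ 0 := mod_cast hp.ne_zero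
    have hM0 : (M : ℝ) ≠ 0 := mod_cast hM.ne'
    have hco' : ∀ q ∈ u, q.Coprime (p * M) := fun q hq =>
      ((Nat.coprime_primes (hu q (mem_insert_of_mem hq)) hp).2
        fun h => hpu (h ▸ hq)).mul_right (hco q (mem_insert_of_mem hq))
    have hmain : (N : ℝ) / M * ((#(A p) : ℝ) / p * ∏ q ∈ u, (#(A q) : ℝ) / q) =
        ∑ _c ∈ A p, (N : ℝ) / (p * M : ℕ) * ∏ q ∈ u, (#(A q) : ℝ) / q := by
      rw [sum_const, nsmul_eq_mul]
      push_cast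
      field_simp
    rw [card_filter_forall_insert hpM, prod_insert hpu, prod_insert hpu, hmain, Nat.cast_sum,
      ← sum_sub_distrib]
    calc _ ≤ ∑ _c ∈ A p, ∏ q ∈ u, (#(A q) : ℝ) :=
          (abs_sum_le_sum_abs _ _).trans <| sum_le_sum fun c _ =>
            ih (fun q hq => hu q (mem_insert_of_mem hq)) _ (Nat.mul_pos hp.pos hM) hco'
      _ = _ := by rw [sum_const, nsmul_eq_mul]

lemma abs_card_filter_forall_sub_le {u : Finset ℕ} (hu : ∀ q ∈ u, q.Prime)
    (A : (q : ℕ) → Finset (ZMod q)) (N : ℕ) :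
    |(#{m ∈ Icc 1 N | ∀ q ∈ u, (m : ZMod q) ∈ A q} : ℝ) - N * ∏ q ∈ u, (#(A q) : ℝ) / q| ≤
      ∏ q ∈ u, (#(A q) : ℝ) := by
  simpa [Nat.modEq_one] using
    abs_card_filter_modEq_forall_sub_le hu A N 0 one_pos fun q _ => q.coprime_one_right

/-! ### The Bonferroni inequalities -/

section Truncated

variable {ι : Type*}

/-- The expansion of `∏ i ∈ s, (1 + b i)` truncated to the terms of degree at most `r`. With
`-b` in place of `b` these are the partial sums of inclusion–exclusion. -/
noncomputable def truncatedProd (r : ℕ) (s : Finset ι) (b : ι → ℝ) : ℝ :=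
  ∑ e ∈ s.powerset with #e ≤ r, ∏ i ∈ e, b i

lemma truncatedProd_zero (s : Finset ι) (b : ι → ℝ) : truncatedProd 0 s b = 1 := by
  have hs : {e ∈ s.powerset | #e ≤ 0} = {∅} := by
    ext e
    simp only [nonpos_iff_eq_zero, card_eq_zero, mem_filter, mem_powerset, mem_singleton,
      and_iff_right_iff_imp]
    rintro rfl
    exact empty_subset s
  rw [truncatedProd, hs, sum_singleton, prod_empty]

lemma truncatedProd_empty (r : ℕ) (b : ι → ℝ) : truncatedProd r ∅ b = 1 := by
  simp [truncatedProd, filter_singleton]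

lemma truncatedProd_insert [DecidableEq ι] (r : ℕ) {s : Finset ι} {j : ι} (hj : j ∉ s)
    (b : ι → ℝ) : truncatedProd (r + 1) (insert j s) b =
      truncatedProd (r + 1) s b + b j * truncatedProd r s b := by
  simp only [truncatedProd, sum_filter, sum_powerset_insert hj, mul_sum]
  congr 1
  refine sum_congr rfl fun e he => ?_
  have hje : j ∉ e := fun h => hj (mem_powerset.1 he h)
  rw [card_insert_of_notMem hje, prod_insert hje, mul_ite, mul_zero]
  simp only [add_le_add_iff_right]

lemma truncatedProd_le_pow {s : Finset ι} {b : ι → ℝ} (hb : ∀ i ∈ s, 0 ≤ b i) (r : ℕ) :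
    truncatedProd r s b ≤ (1 + ∑ i ∈ s, b i) ^ r := by
  classical
  induction s using Finset.induction_on generalizing r with
  | empty => simp [truncatedProd_empty]
  | insert j s hj ih =>
    have hbj := hb j (mem_insert_self _ _)
    replace ih := ih fun i hi => hb i (mem_insert_of_mem hi)
    cases r with
    | zero => simp [truncatedProd_zero]
    | succ r =>
      set T := 1 + ∑ i ∈ s, b i with hT
      have hT0 : 0 ≤ T := by
        linarith [sum_nonneg fun i hi => hb i (mem_insert_of_mem (a := i) hi)]
      calc truncatedProd (r + 1) (insert j s) b
          = truncatedProd (r + 1) s b + b j * truncatedProd r s b := truncatedProd_insert r hj b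
        _ ≤ T ^ (r + 1) + b j * T ^ r := by gcongr <;> exact ih _
        _ = (T + b j) * T ^ r := by ring
        _ ≤ (T + b j) * (T + b j) ^ r := by gcongr; linarith
        _ = (1 + ∑ i ∈ insert j s, b i) ^ (r + 1) := by rw [hT, sum_insert hj]; ring

variable {s : Finset ι} {a : ι → ℝ}

lemma neg_one_pow_mul_truncatedProd_sub_nonneg (h0 : ∀ i ∈ s, 0 ≤ a i) (h1 : ∀ i ∈ s, a i ≤ 1)
    (r : ℕ) : 0 ≤ (-1) ^ r * (truncatedProd r s (-a) - ∏ i ∈ s, (1 - a i)) := by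
  classical
  induction s using Finset.induction_on generalizing r with
  | empty => simp [truncatedProd_empty]
  | insert j s hj ih =>
    replace ih := ih (fun i hi => h0 i (mem_insert_of_mem hi))
      fun i hi => h1 i (mem_insert_of_mem hi)
    cases r with
    | zero =>
      rw [truncatedProd_zero, pow_zero, one_mul, sub_nonneg]
      exact prod_le_one (fun i hi => sub_nonneg.2 (h1 i hi)) fun i hi => by linarith [h0 i hi]
    | succ r =>
      have hj0 := mul_nonneg (h0 j (mem_insert_self _ _)) (ih r)
      rw [truncatedProd_insert r hj, prod_insert hj, Pi.neg_apply]
      calc (0 : ℝ) ≤ _ := add_nonneg (ih (r + 1)) hj0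
        _ = _ := by ring

lemma prod_one_sub_le_truncatedProd (h0 : ∀ i ∈ s, 0 ≤ a i) (h1 : ∀ i ∈ s, a i ≤ 1) (r : ℕ) :
    ∏ i ∈ s, (1 - a i) ≤ truncatedProd (2 * r) s (-a) := by
  simpa using neg_one_pow_mul_truncatedProd_sub_nonneg h0 h1 (2 * r)

lemma abs_truncatedProd_sub_prod_one_sub_le (h0 : ∀ i ∈ s, 0 ≤ a i) (h1 : ∀ i ∈ s, a i ≤ 1)
    (r : ℕ) : |truncatedProd r s (-a) - ∏ i ∈ s, (1 - a i)| ≤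
      (∑ i ∈ s, a i) ^ (r + 1) / (r + 1).factorial := by
  classical
  induction s using Finset.induction_on generalizing r with
  | empty => simp [truncatedProd_empty]
  | insert j s hj ih =>
    cases r with
    | zero =>
      rw [truncatedProd_zero, abs_of_nonneg]
      · simpa [add_comm] using one_sub_sum_le_prod_one_sub h0 h1
      · exact sub_nonneg.2 <| prod_le_one (fun i hi => sub_nonneg.2 (h1 i hi))
          fun i hi => by linarith [h0 i hi]
    | succ r =>
      have hj0 := h0 j (mem_insert_self _ _)
      have hs0 : 0 ≤ ∑ i ∈ s, a i := sum_nonneg fun i hi => h0 i (mem_insert_of_mem hi)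
      replace ih := ih (fun i hi => h0 i (mem_insert_of_mem hi))
        fun i hi => h1 i (mem_insert_of_mem hi)
      rw [truncatedProd_insert r hj, prod_insert hj, sum_insert hj, Pi.neg_apply]
      set S := ∑ i ∈ s, a i
      set P := ∏ i ∈ s, (1 - a i)
      calc |truncatedProd (r + 1) s (-a) + -a j * truncatedProd r s (-a) - (1 - a j) * P|
          = |(truncatedProd (r + 1) s (-a) - P) - a j * (truncatedProd r s (-a) - P)| := by
            congr 1; ring
        _ ≤ |truncatedProd (r + 1) s (-a) - P| + a j * |truncatedProd r s (-a) - P| :=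
          (abs_sub _ _).trans_eq (by rw [abs_mul, abs_of_nonneg hj0])
        _ ≤ S ^ (r + 2) / (r + 2).factorial + a j * (S ^ (r + 1) / (r + 1).factorial) := by
          gcongr <;> exact ih _
        _ = (S ^ (r + 2) + (r + 2 : ℕ) * S ^ (r + 1) * a j) / (r + 2).factorial := by
          rw [Nat.factorial_succ (r + 1)]
          push_cast
          field_simp
          ring
        _ ≤ (a j + S) ^ (r + 2) / (r + 2).factorial := by
          gcongr
          rw [add_comm (a j)]
          exact pow_add_mul_le_add_pow hs0 (by positivity) _

end Truncated

/-! ### Sums and products over primes -/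

@[to_additive]
lemma prod_prod_primesIco_of_monotone {M : Type*} [CommMonoid M] (g : ℕ → M) {f : ℕ → ℕ}
    (hf : Monotone f) {m n : ℕ} (hmn : m ≤ n) :
    ∏ i ∈ Ico m n, ∏ q ∈ primesIco (f i) (f (i + 1)), g q = ∏ q ∈ primesIco (f m) (f n), g q := by
  induction n, hmn using Nat.le_induction with
  | base => simp [primesIco]
  | succ n hmn ih =>
    rw [prod_Ico_succ_top hmn, ih, prod_primesIco_mul_prod_primesIco g (hf hmn) (hf n.le_succ)]

lemma pairwise_disjoint_primesIco_of_monotone {f : ℕ → ℕ} (hf : Monotone f) :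
    Pairwise (Function.onFun Disjoint fun i => primesIco (f i) (f (i + 1))) := by
  intro i j hij
  have h : Disjoint (Set.Ico (f i) (f (i + 1))) (Set.Ico (f j) (f (j + 1))) :=
    hf.pairwise_disjoint_on_Ico_succ hij
  rw [← coe_Ico, ← coe_Ico, disjoint_coe] at h
  exact disjoint_filter_filter h

lemma mul_card_primesIco_two_pow_le (j : ℕ) :
    j * #(primesIco (2 ^ j) (2 ^ (j + 1))) ≤ 4 * 2 ^ j := by
  have hprod : (2 ^ j) ^ #(primesIco (2 ^ j) (2 ^ (j + 1))) ≤ 4 ^ 2 ^ (j + 1) := by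
    calc (2 ^ j) ^ #(primesIco (2 ^ j) (2 ^ (j + 1)))
        ≤ ∏ q ∈ primesIco (2 ^ j) (2 ^ (j + 1)), q :=
          pow_card_le_prod _ _ _ fun q hq => (mem_primesIco.1 hq).1.1
      _ ≤ primorial (2 ^ (j + 1)) := by
          refine prod_le_prod_of_subset_of_one_le' (fun q hq => ?_) fun q hq _ => ?_
          · exact Nat.mem_primesLE.2 ⟨(mem_primesIco.1 hq).1.2.le, (mem_primesIco.1 hq).2⟩
          · exact (Nat.mem_primesLE.1 hq).2.one_le
      _ ≤ 4 ^ 2 ^ (j + 1) := primorial_le_four_pow _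
  rw [← pow_mul, show (4 : ℕ) = 2 ^ 2 by norm_num, ← pow_mul] at hprod
  have hexp := (Nat.pow_le_pow_iff_right (by norm_num : 1 < 2)).1 hprod
  linarith [pow_succ 2 j]

lemma sum_primesIco_two_pow_le {j : ℕ} (hj : 0 < j) :
    ∑ q ∈ primesIco (2 ^ j) (2 ^ (j + 1)), 1 / (q : ℝ) ≤ 4 / j := by
  have hcard : (j : ℝ) * #(primesIco (2 ^ j) (2 ^ (j + 1))) ≤ 4 * 2 ^ j :=
    mod_cast mul_card_primesIco_two_pow_le j
  calc ∑ q ∈ primesIco (2 ^ j) (2 ^ (j + 1)), 1 / (q : ℝ)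
      ≤ #(primesIco (2 ^ j) (2 ^ (j + 1))) • (1 / (2 : ℝ) ^ j) :=
        sum_le_card_nsmul _ _ _ fun q hq =>
          one_div_le_one_div_of_le (by positivity) (mod_cast (mem_primesIco.1 hq).1.1)
    _ ≤ 4 / j := by
        rw [nsmul_eq_mul, mul_one_div, div_le_div_iff₀ (by positivity) (mod_cast hj)]
        linarith

lemma sum_primesIco_two_pow_two_pow_le (c : ℕ) :
    ∑ q ∈ primesIco (2 ^ 2 ^ c) (2 ^ 2 ^ (c + 1)), 1 / (q : ℝ) ≤ 4 := by
  have hc : 2 ^ (c + 1) - 2 ^ c = 2 ^ c := by rw [pow_succ]; omega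
  rw [← sum_sum_primesIco_of_monotone _ (pow_right_mono₀ one_le_two)
    (Nat.pow_le_pow_right two_pos c.le_succ)]
  calc ∑ j ∈ Ico (2 ^ c) (2 ^ (c + 1)), ∑ q ∈ primesIco (2 ^ j) (2 ^ (j + 1)), 1 / (q : ℝ)
      ≤ #(Ico (2 ^ c) (2 ^ (c + 1))) • (4 / (2 : ℝ) ^ c) := by
        refine sum_le_card_nsmul _ _ _ fun j hj => ?_
        have hcj : 2 ^ c ≤ j := (mem_Ico.1 hj).1
        refine (sum_primesIco_two_pow_le (Nat.two_pow_pos c |>.trans_le hcj)).trans ?_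
        gcongr
        exact mod_cast hcj
    _ = 4 := by
        rw [nsmul_eq_mul, Nat.card_Ico, hc]
        push_cast
        field_simp

lemma prod_one_sub_one_div_le_one_div_log {z : ℕ} (hz : 2 ≤ z) :
    ∏ q ∈ primesIco 0 z, (1 - 1 / (q : ℝ)) ≤ 1 / Real.log z := by
  have hlog : 0 < Real.log z := Real.log_pos (mod_cast hz)
  let f : ℕ →* ℝ := (invMonoidWithZeroHom (G₀ := ℝ) : ℝ →* ℝ).comp (Nat.castRingHom ℝ : ℕ →* ℝ)
  have hfq (q : ℕ) : f q = (q : ℝ)⁻¹ := rfl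
  have hf {p : ℕ} (hp : p.Prime) : ‖f p‖ < 1 := by
    rw [hfq, norm_inv, Real.norm_natCast]
    exact inv_lt_one_of_one_lt₀ (mod_cast hp.one_lt)
  obtain ⟨-, hprod⟩ :=
    EulerProduct.summable_and_hasSum_smoothNumbers_prod_primesBelow_geometric hf z
  have hlog_le : Real.log z ≤ ∏ q ∈ primesIco 0 z, (1 - 1 / (q : ℝ))⁻¹ := by
    calc Real.log z = Real.log (z - 1 + 1 : ℕ) := by rw [Nat.sub_add_cancel (by omega)]
      _ ≤ harmonic (z - 1) := log_add_one_le_harmonic _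
      _ = ∑ m ∈ Icc 1 (z - 1), f m := by
        rw [harmonic_eq_sum_Icc]
        push_cast
        rfl
      _ = ∑ m ∈ Icc 1 (z - 1), Set.indicator z.smoothNumbers f m :=
        sum_congr rfl fun m hm => (Set.indicator_of_mem (Nat.mem_smoothNumbers_of_lt
          (by grind) (by grind)) _).symm
      _ ≤ ∏ p ∈ z.primesBelow, (1 - f p)⁻¹ :=
        sum_le_hasSum _ (fun m _ => Set.indicator_nonneg (fun m _ => by rw [hfq]; positivity) m)
          (hasSum_subtype_iff_indicator.1 hprod)
      _ = ∏ q ∈ primesIco 0 z, (1 - 1 / (q : ℝ))⁻¹ := by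
        rw [Nat.primesBelow, range_eq_Ico, primesIco]
        simp only [hfq, one_div]
  have hpos : 0 < ∏ q ∈ primesIco 0 z, (1 - 1 / (q : ℝ)) :=
    prod_pos fun q hq => one_sub_one_div_pos (mem_primesIco.1 hq).2.two_le
  rw [prod_inv_distrib] at hlog_le
  rwa [one_div, le_inv_comm₀ hpos hlog]

/-! ### Brun's sieve -/

section Sieve

variable (A : (q : ℕ) → Finset (ZMod q))

/-- The integers `1 ≤ m ≤ N` avoiding the residue classes `A q` modulo every `q ∈ P`. -/
def sifted (N : ℕ) (P : Finset ℕ) : Finset ℕ := {m ∈ Icc 1 N | ∀ q ∈ P, (m : ZMod q) ∉ A q}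

lemma prod_truncatedProd {ι : Type*} [Fintype ι] [DecidableEq ι] {P : ι → Finset ℕ}
    (hP : Pairwise (Function.onFun Disjoint P)) (r : ι → ℕ) (b : ℕ → ℝ) :
    ∏ i, truncatedProd (r i) (P i) b =
      ∑ e ∈ Fintype.piFinset fun i => {e ∈ (P i).powerset | #e ≤ r i},
        ∏ q ∈ univ.biUnion e, b q := by
  simp only [truncatedProd, prod_univ_sum]
  refine sum_congr rfl fun e he => (prod_biUnion fun i _ j _ hij => ?_).symm
  have hsub (i : ι) : e i ⊆ P i :=
    mem_powerset.1 (mem_filter.1 (Fintype.mem_piFinset.1 he i)).1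
  exact disjoint_of_subset_left (hsub i) (disjoint_of_subset_right (hsub j) (hP hij))

lemma sum_prod_neg_indicator_le {u : Finset ℕ} (hu : ∀ q ∈ u, q.Prime) (N : ℕ) :
    ∑ m ∈ Icc 1 N, ∏ q ∈ u, (-if (m : ZMod q) ∈ A q then (1 : ℝ) else 0) ≤
      N * ∏ q ∈ u, (-((#(A q) : ℝ) / q)) + ∏ q ∈ u, (#(A q) : ℝ) := by
  have hcount := abs_le.1 (abs_card_filter_forall_sub_le hu A N)
  have hsum : ∑ m ∈ Icc 1 N, ∏ q ∈ u, (-if (m : ZMod q) ∈ A q then (1 : ℝ) else 0) =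
      (-1) ^ #u * #{m ∈ Icc 1 N | ∀ q ∈ u, (m : ZMod q) ∈ A q} := by
    simp only [prod_neg, prod_boole, ← mul_sum, sum_boole]
  rw [hsum, prod_neg]
  rcases neg_one_pow_eq_or ℝ #u with h | h <;> rw [h] <;> linarith

lemma card_sifted_eq_sum_prod (N : ℕ) (P : Finset ℕ) :
    (#(sifted A N P) : ℝ) =
      ∑ m ∈ Icc 1 N, ∏ q ∈ P, (1 - if (m : ZMod q) ∈ A q then (1 : ℝ) else 0) := by
  rw [sifted, ← sum_boole]
  refine sum_congr rfl fun m _ => ?_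
  rw [← prod_boole]
  exact prod_congr rfl fun q _ => by split_ifs <;> simp_all

theorem card_sifted_biUnion_le {ι : Type*} [Fintype ι] {P : ι → Finset ℕ}
    (hP : Pairwise (Function.onFun Disjoint P)) (hprime : ∀ i, ∀ q ∈ P i, q.Prime) (r : ι → ℕ)
    (N : ℕ) :
    (#(sifted A N (univ.biUnion P)) : ℝ) ≤
      N * ∏ i, truncatedProd (2 * r i) (P i) (-fun q => (#(A q) : ℝ) / q) +
      ∏ i, truncatedProd (2 * r i) (P i) (fun q => (#(A q) : ℝ)) := by
  classical
  let a : ℕ → ℕ → ℝ := fun m q => if (m : ZMod q) ∈ A q then 1 else 0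
  have ha0 (m q) : 0 ≤ a m q := by simp only [a]; split_ifs <;> norm_num
  have ha1 (m q) : a m q ≤ 1 := by simp only [a]; split_ifs <;> norm_num
  have hmem {e : ι → Finset ℕ}
      (he : e ∈ Fintype.piFinset fun i => {e ∈ (P i).powerset | #e ≤ 2 * r i}) :
      ∀ q ∈ univ.biUnion e, q.Prime := by
    intro q hq
    obtain ⟨i, -, hqi⟩ := mem_biUnion.1 hq
    exact hprime i q (mem_powerset.1 (mem_filter.1 (Fintype.mem_piFinset.1 he i)).1 hqi)
  calc (#(sifted A N (univ.biUnion P)) : ℝ)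
      = ∑ m ∈ Icc 1 N, ∏ i, ∏ q ∈ P i, (1 - a m q) := by
        rw [card_sifted_eq_sum_prod]
        exact sum_congr rfl fun m _ => prod_biUnion fun i _ j _ hij => hP hij
    _ ≤ ∑ m ∈ Icc 1 N, ∏ i, truncatedProd (2 * r i) (P i) (-a m) :=
        sum_le_sum fun m _ => prod_le_prod
          (fun i _ => prod_nonneg fun q _ => sub_nonneg.2 (ha1 m q)) fun i _ =>
          prod_one_sub_le_truncatedProd (fun q _ => ha0 m q) (fun q _ => ha1 m q) (r i)
    _ ≤ _ := by
        simp only [prod_truncatedProd hP, Pi.neg_apply]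
        rw [sum_comm, mul_sum, ← sum_add_distrib]
        exact sum_le_sum fun e he => sum_prod_neg_indicator_le A (hmem he) N

end Sieve

lemma exp_neg_two_mul_le_prod_one_sub {ι : Type*} {s : Finset ι} {a : ι → ℝ}
    (h0 : ∀ i ∈ s, 0 ≤ a i) (h1 : ∀ i ∈ s, a i ≤ 1 / 2) :
    Real.exp (-(2 * ∑ i ∈ s, a i)) ≤ ∏ i ∈ s, (1 - a i) := by
  rw [mul_sum, ← sum_neg_distrib, Real.exp_sum]
  refine prod_le_prod (fun _ _ => (Real.exp_pos _).le) fun i hi => ?_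
  have hi0 := h0 i hi
  have hi1 := h1 i hi
  rw [Real.exp_neg, inv_le_comm₀ (Real.exp_pos _) (by linarith)]
  refine le_trans ?_ (Real.add_one_le_exp _)
  rw [inv_le_iff_one_le_mul₀ (by linarith)]
  nlinarith

lemma truncatedProd_neg_le_prod_mul_exp {ι : Type*} {s : Finset ι} {a : ι → ℝ} {K : ℝ}
    (h0 : ∀ i ∈ s, 0 ≤ a i) (h1 : ∀ i ∈ s, a i ≤ 1 / 2) (hK : ∑ i ∈ s, a i ≤ K) (r : ℕ) :
    truncatedProd r s (-a) ≤ (∏ i ∈ s, (1 - a i)) *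
      Real.exp (Real.exp (2 * K) * (K ^ (r + 1) / (r + 1).factorial)) := by
  set V := ∏ i ∈ s, (1 - a i)
  set W := K ^ (r + 1) / ((r + 1).factorial : ℝ) with hWdef
  have hS0 : 0 ≤ ∑ i ∈ s, a i := sum_nonneg h0
  have hW0 : 0 ≤ W := div_nonneg (pow_nonneg (hS0.trans hK) _) (Nat.cast_nonneg _)
  have hW : truncatedProd r s (-a) - V ≤ W :=
    (le_abs_self _).trans <| (abs_truncatedProd_sub_prod_one_sub_le h0
      (fun i hi => (h1 i hi).trans (by norm_num)) r).trans (by rw [hWdef]; gcongr)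
  have hV : Real.exp (-(2 * K)) ≤ V :=
    (Real.exp_le_exp.2 (by linarith)).trans (exp_neg_two_mul_le_prod_one_sub h0 h1)
  have hVK : 1 ≤ V * Real.exp (2 * K) := by
    rwa [← div_le_iff₀ (Real.exp_pos _), one_div, ← Real.exp_neg]
  calc truncatedProd r s (-a) ≤ V + 1 * W := by linarith
    _ ≤ V + V * Real.exp (2 * K) * W := by gcongr
    _ = V * (Real.exp (2 * K) * W + 1) := by ring
    _ ≤ _ := mul_le_mul_of_nonneg_left (Real.add_one_le_exp _) ((Real.exp_pos _).le.trans hV)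

lemma prod_truncatedProd_neg_le {ι : Type*} {P : ℕ → Finset ι} {a : ι → ℝ} {K : ℝ} {t : ℕ}
    (h0 : ∀ i < t, ∀ j ∈ P i, 0 ≤ a j) (h1 : ∀ i < t, ∀ j ∈ P i, a j ≤ 1 / 2)
    (hK : ∀ i < t, ∑ j ∈ P i, a j ≤ K) (hK0 : 0 ≤ K) :
    ∏ i ∈ range t, truncatedProd (2 * (t - i)) (P i) (-a) ≤
      Real.exp (Real.exp (3 * K)) * ∏ i ∈ range t, ∏ j ∈ P i, (1 - a j) := by
  have hle : ∀ i < t, ∀ j ∈ P i, a j ≤ 1 := fun i hi j hj => (h1 i hi j hj).trans (by norm_num)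
  have hV0 : 0 ≤ ∏ i ∈ range t, ∏ j ∈ P i, (1 - a j) := prod_nonneg fun i hi =>
    prod_nonneg fun j hj => sub_nonneg.2 (hle i (mem_range.1 hi) j hj)
  have hsum : ∑ i ∈ range t, K ^ (2 * (t - i) + 1) / ((2 * (t - i) + 1).factorial : ℝ) ≤
      Real.exp K := by
    calc _ = ∑ j ∈ (range t).image fun i => 2 * (t - i) + 1, K ^ j / (j.factorial : ℝ) := by
          rw [sum_image fun i hi j hj h => by grind]
      _ ≤ ∑ j ∈ range (2 * t + 2), K ^ j / (j.factorial : ℝ) :=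
          sum_le_sum_of_subset_of_nonneg (by grind) fun _ _ _ => by positivity
      _ ≤ _ := Real.sum_le_exp_of_nonneg hK0 _
  calc ∏ i ∈ range t, truncatedProd (2 * (t - i)) (P i) (-a)
      ≤ ∏ i ∈ range t, ((∏ j ∈ P i, (1 - a j)) * Real.exp (Real.exp (2 * K) *
          (K ^ (2 * (t - i) + 1) / (2 * (t - i) + 1).factorial))) :=
        prod_le_prod
          (fun i hi => (prod_nonneg fun j hj => sub_nonneg.2 (hle i (mem_range.1 hi) j hj)).trans <|
            prod_one_sub_le_truncatedProd (h0 i (mem_range.1 hi)) (hle i (mem_range.1 hi)) _)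
          fun i hi => truncatedProd_neg_le_prod_mul_exp (h0 i (mem_range.1 hi))
            (h1 i (mem_range.1 hi)) (hK i (mem_range.1 hi)) _
    _ = Real.exp (Real.exp (2 * K) *
          ∑ i ∈ range t, K ^ (2 * (t - i) + 1) / ((2 * (t - i) + 1).factorial : ℝ)) *
          ∏ i ∈ range t, ∏ j ∈ P i, (1 - a j) := by
        rw [prod_mul_distrib, ← Real.exp_sum, mul_sum, mul_comm]
    _ ≤ _ := by
        gcongr
        calc _ ≤ Real.exp (2 * K) * Real.exp K := by gcongr
          _ = Real.exp (3 * K) := by rw [← Real.exp_add]; ring_nf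

section Sieve

variable {A : (q : ℕ) → Finset (ZMod q)} {a n : ℕ}

lemma sifted_subset_sifted {P P' : Finset ℕ} (h : P ⊆ P') (N : ℕ) :
    sifted A N P' ⊆ sifted A N P :=
  monotone_filter_right _ fun _ _ hm q hq => hm q (h hq)

lemma sum_range_sub_mul_two_pow (t : ℕ) :
    ∑ i ∈ range t, (t - i) * 2 ^ (i + 1) + (2 * t + 4) = 4 * 2 ^ t := by
  induction t with
  | zero => simp
  | succ t ih =>
    have hshift : ∑ i ∈ range t, (t - i) * 2 ^ (i + 1 + 1) =
        2 * ∑ i ∈ range t, (t - i) * 2 ^ (i + 1) := by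
      rw [mul_sum]
      exact sum_congr rfl fun i _ => by ring
    rw [sum_range_succ']
    simp only [Nat.add_sub_add_right, hshift]
    rw [pow_succ 2 t]
    omega

lemma truncatedProd_primesIco_le {c : ℕ → ℝ} (hc0 : ∀ q, 0 ≤ c q) (hcn : ∀ q, c q ≤ n) {w z : ℕ}
    (hw : 0 < w) (hwz : w ≤ z) (hnz : n ≤ z) (r : ℕ) :
    truncatedProd r (primesIco w z) c ≤ (z : ℝ) ^ (2 * r) := by
  have hcard : #(primesIco w z) ≤ z - w := (card_filter_le _ _).trans (Nat.card_Ico w z).le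
  have hz : #(primesIco w z) + 1 ≤ z := by omega
  have hsum : 1 + ∑ q ∈ primesIco w z, c q ≤ (z : ℝ) ^ 2 := by
    calc 1 + ∑ q ∈ primesIco w z, c q ≤ 1 + #(primesIco w z) * (n : ℝ) := by
          rw [← nsmul_eq_mul]
          exact add_le_add_right (sum_le_card_nsmul _ _ _ fun q _ => hcn q) 1
      _ ≤ (z : ℝ) ^ 2 := by norm_cast; nlinarith
  calc truncatedProd r (primesIco w z) c ≤ (1 + ∑ q ∈ primesIco w z, c q) ^ r :=
        truncatedProd_le_pow (fun q _ => hc0 q) r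
    _ ≤ ((z : ℝ) ^ 2) ^ r :=
        pow_le_pow_left₀ (add_nonneg zero_le_one (sum_nonneg fun q _ => hc0 q)) hsum r
    _ = (z : ℝ) ^ (2 * r) := (pow_mul _ _ _).symm

lemma prod_truncatedProd_primesIco_le {c : ℕ → ℝ} (hc0 : ∀ q, 0 ≤ c q) (hcn : ∀ q, c q ≤ n)
    (ha : n ≤ 2 ^ 2 ^ a) (t : ℕ) :
    ∏ i ∈ range t, truncatedProd (2 * (t - i)) (primesIco (2 ^ 2 ^ (a + i)) (2 ^ 2 ^ (a + i + 1))) c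
      ≤ ((2 : ℝ) ^ 2 ^ (a + t)) ^ 16 := by
  have hfactor (i : ℕ) : truncatedProd (2 * (t - i))
      (primesIco (2 ^ 2 ^ (a + i)) (2 ^ 2 ^ (a + i + 1))) c ≤
      2 ^ (4 * 2 ^ a * ((t - i) * 2 ^ (i + 1))) := by
    refine (truncatedProd_primesIco_le hc0 hcn (by positivity) ?_ (ha.trans ?_) _).trans_eq ?_
    · exact Nat.pow_le_pow_right two_pos (Nat.pow_le_pow_right two_pos (by omega))
    · exact Nat.pow_le_pow_right two_pos (Nat.pow_le_pow_right two_pos (by omega))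
    · push_cast
      rw [← pow_mul]
      ring_nf
  have hnonneg (i : ℕ) : 0 ≤ truncatedProd (2 * (t - i))
      (primesIco (2 ^ 2 ^ (a + i)) (2 ^ 2 ^ (a + i + 1))) c :=
    sum_nonneg fun e _ => prod_nonneg fun q _ => hc0 q
  calc _ ≤ ∏ i ∈ range t, (2 : ℝ) ^ (4 * 2 ^ a * ((t - i) * 2 ^ (i + 1))) :=
        prod_le_prod (fun i _ => hnonneg i) fun i _ => hfactor i
    _ = 2 ^ (4 * 2 ^ a * ∑ i ∈ range t, (t - i) * 2 ^ (i + 1)) := by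
        rw [prod_pow_eq_pow_sum, mul_sum]
    _ ≤ 2 ^ (4 * 2 ^ a * (4 * 2 ^ t)) := by
        gcongr
        · norm_num
        · exact le_of_add_le_left (sum_range_sub_mul_two_pow t).le
    _ = _ := by rw [← pow_mul]; ring_nf

lemma monotone_two_pow_two_pow_add (a : ℕ) : Monotone fun i => 2 ^ 2 ^ (a + i) := fun _ _ h =>
  Nat.pow_le_pow_right two_pos (Nat.pow_le_pow_right two_pos (Nat.add_le_add_left h a))

lemma prod_truncatedProd_neg_primesIco_le {c : ℕ → ℝ} (hc0 : ∀ q, 0 ≤ c q) (hcn : ∀ q, c q ≤ n)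
    (ha : 2 * n ≤ 2 ^ 2 ^ a) (t : ℕ) :
    ∏ i ∈ range t, truncatedProd (2 * (t - i)) (primesIco (2 ^ 2 ^ (a + i)) (2 ^ 2 ^ (a + i + 1)))
        (-fun q => c q / q) ≤
      Real.exp (Real.exp (12 * n)) *
        ∏ q ∈ primesIco (2 ^ 2 ^ a) (2 ^ 2 ^ (a + t)), (1 - c q / q) := by
  let f : ℕ → ℕ := fun i => 2 ^ 2 ^ (a + i)
  have hf : Monotone f := monotone_two_pow_two_pow_add a
  have hle : ∀ i < t, ∀ q ∈ primesIco (f i) (f (i + 1)), c q / q ≤ 1 / 2 := by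
    intro i _ q hq
    obtain ⟨⟨hfq, -⟩, hq⟩ := mem_primesIco.1 hq
    have hnq : (2 * n : ℝ) ≤ q := mod_cast ha.trans ((hf (Nat.zero_le i)).trans hfq)
    rw [div_le_iff₀ (mod_cast hq.pos)]
    linarith [hcn q]
  have hsum : ∀ i < t, ∑ q ∈ primesIco (f i) (f (i + 1)), c q / q ≤ 4 * n := by
    intro i _
    calc _ ≤ ∑ q ∈ primesIco (f i) (f (i + 1)), n * (1 / (q : ℝ)) := sum_le_sum fun q _ => by
          rw [mul_one_div]
          exact div_le_div_of_nonneg_right (hcn q) (Nat.cast_nonneg q)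
      _ ≤ n * 4 := by
          rw [← mul_sum]
          exact mul_le_mul_of_nonneg_left (sum_primesIco_two_pow_two_pow_le (a + i)) (by simp)
      _ = 4 * n := mul_comm _ _
  have hmain := prod_truncatedProd_neg_le
    (fun i _ q _ => div_nonneg (hc0 q) (Nat.cast_nonneg q)) hle hsum (by positivity)
  rwa [← Nat.Ico_zero_eq_range, prod_prod_primesIco_of_monotone _ hf (Nat.zero_le t),
    show 3 * (4 * (n : ℝ)) = 12 * n by ring, Nat.Ico_zero_eq_range] at hmain

theorem card_sifted_primesIco_le (hA : ∀ q, #(A q) ≤ n) (ha : 2 * n ≤ 2 ^ 2 ^ a) (t N : ℕ) :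
    (#(sifted A N (primesIco (2 ^ 2 ^ a) (2 ^ 2 ^ (a + t)))) : ℝ) ≤
      N * (Real.exp (Real.exp (12 * n)) *
        ∏ q ∈ primesIco (2 ^ 2 ^ a) (2 ^ 2 ^ (a + t)), (1 - (#(A q) : ℝ) / q)) +
      ((2 : ℝ) ^ 2 ^ (a + t)) ^ 16 := by
  let f : ℕ → ℕ := fun i => 2 ^ 2 ^ (a + i)
  have hf : Monotone f := monotone_two_pow_two_pow_add a
  have hA' (q : ℕ) : (#(A q) : ℝ) ≤ n := mod_cast hA q
  have hsub : univ.biUnion (fun i : Fin t => primesIco (f i) (f (i + 1))) ⊆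
      primesIco (f 0) (f t) :=
    biUnion_subset.2 fun i _ => primesIco_subset (hf (Nat.zero_le _)) (hf i.2)
  have hdisj : Pairwise (Function.onFun Disjoint
      fun i : Fin t => primesIco (f i) (f (i + 1))) := fun i j hij =>
    pairwise_disjoint_primesIco_of_monotone hf (Fin.val_ne_of_ne hij)
  calc _ ≤ (#(sifted A N (univ.biUnion fun i : Fin t => primesIco (f i) (f (i + 1)))) : ℝ) :=
        mod_cast card_le_card (sifted_subset_sifted hsub N)
    _ ≤ _ := card_sifted_biUnion_le A hdisj (fun i q hq => (mem_primesIco.1 hq).2)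
        (fun i => t - i) N
    _ ≤ _ := by
        rw [Fin.prod_univ_eq_prod_range (fun i => truncatedProd (2 * (t - i))
            (primesIco (f i) (f (i + 1))) (-fun q => (#(A q) : ℝ) / q)),
          Fin.prod_univ_eq_prod_range (fun i => truncatedProd (2 * (t - i))
            (primesIco (f i) (f (i + 1))) fun q => (#(A q) : ℝ))]
        exact add_le_add (mul_le_mul_of_nonneg_left (prod_truncatedProd_neg_primesIco_le
          (fun q => by positivity) hA' ha t) (Nat.cast_nonneg N)) (prod_truncatedProd_primesIco_le
          (fun q => by positivity) hA' (le_of_add_le_left ((two_mul n).symm.trans_le ha)) t)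

end Sieve

section PrimeTuples

variable {E : Finset ℕ} {w z : ℕ}

/-- The residue classes modulo `q` of those `m` for which `q` divides some `m + d` with `d ∈ E`. -/
def negResidues (E : Finset ℕ) (q : ℕ) : Finset (ZMod q) := E.image fun d : ℕ => -(d : ZMod q)

lemma natCast_mem_negResidues {m q : ℕ} :
    (m : ZMod q) ∈ negResidues E q ↔ ∃ d ∈ E, q ∣ m + d := by
  simp only [negResidues, mem_image, ← ZMod.natCast_eq_zero_iff, Nat.cast_add,
    neg_eq_iff_add_eq_zero, add_comm]

lemma card_negResidues (E : Finset ℕ) (q : ℕ) : #(negResidues E q) = nu E q := by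
  have hinj : Set.InjOn (fun r : ℕ => -(r : ZMod q)) (E.image (· % q)) := by
    intro r hr s hs hrs
    obtain ⟨d, -, rfl⟩ := mem_image.1 (mem_coe.1 hr)
    obtain ⟨e, -, rfl⟩ := mem_image.1 (mem_coe.1 hs)
    simpa only [ZMod.natCast_mod, neg_inj, ZMod.natCast_eq_natCast_iff'] using hrs
  rw [nu, ← card_image_of_injOn hinj, image_image, negResidues]
  simp only [Function.comp_def, ZMod.natCast_mod]

lemma primePi_le_add_card_sifted {x : ℝ} :
    primePi x E ≤ z + #(sifted (negResidues E) ⌊x⌋₊ (primesIco w z)) := by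
  have hsub : {m : ℕ | 0 < m ∧ (m : ℝ) ≤ x ∧ ∀ d ∈ E, (m + d).Prime} ⊆
      ↑(Icc 1 z ∪ sifted (negResidues E) ⌊x⌋₊ (primesIco w z)) := by
    rintro m ⟨hm0, hmx, hprime⟩
    by_cases hmz : m ≤ z
    · exact mem_coe.2 (mem_union_left _ (mem_Icc.2 ⟨hm0, hmz⟩))
    refine mem_coe.2 (mem_union_right _ (mem_filter.2
      ⟨mem_Icc.2 ⟨hm0, Nat.le_floor hmx⟩, fun q hq hmem => ?_⟩))
    obtain ⟨d, hd, hdvd⟩ := natCast_mem_negResidues.1 hmem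
    obtain ⟨⟨-, hqz⟩, hq⟩ := mem_primesIco.1 hq
    have := (Nat.prime_dvd_prime_iff_eq hq (hprime d hd)).1 hdvd
    omega
  calc primePi x E ≤ #(Icc 1 z ∪ sifted (negResidues E) ⌊x⌋₊ (primesIco w z)) :=
        (Set.ncard_le_ncard hsub (finite_toSet _)).trans_eq (Set.ncard_coe_finset _)
    _ ≤ z + #(sifted (negResidues E) ⌊x⌋₊ (primesIco w z)) :=
        (card_union_le _ _).trans_eq (by rw [Nat.card_Icc, Nat.add_sub_cancel])

lemma prod_one_sub_nu_div_eq (E : Finset ℕ) (z : ℕ) :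
    ∏ q ∈ primesIco 0 z, (1 - (nu E q : ℝ) / q) =
      partialSeries E z * (∏ q ∈ primesIco 0 z, (1 - 1 / (q : ℝ))) ^ #E := by
  rw [partialSeries, ← prod_pow, ← prod_mul_distrib]
  refine prod_congr rfl fun q hq => ?_
  have := one_sub_one_div_pos (mem_primesIco.1 hq).2.two_le
  rw [localFactor, mul_right_comm, inv_mul_cancel₀ (by positivity), one_mul]

lemma IsAdmissible.inv_prod_primesIco_le (hE : IsAdmissible E) (w : ℕ) :
    (∏ q ∈ primesIco 0 w, (q : ℝ))⁻¹ ≤ ∏ q ∈ primesIco 0 w, (1 - (nu E q : ℝ) / q) := by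
  rw [← prod_inv_distrib]
  refine prod_le_prod (fun q _ => by positivity) fun q hq => ?_
  have hprime := (mem_primesIco.1 hq).2
  have hq0 : (0 : ℝ) < q := mod_cast hprime.pos
  have hnu : (nu E q : ℝ) + 1 ≤ q := mod_cast hE q hprime
  rw [inv_eq_one_div, le_sub_iff_add_le, ← add_div, div_le_one hq0]
  linarith

lemma prod_primesIco_one_sub_nu_div_nonneg (E : Finset ℕ) (w z : ℕ) :
    0 ≤ ∏ q ∈ primesIco w z, (1 - (nu E q : ℝ) / q) :=
  prod_nonneg fun _ hq => sub_nonneg.2 (nu_div_le_one E (mem_primesIco.1 hq).2.pos)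

theorem IsAdmissible.prod_one_sub_nu_div_le (hE : IsAdmissible E) (hw : 0 < w)
    (hEw : 4 * #E ^ 2 ≤ w) (hwz : w ≤ z) (hz : 2 ≤ z) :
    ∏ q ∈ primesIco w z, (1 - (nu E q : ℝ) / q) ≤
      (∏ q ∈ primesIco 0 w, (q : ℝ)) * (2 * singSeries E) * (1 / Real.log z) ^ #E := by
  have hW : 0 < ∏ q ∈ primesIco 0 w, (q : ℝ) :=
    prod_pos fun q hq => mod_cast (mem_primesIco.1 hq).2.pos
  have hmertens : 0 ≤ ∏ q ∈ primesIco 0 z, (1 - 1 / (q : ℝ)) :=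
    prod_nonneg fun q hq => (one_sub_one_div_pos (mem_primesIco.1 hq).2.two_le).le
  rw [mul_assoc, ← inv_mul_le_iff₀ hW]
  calc _ ≤ (∏ q ∈ primesIco 0 w, (1 - (nu E q : ℝ) / q)) *
          ∏ q ∈ primesIco w z, (1 - (nu E q : ℝ) / q) :=
        mul_le_mul_of_nonneg_right (hE.inv_prod_primesIco_le w)
          (prod_primesIco_one_sub_nu_div_nonneg E w z)
    _ = partialSeries E z * (∏ q ∈ primesIco 0 z, (1 - 1 / (q : ℝ))) ^ #E := by
        rw [prod_primesIco_mul_prod_primesIco _ (Nat.zero_le w) hwz, prod_one_sub_nu_div_eq]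
    _ ≤ _ := mul_le_mul (partialSeries_le_two_mul_singSeries E (hw.trans_le hwz)
          (hEw.trans hwz)) (pow_le_pow_left₀ hmertens (prod_one_sub_one_div_le_one_div_log hz) _)
        (by positivity) (mul_nonneg zero_le_two (singSeries_nonneg E))

lemma IsAdmissible.primePi_le {a t : ℕ} (hE : IsAdmissible E) (ha : 4 * #E ^ 2 ≤ 2 ^ 2 ^ a) {x : ℝ}
    (hx : 0 ≤ x) :
    (primePi x E : ℝ) ≤ 2 * Real.exp (Real.exp (12 * #E)) *
        (∏ q ∈ primesIco 0 (2 ^ 2 ^ a), (q : ℝ)) * singSeries E * x *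
        (1 / Real.log (2 ^ 2 ^ (a + t))) ^ #E + 2 * ((2 : ℝ) ^ 2 ^ (a + t)) ^ 16 := by
  have ha' : 2 * #E ≤ 2 ^ 2 ^ a := by nlinarith [Nat.zero_le #E]
  have hz : (2 : ℝ) ^ 2 ^ (a + t) ≤ ((2 : ℝ) ^ 2 ^ (a + t)) ^ 16 :=
    le_self_pow₀ (one_le_pow₀ one_le_two) (by norm_num)
  have hcount : (primePi x E : ℝ) ≤ 2 ^ 2 ^ (a + t) +
      #(sifted (negResidues E) ⌊x⌋₊ (primesIco (2 ^ 2 ^ a) (2 ^ 2 ^ (a + t)))) := by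
    exact_mod_cast primePi_le_add_card_sifted (E := E) (x := x)
  have hsieve := card_sifted_primesIco_le (A := negResidues E)
    (fun q => (card_negResidues E q).trans_le (nu_le_card E q)) ha' t ⌊x⌋₊
  have hprod := hE.prod_one_sub_nu_div_le (pow_pos two_pos _) ha
    (monotone_two_pow_two_pow_add a (Nat.zero_le t)) (Nat.le_self_pow (by positivity) 2)
  simp only [card_negResidues] at hsieve
  have hmain : ⌊x⌋₊ * (Real.exp (Real.exp (12 * #E)) *
      ∏ q ∈ primesIco (2 ^ 2 ^ a) (2 ^ 2 ^ (a + t)), (1 - (nu E q : ℝ) / q)) ≤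
      x * (Real.exp (Real.exp (12 * #E)) * ((∏ q ∈ primesIco 0 (2 ^ 2 ^ a), (q : ℝ)) *
        (2 * singSeries E) * (1 / Real.log ((2 ^ 2 ^ (a + t) : ℕ) : ℝ)) ^ #E)) :=
    mul_le_mul (Nat.floor_le hx) (mul_le_mul_of_nonneg_left hprod (Real.exp_pos _).le)
      (mul_nonneg (Real.exp_pos _).le (prod_primesIco_one_sub_nu_div_nonneg E _ _)) hx
  push_cast at hmain
  linarith

end PrimeTuples

lemma exists_log_two_pow_two_pow_mem_Icc {a : ℕ} {y : ℝ} (hy : 2 ^ a * Real.log 2 ≤ y) :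
    ∃ t : ℕ, Real.log (2 ^ 2 ^ (a + t)) ∈ Set.Icc (y / 2) y := by
  have hlog2 : 0 < Real.log 2 := Real.log_pos one_lt_two
  rw [← le_div_iff₀ hlog2] at hy
  obtain ⟨b, hb, hb'⟩ := exists_nat_pow_near ((one_le_pow₀ one_le_two).trans hy) one_lt_two
  have hab : a < b + 1 := (pow_lt_pow_iff_right₀ (one_lt_two (α := ℝ))).1 (hy.trans_lt hb')
  obtain ⟨t, rfl⟩ := Nat.exists_eq_add_of_le (Nat.lt_succ_iff.1 hab)
  rw [le_div_iff₀ hlog2] at hb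
  rw [div_lt_iff₀ hlog2, pow_succ] at hb'
  refine ⟨t, ?_, ?_⟩ <;> rw [Real.log_pow] <;> push_cast <;> linarith

open Filter in
lemma eventually_mul_log_pow_le_sqrt (n : ℕ) (C : ℝ) :
    ∀ᶠ x : ℝ in atTop, C * Real.log x ^ n ≤ √x := by
  have hlittle : (fun x : ℝ => C * Real.log x ^ n) =o[atTop] fun x => √x := by
    simpa only [Real.sqrt_eq_rpow, Real.rpow_natCast] using
      (isLittleO_log_rpow_rpow_atTop (n : ℝ) (one_half_pos (α := ℝ))).const_mul_left C
  filter_upwards [hlittle.bound one_pos] with x hx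
  rw [one_mul, Real.norm_of_nonneg (Real.sqrt_nonneg x)] at hx
  exact (le_abs_self _).trans hx

open Filter in
lemma eventually_two_mul_sqrt_le (n : ℕ) : ∀ᶠ x : ℝ in atTop, ∀ E : Finset ℕ, IsAdmissible E →
    #E = n → 2 * √x ≤ singSeries E * x / Real.log x ^ n := by
  filter_upwards [eventually_mul_log_pow_le_sqrt n (2 / singSeriesMin n),
    eventually_gt_atTop 1] with x hsqrt hx E hadm hE
  have hlog : 0 < Real.log x := Real.log_pos hx
  have hmin := hE ▸ singSeriesMin_le_singSeries hadm
  rw [div_mul_eq_mul_div, div_le_iff₀ (singSeriesMin_pos n)] at hsqrt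
  rw [le_div_iff₀ (by positivity)]
  calc 2 * √x * Real.log x ^ n = √x * (2 * Real.log x ^ n) := by ring
    _ ≤ √x * (√x * singSeries E) := by
        refine mul_le_mul_of_nonneg_left (hsqrt.trans ?_) (Real.sqrt_nonneg x)
        exact mul_le_mul_of_nonneg_left hmin (Real.sqrt_nonneg x)
    _ = singSeries E * x := by rw [← mul_assoc, Real.mul_self_sqrt (by linarith), mul_comm]

open Filter in
theorem exists_primePi_le (n : ℕ) : ∃ C : ℝ, 0 < C ∧ ∀ᶠ x : ℝ in atTop, ∀ E : Finset ℕ,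
    #E = n → (primePi x E : ℝ) ≤ C * singSeries E * x / Real.log x ^ n + n := by
  set a := 4 * n ^ 2
  have ha : 4 * n ^ 2 ≤ 2 ^ 2 ^ a := (Nat.lt_two_pow_self.trans Nat.lt_two_pow_self).le
  set W : ℝ := 2 * Real.exp (Real.exp (12 * n)) * ∏ q ∈ primesIco 0 (2 ^ 2 ^ a), (q : ℝ)
  have hW : 0 < W := mul_pos (by positivity)
    (prod_pos fun q hq => mod_cast (mem_primesIco.1 hq).2.pos)
  refine ⟨W * 64 ^ n + 1, by positivity, ?_⟩
  filter_upwards [eventually_two_mul_sqrt_le n, eventually_gt_atTop 1,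
    (Real.tendsto_log_atTop.atTop_div_const (by norm_num : (0 : ℝ) < 32)).eventually_ge_atTop
      (2 ^ a * Real.log 2)] with x hrem hx hlarge E hE
  have hlog : 0 < Real.log x := Real.log_pos hx
  have hx0 : 0 ≤ x := by linarith
  have hS := singSeries_nonneg E
  by_cases hadm : IsAdmissible E
  swap
  · have hle : (primePi x E : ℝ) ≤ n := mod_cast hE ▸ primePi_le_card_of_not_isAdmissible hadm x
    exact hle.trans (le_add_of_nonneg_left (by positivity))
  obtain ⟨t, hlogz, hlogz'⟩ := exists_log_two_pow_two_pow_mem_Icc hlarge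
  set z : ℝ := 2 ^ 2 ^ (a + t)
  have hz : z ^ 16 ≤ √x := by
    rw [← Real.log_le_log_iff (by positivity) (Real.sqrt_pos.2 (by linarith)), Real.log_pow,
      Real.log_sqrt hx0]
    push_cast
    linarith
  have hinv : 1 / Real.log z ≤ 64 / Real.log x := by
    rw [div_le_div_iff₀ (by linarith) hlog]
    linarith
  have hmain : W * singSeries E * x * (1 / Real.log z) ^ n ≤
      W * 64 ^ n * singSeries E * x / Real.log x ^ n := by
    calc _ ≤ W * singSeries E * x * (64 / Real.log x) ^ n := by
          have : 0 ≤ 1 / Real.log z := one_div_nonneg.2 (by linarith)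
          gcongr
      _ = _ := by rw [div_pow]; ring
  have hpi := hadm.primePi_le (t := t) (hE.symm ▸ ha) hx0
  rw [hE] at hpi
  calc (primePi x E : ℝ) ≤ W * 64 ^ n * singSeries E * x / Real.log x ^ n +
        singSeries E * x / Real.log x ^ n := by
        linarith [hrem E hadm hE]
    _ = (W * 64 ^ n + 1) * singSeries E * x / Real.log x ^ n := by ring
    _ ≤ _ := le_add_of_nonneg_right n.cast_nonneg

/-! ### Adjoining an element to a tuple -/

section Insert

variable {E : Finset ℕ} {j q : ℕ}

/-- The ratio of `localFactor (insert j E) q` to `localFactor E q` for `j ∉ E`. -/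
noncomputable def insertRatio (E : Finset ℕ) (j q : ℕ) : ℝ :=
  if j % q ∈ E.image (· % q) then 1 + 1 / ((q : ℝ) - 1)
  else 1 - nu E q / (((q : ℝ) - 1) * (q - nu E q))

/-- A nonnegative upper bound for `insertRatio E j q - 1`; it is supported on the primes `q`
dividing some `j - e` with `e ∈ E`. -/
noncomputable def insertExcess (E : Finset ℕ) (j q : ℕ) : ℝ :=
  if j % q ∈ E.image (· % q) then 1 / ((q : ℝ) - 1) else 0

lemma nu_lt_of_notMem (hq : 0 < q) (h : j % q ∉ E.image (· % q)) : nu E q < q := by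
  have hssub : E.image (· % q) ⊂ range q :=
    ssubset_of_subset_of_ne (image_mod_subset_range E hq) fun heq =>
      h (heq ▸ mem_range.2 (Nat.mod_lt j hq))
  simpa only [nu, card_range] using card_lt_card hssub

lemma localFactor_insert (hq : 2 ≤ q) (hj : j ∉ E) :
    localFactor (insert j E) q = insertRatio E j q * localFactor E q := by
  have hq2 : (2 : ℝ) ≤ q := mod_cast hq
  have hq0 : (q : ℝ) ≠ 0 := by linarith
  have hq1 : (q : ℝ) - 1 ≠ 0 := by linarith
  have hinv : (1 - 1 / (q : ℝ))⁻¹ = q / ((q : ℝ) - 1) := by field_simp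
  rw [localFactor, localFactor, insertRatio, card_insert_of_notMem hj, pow_succ, mul_inv, hinv]
  split_ifs with h
  · rw [nu_insert_of_mem h, show 1 + 1 / ((q : ℝ) - 1) = q / (q - 1) by field_simp; ring]
    ring
  · have hnu : (q : ℝ) - nu E q ≠ 0 :=
      (sub_pos.2 (mod_cast nu_lt_of_notMem (by omega) h)).ne'
    rw [nu_insert_of_notMem h]
    push_cast
    field_simp
    ring

lemma partialSeries_insert (hj : j ∉ E) (z : ℕ) : partialSeries (insert j E) z =
    (∏ q ∈ primesIco 0 z, insertRatio E j q) * partialSeries E z := by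
  rw [partialSeries, partialSeries, ← prod_mul_distrib]
  exact prod_congr rfl fun q hq => localFactor_insert (mem_primesIco.1 hq).2.two_le hj

lemma insertExcess_nonneg (E : Finset ℕ) (j : ℕ) (hq : 1 ≤ q) : 0 ≤ insertExcess E j q := by
  have : (1 : ℝ) ≤ q := mod_cast hq
  rw [insertExcess]
  split_ifs
  exacts [one_div_nonneg.2 (by linarith), le_rfl]

lemma insertRatio_le (hq : 1 ≤ q) : insertRatio E j q ≤ 1 + insertExcess E j q := by
  have hq1 : (1 : ℝ) ≤ q := mod_cast hq
  have hnu : (nu E q : ℝ) ≤ q := mod_cast nu_le_self E hq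
  rw [insertRatio, insertExcess]
  split_ifs
  · exact le_rfl
  · rw [add_zero, sub_le_self_iff]
    exact div_nonneg (Nat.cast_nonneg _) (mul_nonneg (by linarith) (by linarith))

lemma partialSeries_insert_le (hj : j ∉ E) (z : ℕ) : partialSeries (insert j E) z ≤
    (∏ q ∈ primesIco 0 z, (1 + insertExcess E j q)) * partialSeries E z := by
  rw [partialSeries, partialSeries, ← prod_mul_distrib]
  refine prod_le_prod (fun q hq => ?_) fun q hq => ?_ <;> have hq := (mem_primesIco.1 hq).2
  · exact localFactor_nonneg _ hq.two_le
  rw [localFactor_insert hq.two_le hj]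
  exact mul_le_mul_of_nonneg_right (insertRatio_le hq.one_le) (localFactor_nonneg E hq.two_le)

lemma card_mul_log_le_log {T : Finset ℕ} {y M : ℕ} (hy : 0 < y) (hM : M ≠ 0)
    (hT : ∀ q ∈ T, q.Prime ∧ y ≤ q ∧ q ∣ M) : #T * Real.log y ≤ Real.log M := by
  have hpow : y ^ #T ≤ M :=
    calc y ^ #T ≤ ∏ q ∈ T, q := pow_card_le_prod _ _ _ fun q hq => (hT q hq).2.1
      _ ≤ M := Nat.le_of_dvd (Nat.pos_of_ne_zero hM)
          (prod_primes_dvd M (fun q hq => (hT q hq).1.prime) fun q hq => (hT q hq).2.2)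
  rw [← Real.log_pow]
  exact Real.log_le_log (by positivity) (mod_cast hpow)

lemma one_le_log_of_three_le {y : ℝ} (hy : 3 ≤ y) : 1 ≤ Real.log y := by
  rw [Real.le_log_iff_exp_le (by linarith)]
  exact (Real.exp_one_lt_d9.trans (by norm_num)).le.trans hy

lemma card_filter_mod_mem_image_mul_log_le (hj : j ∉ E) {y : ℕ} (hy : 0 < y) {P : Finset ℕ}
    (hP : ∀ q ∈ P, q.Prime ∧ y ≤ q) {B : ℝ} (hjB : (j : ℝ) ≤ B) (hB : ∀ e ∈ E, (e : ℝ) ≤ B) :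
    #{q ∈ P | j % q ∈ E.image (· % q)} * Real.log y ≤ #E * Real.log B := by
  set M := ∏ e ∈ E, ((j : ℤ) - e).natAbs with hMdef
  have hM : M ≠ 0 := prod_ne_zero_iff.2 fun e he => by
    rw [Int.natAbs_ne_zero, sub_ne_zero, ne_eq, Nat.cast_inj]
    exact fun h => hj (h ▸ he)
  have hT : ∀ q ∈ ({q ∈ P | j % q ∈ E.image (· % q)} : Finset ℕ), q.Prime ∧ y ≤ q ∧ q ∣ M := by
    intro q hq
    obtain ⟨hqP, hmem⟩ := mem_filter.1 hq
    obtain ⟨e, he, hmod⟩ := mem_image.1 hmem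
    exact ⟨(hP q hqP).1, (hP q hqP).2, (Int.natCast_dvd.1 (Nat.modEq_iff_dvd.1 hmod)).trans
      (dvd_prod_of_mem _ he)⟩
  have hMB : (M : ℝ) ≤ B ^ #E := by
    rw [hMdef, Nat.cast_prod, ← prod_const]
    refine prod_le_prod (fun e _ => Nat.cast_nonneg _) fun e he => ?_
    have hdist : ((j : ℤ) - e).natAbs ≤ max j e := by omega
    exact (Nat.cast_le.2 hdist).trans ((Nat.cast_max j e).trans_le (max_le hjB (hB e he)))
  calc _ ≤ Real.log M := card_mul_log_le_log hy hM hT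
    _ ≤ Real.log (B ^ #E) := Real.log_le_log (mod_cast Nat.pos_of_ne_zero hM) hMB
    _ = #E * Real.log B := Real.log_pow _ _

lemma prod_primesIco_one_add_insertExcess_le (hj : j ∉ E) {y : ℕ} (hy : 3 ≤ y) {A B : ℝ}
    (hjB : (j : ℝ) ≤ B) (hB : ∀ e ∈ E, (e : ℝ) ≤ B) (hA : Real.log B ≤ A * y) (z : ℕ) :
    ∏ q ∈ primesIco y z, (1 + insertExcess E j q) ≤ Real.exp (2 * #E * A) := by
  have hy3 : (3 : ℝ) ≤ y := mod_cast hy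
  set T : Finset ℕ := {q ∈ primesIco y z | j % q ∈ E.image (· % q)} with hTdef
  have hcard : (#T : ℝ) ≤ #E * (A * y) :=
    calc (#T : ℝ) ≤ #T * Real.log y :=
          le_mul_of_one_le_right (Nat.cast_nonneg _) (one_le_log_of_three_le hy3)
      _ ≤ #E * Real.log B := card_filter_mod_mem_image_mul_log_le hj (by omega)
          (fun q hq => ⟨(mem_primesIco.1 hq).2, (mem_primesIco.1 hq).1.1⟩) hjB hB
      _ ≤ #E * (A * y) := by gcongr
  have hexcess : ∀ q ∈ T, insertExcess E j q ≤ 2 / y := by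
    intro q hq
    obtain ⟨hq, hmem⟩ := mem_filter.1 hq
    have hyq : (y : ℝ) ≤ q := mod_cast (mem_primesIco.1 hq).1.1
    rw [insertExcess, if_pos hmem, div_le_div_iff₀ (by linarith) (by linarith)]
    linarith
  calc ∏ q ∈ primesIco y z, (1 + insertExcess E j q)
      ≤ Real.exp (∑ q ∈ primesIco y z, insertExcess E j q) := by
        rw [Real.exp_sum]
        refine prod_le_prod (fun q hq => ?_) fun q _ => ?_
        · linarith [insertExcess_nonneg E j (mem_primesIco.1 hq).2.one_le]
        · linarith [Real.add_one_le_exp (insertExcess E j q)]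
    _ = Real.exp (∑ q ∈ T, insertExcess E j q) := by
        rw [hTdef, sum_filter]
        refine congrArg _ (sum_congr rfl fun q _ => ?_)
        split_ifs with h
        exacts [rfl, if_neg h]
    _ ≤ Real.exp (2 * #E * A) := Real.exp_le_exp.2 <| by
        calc _ ≤ #T * (2 / (y : ℝ)) := (sum_le_card_nsmul _ _ _ hexcess).trans_eq (nsmul_eq_mul _ _)
          _ ≤ #E * (A * y) * (2 / y) := by gcongr
          _ = _ := by field_simp

theorem singSeries_insert_le (hj : j ∉ E) {y : ℕ} (hy : 3 ≤ y) {A B : ℝ} (hjB : (j : ℝ) ≤ B)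
    (hB : ∀ e ∈ E, (e : ℝ) ≤ B) (hA : Real.log B ≤ A * y) :
    singSeries (insert j E) ≤ (∏ q ∈ primesIco 0 y, (1 + insertExcess E j q)) *
      Real.exp (2 * #E * A) * singSeries E := by
  have hnonneg : 0 ≤ ∏ q ∈ primesIco 0 y, (1 + insertExcess E j q) := prod_nonneg fun q hq => by
    linarith [insertExcess_nonneg E j (mem_primesIco.1 hq).2.one_le]
  refine singSeries_le_mul_of_partialSeries y fun z hz => ?_
  calc _ ≤ (∏ q ∈ primesIco 0 z, (1 + insertExcess E j q)) * partialSeries E z :=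
        partialSeries_insert_le hj z
    _ = (∏ q ∈ primesIco 0 y, (1 + insertExcess E j q)) *
          (∏ q ∈ primesIco y z, (1 + insertExcess E j q)) * partialSeries E z := by
        rw [prod_primesIco_mul_prod_primesIco _ (Nat.zero_le y) hz]
    _ ≤ _ := mul_le_mul_of_nonneg_right (mul_le_mul_of_nonneg_left
        (prod_primesIco_one_add_insertExcess_le hj hy hjB hB hA z) hnonneg)
        (partialSeries_nonneg E z)

lemma one_le_insertRatio (hq : 1 ≤ q) (h : j % q ∈ E.image (· % q)) : 1 ≤ insertRatio E j q := by
  have hq1 : (1 : ℝ) ≤ q := mod_cast hq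
  rw [insertRatio, if_pos h]
  exact le_add_of_nonneg_right (one_div_nonneg.2 (by linarith))

lemma one_sub_div_sq_le_insertRatio (hq : 2 ≤ q) (hE : 2 * #E ≤ q) :
    1 - 4 * #E / (q : ℝ) ^ 2 ≤ insertRatio E j q := by
  by_cases h : j % q ∈ E.image (· % q)
  · exact (sub_le_self 1 (by positivity)).trans (one_le_insertRatio (by omega) h)
  have hq2 : (2 : ℝ) ≤ q := mod_cast hq
  have hEq : 2 * (#E : ℝ) ≤ q := mod_cast hE
  have hnu : (nu E q : ℝ) ≤ #E := mod_cast nu_le_card E q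
  have hden : ((q : ℝ) / 2) * (q / 2) ≤ (q - 1) * (q - nu E q) :=
    mul_le_mul (by linarith) (by linarith) (by positivity) (by linarith)
  rw [insertRatio, if_neg h, sub_le_sub_iff_left]
  calc _ ≤ #E / ((q : ℝ) / 2 * (q / 2)) := by gcongr
    _ = 4 * #E / (q : ℝ) ^ 2 := by field_simp; norm_num

theorem singSeries_le_two_mul_singSeries_insert (h0 : 0 ∈ E) (hj : j ∉ E) {K : ℕ}
    (hK : 16 * #E ≤ K) (hjK : ∀ q, q.Prime → q < K → q ∣ j) :
    singSeries E ≤ 2 * singSeries (insert j E) := by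
  have hE : 0 < #E := card_pos.2 ⟨0, h0⟩
  refine singSeries_le_mul_of_partialSeries K fun z hz => ?_
  have hlow : 1 ≤ ∏ q ∈ primesIco 0 K, insertRatio E j q := one_le_prod fun q hq => by
    obtain ⟨⟨-, hqK⟩, hq⟩ := mem_primesIco.1 hq
    refine one_le_insertRatio hq.one_le (mem_image.2 ⟨0, h0, ?_⟩)
    rw [Nat.zero_mod, Nat.mod_eq_zero_of_dvd (hjK q hq hqK)]
  have hhigh : 1 / 2 ≤ ∏ q ∈ primesIco K z, insertRatio E j q :=
    half_le_prod_primesIco (c := 4 * #E) (by positivity) (by omega)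
      (by exact_mod_cast (by omega : 4 * (4 * #E) ≤ K)) fun q hq => by
      obtain ⟨⟨hKq, -⟩, hq⟩ := mem_primesIco.1 hq
      exact one_sub_div_sq_le_insertRatio hq.two_le (by omega)
  have hratio : 1 / 2 ≤ ∏ q ∈ primesIco 0 z, insertRatio E j q := by
    rw [← prod_primesIco_mul_prod_primesIco _ (Nat.zero_le K) hz]
    exact hhigh.trans (le_mul_of_one_le_left (by linarith) hlow)
  rw [partialSeries_insert hj]
  nlinarith [mul_le_mul_of_nonneg_right hratio (partialSeries_nonneg E z)]

lemma sum_primesIco_one_div_mul_pred_le (y : ℕ) :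
    ∑ q ∈ primesIco 0 y, 1 / ((q : ℝ) * (q - 1)) ≤ 2 := by
  have hsub : primesIco 0 y ⊆ primesIco 2 y := fun q hq =>
    have hq := mem_primesIco.1 hq
    mem_primesIco.2 ⟨⟨hq.2.two_le, hq.1.2⟩, hq.2⟩
  calc ∑ q ∈ primesIco 0 y, 1 / ((q : ℝ) * (q - 1))
      ≤ ∑ q ∈ primesIco 0 y, 2 * (1 / (q : ℝ) ^ 2) := sum_le_sum fun q hq => by
        have hq2 : (2 : ℝ) ≤ q := mod_cast (mem_primesIco.1 hq).2.two_le
        rw [mul_one_div, div_le_div_iff₀ (by nlinarith) (by positivity)]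
        nlinarith
    _ ≤ ∑ q ∈ primesIco 2 y, 2 * (1 / (q : ℝ) ^ 2) :=
        sum_le_sum_of_subset_of_nonneg hsub fun _ _ _ => by positivity
    _ ≤ 2 := by
        rw [← mul_sum]
        linarith [sum_primesIco_one_div_sq_le two_pos y, Nat.cast_ofNat (R := ℝ) (n := 2)]

lemma sum_prod_insertExcess {u : Finset ℕ} (H : ℕ) :
    ∑ j ∈ Icc 1 H, ∏ q ∈ u, insertExcess E j q = (∏ q ∈ u, 1 / ((q : ℝ) - 1)) *
      #{j ∈ Icc 1 H | ∀ q ∈ u, (j : ZMod q) ∈ E.image (Nat.cast : ℕ → ZMod q)} := by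
  simp only [insertExcess, mem_image, prod_ite_zero, ZMod.natCast_eq_natCast_iff',
    card_filter, Nat.cast_sum, mul_sum, Nat.cast_ite, Nat.cast_one, Nat.cast_zero, mul_ite,
    mul_one, mul_zero]

lemma sum_prod_insertExcess_le {u : Finset ℕ} (hu : ∀ q ∈ u, q.Prime) {H : ℕ}
    (hH : ∏ q ∈ u, q ≤ H) : ∑ j ∈ Icc 1 H, ∏ q ∈ u, insertExcess E j q ≤
      2 * H * ∏ q ∈ u, #E * (1 / ((q : ℝ) * (q - 1))) := by
  let A : (q : ℕ) → Finset (ZMod q) := fun q => E.image Nat.cast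
  have hpred : ∀ q ∈ u, 0 ≤ 1 / ((q : ℝ) - 1) := fun q hq => by
    have : (2 : ℝ) ≤ q := mod_cast (hu q hq).two_le
    exact one_div_nonneg.2 (by linarith)
  have herror : ∏ q ∈ u, (#(A q) : ℝ) ≤ H * ∏ q ∈ u, (#(A q) : ℝ) / q := by
    calc ∏ q ∈ u, (#(A q) : ℝ) = (∏ q ∈ u, (q : ℝ)) * ∏ q ∈ u, (#(A q) : ℝ) / q := by
          rw [← prod_mul_distrib]
          exact prod_congr rfl fun q hq =>
            (mul_div_cancel₀ _ (Nat.cast_ne_zero.2 (hu q hq).ne_zero)).symm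
      _ ≤ _ := mul_le_mul_of_nonneg_right (by rw [← Nat.cast_prod]; exact Nat.cast_le.2 hH)
          (prod_nonneg fun q _ => by positivity)
  have hcount := (abs_le.1 (abs_card_filter_forall_sub_le hu A H)).2
  calc _ = (∏ q ∈ u, 1 / ((q : ℝ) - 1)) * #{j ∈ Icc 1 H | ∀ q ∈ u, (j : ZMod q) ∈ A q} :=
        sum_prod_insertExcess H
    _ ≤ (∏ q ∈ u, 1 / ((q : ℝ) - 1)) * (2 * H * ∏ q ∈ u, (#(A q) : ℝ) / q) :=
        mul_le_mul_of_nonneg_left (by linarith) (prod_nonneg hpred)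
    _ = 2 * H * ∏ q ∈ u, #(A q) * (1 / ((q : ℝ) * (q - 1))) := by
        rw [mul_left_comm, ← prod_mul_distrib]
        congr 1
        exact prod_congr rfl fun q _ => by rw [← one_div_mul_one_div]; ring
    _ ≤ _ := by
        refine mul_le_mul_of_nonneg_left (prod_le_prod (fun q hq => ?_) fun q hq => ?_)
          (by positivity) <;> rw [← one_div_mul_one_div] <;> have := hpred q hq
        · positivity
        · gcongr
          exact card_image_le

lemma sum_prod_one_add_insertExcess_le (E : Finset ℕ) {y H : ℕ} (hH : 4 ^ y ≤ H) :
    ∑ j ∈ Icc 1 H, ∏ q ∈ primesIco 0 y, (1 + insertExcess E j q) ≤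
      2 * H * Real.exp (2 * #E) := by
  have hprod : ∀ u ∈ (primesIco 0 y).powerset, ∏ q ∈ u, q ≤ H := fun u hu =>
    calc ∏ q ∈ u, q ≤ primorial y := by
          refine prod_le_prod_of_subset_of_one_le' (fun q hq => ?_) fun q hq _ => ?_
          · have hq := mem_primesIco.1 (mem_powerset.1 hu hq)
            exact mem_filter.2 ⟨mem_range.2 (by omega), hq.2⟩
          · exact (mem_filter.1 hq).2.one_le
      _ ≤ H := (primorial_le_four_pow y).trans hH
  have hnonneg : ∀ q ∈ primesIco 0 y, 0 ≤ #E * (1 / ((q : ℝ) * (q - 1))) := fun q hq => by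
    have : (1 : ℝ) ≤ q := mod_cast (mem_primesIco.1 hq).2.one_le
    have : (0 : ℝ) ≤ q - 1 := by linarith
    positivity
  calc ∑ j ∈ Icc 1 H, ∏ q ∈ primesIco 0 y, (1 + insertExcess E j q)
      = ∑ u ∈ (primesIco 0 y).powerset, ∑ j ∈ Icc 1 H, ∏ q ∈ u, insertExcess E j q := by
        simp_rw [prod_one_add]
        exact sum_comm
    _ ≤ ∑ u ∈ (primesIco 0 y).powerset, 2 * H * ∏ q ∈ u, #E * (1 / ((q : ℝ) * (q - 1))) :=
        sum_le_sum fun u hu => sum_prod_insertExcess_le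
          (fun q hq => (mem_primesIco.1 (mem_powerset.1 hu hq)).2) (hprod u hu)
    _ = 2 * H * ∏ q ∈ primesIco 0 y, (1 + #E * (1 / ((q : ℝ) * (q - 1)))) := by
        rw [← mul_sum, ← prod_one_add]
    _ ≤ 2 * H * Real.exp (2 * #E) := by
        gcongr
        calc _ ≤ Real.exp (∑ q ∈ primesIco 0 y, #E * (1 / ((q : ℝ) * (q - 1)))) := by
              rw [Real.exp_sum]
              exact prod_le_prod (fun q hq => by linarith [hnonneg q hq]) fun q _ => by
                linarith [Real.add_one_le_exp (#E * (1 / ((q : ℝ) * (q - 1))))]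
          _ ≤ _ := Real.exp_le_exp.2 <| by
              rw [← mul_sum, mul_comm 2 (#E : ℝ)]
              exact mul_le_mul_of_nonneg_left (sum_primesIco_one_div_mul_pred_le y)
                (Nat.cast_nonneg _)

/-- The constant in the upper bound for the mean over `j` of `singSeries (insert j E)`, where
`#E = n` and `A` controls the size of the elements involved. -/
noncomputable def meanConst (n : ℕ) (A : ℝ) : ℝ := 2 * Real.exp (2 * n) * Real.exp (2 * n * A)

lemma meanConst_pos (n : ℕ) (A : ℝ) : 0 < meanConst n A := by
  unfold meanConst
  positivity

theorem sum_singSeries_insert_le {y H : ℕ} (hy : 3 ≤ y) (hH : 4 ^ y ≤ H) {A B : ℝ}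
    (hHB : (H : ℝ) ≤ B) (hB : ∀ e ∈ E, (e : ℝ) ≤ B) (hA : Real.log B ≤ A * y) :
    ∑ j ∈ Icc 1 H \ E, singSeries (insert j E) ≤ meanConst #E A * H * singSeries E := by
  let f : ℕ → ℝ := fun j => ∏ q ∈ primesIco 0 y, (1 + insertExcess E j q)
  have hfnonneg : ∀ j, 0 ≤ f j := fun j => prod_nonneg fun q hq => by
    linarith [insertExcess_nonneg E j (mem_primesIco.1 hq).2.one_le]
  have hS := singSeries_nonneg E
  calc ∑ j ∈ Icc 1 H \ E, singSeries (insert j E)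
      ≤ ∑ j ∈ Icc 1 H \ E, f j * Real.exp (2 * #E * A) * singSeries E :=
        sum_le_sum fun j hj => by
          obtain ⟨hjH, hjE⟩ := mem_sdiff.1 hj
          exact singSeries_insert_le hjE hy ((Nat.cast_le.2 (mem_Icc.1 hjH).2).trans hHB) hB hA
    _ ≤ ∑ j ∈ Icc 1 H, f j * Real.exp (2 * #E * A) * singSeries E :=
        sum_le_sum_of_subset_of_nonneg sdiff_subset fun j _ _ => by
          have := hfnonneg j
          positivity
    _ = (∑ j ∈ Icc 1 H, f j) * Real.exp (2 * #E * A) * singSeries E := by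
        rw [sum_mul, sum_mul]
    _ ≤ 2 * H * Real.exp (2 * #E) * Real.exp (2 * #E * A) * singSeries E := by
        gcongr
        exact sum_prod_one_add_insertExcess_le E hH
    _ = meanConst #E A * H * singSeries E := by
        rw [meanConst]
        ring

theorem sum_sum_singSeries_insert_insert_le {y H : ℕ} (hy : 3 ≤ y) (hH : 4 ^ y ≤ H) {A B : ℝ}
    (hHB : (H : ℝ) ≤ B) (hB : ∀ e ∈ E, (e : ℝ) ≤ B) (hA : Real.log B ≤ A * y) :
    ∑ j ∈ Icc 1 H \ E, ∑ i ∈ Icc 1 H \ insert j E, singSeries (insert i (insert j E)) ≤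
      meanConst (#E + 1) A * meanConst #E A * H ^ 2 * singSeries E := by
  have hc := meanConst_pos (#E + 1) A
  calc _ ≤ ∑ j ∈ Icc 1 H \ E, meanConst (#E + 1) A * H * singSeries (insert j E) :=
        sum_le_sum fun j hj => by
          obtain ⟨hjH, hjE⟩ := mem_sdiff.1 hj
          rw [← card_insert_of_notMem hjE]
          exact sum_singSeries_insert_le hy hH hHB ((forall_mem_insert _ _ _).2
            ⟨(Nat.cast_le.2 (mem_Icc.1 hjH).2).trans hHB, hB⟩) hA
    _ = meanConst (#E + 1) A * H * ∑ j ∈ Icc 1 H \ E, singSeries (insert j E) := by rw [mul_sum]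
    _ ≤ meanConst (#E + 1) A * H * (meanConst #E A * H * singSeries E) := by
        gcongr
        exact sum_singSeries_insert_le hy hH hHB hB hA
    _ = _ := by ring

end Insert

/-! ### Dilations -/

section Dilation

variable {E : Finset ℕ} {p q : ℕ}

lemma card_image_mul (E : Finset ℕ) {m : ℕ} (hm : 0 < m) : #(E.image (m * ·)) = #E :=
  card_image_of_injective _ fun _ _ h => Nat.eq_of_mul_eq_mul_left hm h

lemma nu_image_mul_of_coprime (E : Finset ℕ) (h : q.Coprime p) :
    nu (E.image (p * ·)) q = nu E q := by
  have himage : (E.image (p * ·)).image (· % q) = (E.image (· % q)).image (p * · % q) := by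
    simp only [image_image, Function.comp_def, Nat.mul_mod_mod]
  rw [nu, himage, nu]
  refine card_image_of_injOn ?_
  rw [coe_image]
  rintro _ ⟨a, -, rfl⟩ _ ⟨b, -, rfl⟩ hab
  exact (Nat.mod_modEq a q).symm.trans
    ((Nat.ModEq.cancel_left_of_coprime h hab).trans (Nat.mod_modEq b q))

lemma nu_image_mul_of_dvd (hE : E.Nonempty) (h : q ∣ p) : nu (E.image (p * ·)) q = 1 := by
  have hmod : (fun e => p * e % q) = fun _ => 0 :=
    funext fun e => Nat.mod_eq_zero_of_dvd (h.mul_right e)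
  rw [nu, image_image, Function.comp_def, hmod, image_const hE, card_singleton]

theorem singSeries_mul_eq_singSeries_image_mul (hp : p.Prime) (hE : E.Nonempty) :
    singSeries E * ((p : ℝ) - 1) = singSeries (E.image (p * ·)) * ((p : ℝ) - nu E p) := by
  have hp0 : (p : ℝ) ≠ 0 := mod_cast hp.ne_zero
  have hlocal : localFactor E p * ((p : ℝ) - 1) =
      localFactor (E.image (p * ·)) p * ((p : ℝ) - nu E p) := by
    rw [localFactor, localFactor, card_image_mul E hp.pos, nu_image_mul_of_dvd hE dvd_rfl]
    push_cast
    field_simp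
  refine tendsto_nhds_unique_of_eventuallyEq ((tendsto_partialSeries E).mul_const _)
    ((tendsto_partialSeries (E.image (p * ·))).mul_const _) ?_
  filter_upwards [Filter.eventually_gt_atTop p] with z hz
  have hpz : p ∈ primesIco 0 z := mem_primesIco.2 ⟨⟨p.zero_le, hz⟩, hp⟩
  have hother : ∏ q ∈ (primesIco 0 z).erase p, localFactor (E.image (p * ·)) q =
      ∏ q ∈ (primesIco 0 z).erase p, localFactor E q := prod_congr rfl fun q hq => by
    obtain ⟨hqp, hq⟩ := mem_erase.1 hq
    rw [localFactor, nu_image_mul_of_coprime E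
      ((Nat.coprime_primes (mem_primesIco.1 hq).2 hp).2 hqp), card_image_mul E hp.pos, localFactor]
  rw [partialSeries, partialSeries, ← mul_prod_erase _ _ hpz, ← mul_prod_erase _ _ hpz, hother,
    mul_right_comm, hlocal, mul_right_comm]

lemma singSeries_image_mul_of_nu_eq_one (hp : p.Prime) (hE : E.Nonempty) (h : nu E p = 1) :
    singSeries (E.image (p * ·)) = singSeries E := by
  have hscale := singSeries_mul_eq_singSeries_image_mul hp hE
  have hp1 : (1 : ℝ) < p := mod_cast hp.one_lt
  rw [h, Nat.cast_one] at hscale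
  exact (mul_right_cancel₀ (by linarith) hscale).symm

lemma singSeries_le_singSeries_image_mul (hp : p.Prime) (hE : E.Nonempty) :
    singSeries E ≤ singSeries (E.image (p * ·)) := by
  have hscale := singSeries_mul_eq_singSeries_image_mul hp hE
  have hp1 : (1 : ℝ) < p := mod_cast hp.one_lt
  have hnu : (1 : ℝ) ≤ nu E p := mod_cast one_le_nu hE p
  nlinarith [singSeries_nonneg (E.image (p * ·))]

lemma singSeries_mul_succ_le_of_two_le_nu (hp : p.Prime) (hE : E.Nonempty) (h : 2 ≤ nu E p) :
    singSeries E * ((p : ℝ) + 1) ≤ singSeries (E.image (p * ·)) * p := by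
  have hscale := singSeries_mul_eq_singSeries_image_mul hp hE
  have hp1 : (1 : ℝ) < p := mod_cast hp.one_lt
  have hnu : (2 : ℝ) ≤ nu E p := mod_cast h
  have hdrop : singSeries E * ((p : ℝ) - 1) ≤ singSeries (E.image (p * ·)) * ((p : ℝ) - 2) := by
    rw [hscale]
    exact mul_le_mul_of_nonneg_left (by linarith) (singSeries_nonneg _)
  refine le_of_mul_le_mul_right ?_ (sub_pos.2 hp1)
  nlinarith [singSeries_nonneg (E.image (p * ·))]

end Dilation

/-! ### Comparison with multiples of a primorial -/

section PrimorialTuple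

variable {E : Finset ℕ} {n y q : ℕ}

/-- The first `n` multiples of the product of the primes up to `y`; its singular series is nearly
maximal among the tuples of `n` elements of moderate size. -/
def primorialTuple (n y : ℕ) : Finset ℕ := (range n).image (primorial y * ·)

lemma card_primorialTuple (n y : ℕ) : #(primorialTuple n y) = n := by
  rw [primorialTuple, card_image_mul _ (primorial_pos y), card_range]

lemma localFactor_primorialTuple (hn : 1 ≤ n) (hq : q.Prime) (h : q ≤ y) :
    localFactor (primorialTuple n y) q = ((1 - 1 / (q : ℝ)) ^ n)⁻¹ * (1 - 1 / q) := by
  rw [localFactor, card_primorialTuple, primorialTuple,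
    nu_image_mul_of_dvd (nonempty_range_iff.2 (by omega)) (hq.dvd_primorial_iff.2 h),
    Nat.cast_one]

lemma log_le_two_mul_singSeries_primorialTuple (hn : 2 ≤ n) (hny : 4 * n ^ 2 ≤ y + 1) :
    Real.log y ≤ 2 * singSeries (primorialTuple n y) := by
  have hy : 2 ≤ y := by nlinarith
  have hpos : ∀ q ∈ primesIco 0 (y + 1), 0 < 1 - 1 / (q : ℝ) := fun q hq =>
    one_sub_one_div_pos (mem_primesIco.1 hq).2.two_le
  have hlog : 0 < Real.log (y + 1 : ℕ) := Real.log_pos (by exact_mod_cast (by omega : 1 < y + 1))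
  calc Real.log y ≤ Real.log (y + 1 : ℕ) :=
        Real.log_le_log (by exact_mod_cast (by omega : 0 < y)) (by push_cast; linarith)
    _ ≤ (∏ q ∈ primesIco 0 (y + 1), (1 - 1 / (q : ℝ)))⁻¹ := by
        rw [le_inv_comm₀ hlog (prod_pos hpos), ← one_div]
        exact prod_one_sub_one_div_le_one_div_log (by omega)
    _ = ∏ q ∈ primesIco 0 (y + 1), (1 - 1 / (q : ℝ))⁻¹ := (prod_inv_distrib _).symm
    _ ≤ partialSeries (primorialTuple n y) (y + 1) :=
        prod_le_prod (fun q hq => (inv_pos.2 (hpos q hq)).le) fun q hq => by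
          have hq0 := hpos q hq
          obtain ⟨⟨-, hqy⟩, hq⟩ := mem_primesIco.1 hq
          obtain ⟨m, rfl⟩ := Nat.exists_eq_add_of_le' hn
          rw [localFactor_primorialTuple (by omega) hq (by omega), ← div_eq_inv_mul,
            show m + 2 = m + 1 + 1 by rfl, pow_succ _ (m + 1), div_mul_cancel_right₀ hq0.ne']
          exact inv_anti₀ (by positivity) (pow_le_of_le_one hq0.le (by
            rw [sub_le_self_iff]; positivity) (by omega))
    _ ≤ _ := partialSeries_le_two_mul_singSeries _ (by omega) (by rwa [card_primorialTuple])

lemma localFactor_le (hE : E.Nonempty) (hq : 2 ≤ q) :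
    localFactor E q ≤ ((1 - 1 / (q : ℝ)) ^ #E)⁻¹ * (1 - 1 / q) := by
  have hpos := one_sub_one_div_pos hq
  have hnu : (1 : ℝ) ≤ nu E q := mod_cast one_le_nu hE q
  rw [localFactor]
  gcongr

lemma le_localFactor (E : Finset ℕ) (hq : 2 ≤ q) :
    ((1 - 1 / (q : ℝ)) ^ #E)⁻¹ * (1 - #E / q) ≤ localFactor E q := by
  have hpos := one_sub_one_div_pos hq
  have hnu : (nu E q : ℝ) ≤ #E := mod_cast nu_le_card E q
  rw [localFactor]
  gcongr

lemma one_le_exp_mul_one_sub_div (hn : 2 * n ≤ q) (hy : 0 < y) (hyq : y ≤ q) :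
    1 ≤ Real.exp (2 * n / y) * (1 - n / (q : ℝ)) := by
  have hy0 : (0 : ℝ) < y := mod_cast hy
  have hyq' : (y : ℝ) ≤ q := mod_cast hyq
  have hq0 : (0 : ℝ) < q := hy0.trans_le hyq'
  have hnq : (n : ℝ) / q ≤ 1 / 2 := by
    rw [div_le_div_iff₀ hq0 two_pos]
    exact_mod_cast (by omega : n * 2 ≤ 1 * q)
  have hexp : 1 + 2 * ((n : ℝ) / q) ≤ Real.exp (2 * n / y) :=
    calc 1 + 2 * ((n : ℝ) / q) = 2 * n / q + 1 := by ring
      _ ≤ 2 * n / y + 1 := by gcongr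
      _ ≤ _ := Real.add_one_le_exp _
  have : (0 : ℝ) ≤ n / q := by positivity
  nlinarith

lemma nu_lt_card_iff : nu E q < #E ↔ ∃ a ∈ E, a % q ∈ (E.erase a).image (· % q) := by
  rw [(nu_le_card E q).lt_iff_ne, nu, ne_eq, card_image_iff]
  simp only [Set.InjOn, mem_coe, mem_image, mem_erase]
  grind

lemma card_filter_nu_lt_card_mul_log_le (hy : 0 < y) {P : Finset ℕ}
    (hP : ∀ q ∈ P, q.Prime ∧ y ≤ q) {B : ℝ} (hB1 : 1 ≤ B) (hB : ∀ e ∈ E, (e : ℝ) ≤ B) :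
    #{q ∈ P | nu E q < #E} * Real.log y ≤ #E ^ 2 * Real.log B := by
  have hsub : ({q ∈ P | nu E q < #E} : Finset ℕ) ⊆
      E.biUnion fun a => {q ∈ P | a % q ∈ (E.erase a).image (· % q)} := fun q hq => by
    obtain ⟨hqP, hnu⟩ := mem_filter.1 hq
    obtain ⟨a, ha, hmem⟩ := nu_lt_card_iff.1 hnu
    exact mem_biUnion.2 ⟨a, ha, mem_filter.2 ⟨hqP, hmem⟩⟩
  have hlogB := Real.log_nonneg hB1
  calc _ ≤ (∑ a ∈ E, #{q ∈ P | a % q ∈ (E.erase a).image (· % q)} : ℕ) * Real.log y := by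
        gcongr
        exact (card_le_card hsub).trans card_biUnion_le
    _ = ∑ a ∈ E, #{q ∈ P | a % q ∈ (E.erase a).image (· % q)} * Real.log y := by
        rw [Nat.cast_sum, sum_mul]
    _ ≤ ∑ _a ∈ E, #E * Real.log B := sum_le_sum fun a ha =>
        (card_filter_mod_mem_image_mul_log_le (notMem_erase a E) hy hP (hB a ha)
          fun e he => hB e (mem_of_mem_erase he)).trans (by gcongr; exact erase_subset a E)
    _ = _ := by rw [sum_const, nsmul_eq_mul]; ring

lemma localFactor_le_primorialTuple (hE : E.Nonempty) (hEy : 2 * #E ≤ y) (hq : q.Prime) :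
    localFactor E q ≤ (if y < q ∧ nu E q < #E then Real.exp (2 * #E / y) else 1) *
      localFactor (primorialTuple #E y) q := by
  have hpos := one_sub_one_div_pos hq.two_le
  have hlower := le_localFactor (primorialTuple #E y) hq.two_le
  rw [card_primorialTuple] at hlower
  split_ifs with h
  · calc localFactor E q ≤ ((1 - 1 / (q : ℝ)) ^ #E)⁻¹ * (1 - 1 / q) := localFactor_le hE hq.two_le
      _ ≤ ((1 - 1 / (q : ℝ)) ^ #E)⁻¹ * (Real.exp (2 * #E / y) * (1 - #E / q)) := by
          gcongr
          exact (sub_le_self 1 (by positivity)).trans (one_le_exp_mul_one_sub_div (by omega)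
            (by have := hE.card_pos; omega) h.1.le)
      _ = Real.exp (2 * #E / y) * (((1 - 1 / (q : ℝ)) ^ #E)⁻¹ * (1 - #E / q)) := by ring
      _ ≤ _ := by gcongr
  rw [one_mul]
  rcases le_or_gt q y with hqy | hqy
  · rw [localFactor_primorialTuple hE.card_pos hq hqy]
    exact localFactor_le hE hq.two_le
  · have hnu : nu E q = #E := (nu_le_card E q).eq_of_not_lt fun hlt => h ⟨hqy, hlt⟩
    rwa [localFactor, hnu]

theorem singSeries_le_singSeries_primorialTuple (hE : E.Nonempty) (hy : 2 ≤ y) (hEy : 2 * #E ≤ y)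
    {B : ℝ} (hB1 : 1 ≤ B) (hB : ∀ e ∈ E, (e : ℝ) ≤ B) :
    singSeries E ≤ Real.exp (2 * #E ^ 3 * Real.log B / (y * Real.log y)) *
      singSeries (primorialTuple #E y) := by
  have hlog : 0 < Real.log y := Real.log_pos (mod_cast hy)
  have : (0 : ℝ) < y := by exact_mod_cast (by omega : 0 < y)
  refine singSeries_le_mul_of_partialSeries 0 fun z _ => ?_
  set T : Finset ℕ := {q ∈ {q ∈ primesIco 0 z | y < q} | nu E q < #E}
  have hcard : #T * Real.log y ≤ #E ^ 2 * Real.log B :=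
    card_filter_nu_lt_card_mul_log_le (by omega) (fun q hq => by
      obtain ⟨hq, hyq⟩ := mem_filter.1 hq
      exact ⟨(mem_primesIco.1 hq).2, hyq.le⟩) hB1 hB
  calc partialSeries E z
      ≤ ∏ q ∈ primesIco 0 z, (if y < q ∧ nu E q < #E then Real.exp (2 * #E / y) else 1) *
          localFactor (primorialTuple #E y) q :=
        prod_le_prod (fun q hq => localFactor_nonneg _ (mem_primesIco.1 hq).2.two_le)
          fun q hq => localFactor_le_primorialTuple hE hEy (mem_primesIco.1 hq).2
    _ = Real.exp (#T * (2 * #E / y)) * partialSeries (primorialTuple #E y) z := by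
        rw [prod_mul_distrib, ← prod_filter, ← filter_filter, prod_const, ← Real.exp_nat_mul,
          partialSeries]
    _ ≤ _ := by
        refine mul_le_mul_of_nonneg_right (Real.exp_le_exp.2 ?_) (partialSeries_nonneg _ _)
        calc (#T : ℝ) * (2 * #E / y) = #T * Real.log y * (2 * #E) / (y * Real.log y) := by
              field_simp
          _ ≤ #E ^ 2 * Real.log B * (2 * #E) / (y * Real.log y) := by gcongr
          _ = _ := by ring

end PrimorialTuple

/-! ### Counting tuples of consecutive primes -/

/-- The offsets `p_{n+i} - p_n`, `1 ≤ i ≤ k`, of the `k` primes following `p_n`. -/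
noncomputable def primeOffsets (n k : ℕ) : Finset ℕ :=
  (range k).image fun i => Nat.nth Nat.Prime (n + i + 1) - Nat.nth Nat.Prime n

lemma strictMono_nth_prime : StrictMono (Nat.nth Nat.Prime) :=
  Nat.nth_strictMono Nat.infinite_setOfPred_prime

lemma nth_prime_lt_nth_prime_add (n i : ℕ) :
    Nat.nth Nat.Prime n < Nat.nth Nat.Prime (n + i + 1) :=
  strictMono_nth_prime (by lia)

lemma exists_nth_prime_eq {q : ℕ} (hq : q.Prime) : ∃ l, Nat.nth Nat.Prime l = q :=
  ⟨_, Nat.nth_count hq⟩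

lemma mem_primeOffsets {n k d : ℕ} :
    d ∈ primeOffsets n k ↔ 0 < d ∧ (Nat.nth Nat.Prime n + d).Prime ∧
      Nat.nth Nat.Prime n + d ≤ Nat.nth Nat.Prime (n + k) := by
  simp only [primeOffsets, mem_image, mem_range]
  constructor
  · rintro ⟨i, hi, rfl⟩
    have hlt := nth_prime_lt_nth_prime_add n i
    rw [Nat.add_sub_cancel' hlt.le]
    exact ⟨Nat.sub_pos_of_lt hlt, Nat.prime_nth_prime _,
      strictMono_nth_prime.monotone (by lia)⟩
  · rintro ⟨hd, hprime, hle⟩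
    obtain ⟨l, hl⟩ := exists_nth_prime_eq hprime
    have hnl : n < l := strictMono_nth_prime.lt_iff_lt.1 (by lia)
    have hlk : l ≤ n + k := strictMono_nth_prime.le_iff_le.1 (by lia)
    refine ⟨l - n - 1, by lia, ?_⟩
    rw [show n + (l - n - 1) + 1 = l by lia, hl, Nat.add_sub_cancel_left]

lemma card_primeOffsets (n k : ℕ) : #(primeOffsets n k) = k := by
  rw [primeOffsets, card_image_of_injective, card_range]
  intro a b hab
  have := nth_prime_lt_nth_prime_add n a
  have := nth_prime_lt_nth_prime_add n b
  have := strictMono_nth_prime.injective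
    (show Nat.nth Nat.Prime (n + a + 1) = Nat.nth Nat.Prime (n + b + 1) by lia)
  lia

lemma nth_prime_add_sup_primeOffsets (n k : ℕ) :
    Nat.nth Nat.Prime n + (primeOffsets n k).sup id = Nat.nth Nat.Prime (n + k) := by
  have hle := strictMono_nth_prime.monotone (Nat.le_add_right n k)
  suffices h : (primeOffsets n k).sup id = Nat.nth Nat.Prime (n + k) - Nat.nth Nat.Prime n by lia
  refine le_antisymm (Finset.sup_le fun d hd => ?_) ?_
  · have := (mem_primeOffsets.1 hd).2.2
    simp only [id]
    lia
  · rcases Nat.eq_zero_or_pos k with rfl | hk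
    · simp
    · have hlt := strictMono_nth_prime (Nat.lt_add_of_pos_right (n := n) hk)
      refine le_sup (f := id) (mem_primeOffsets.2 ⟨Nat.sub_pos_of_lt hlt, ?_, ?_⟩) <;>
        rw [Nat.add_sub_cancel' hle]
      exact Nat.prime_nth_prime _

lemma Ncham_eq_ncard_primeOffsets (x : ℝ) (D : Finset ℕ) :
    Ncham x D = {n | Nat.nth Nat.Prime (n + #D) ≤ ⌊x⌋₊ ∧ primeOffsets n #D = D}.ncard := by
  simp only [Nat.le_floor_iff' (Nat.prime_nth_prime _).ne_zero]
  rfl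

/-- The set counted by `primePi x E`. -/
noncomputable def primeShifts (x : ℝ) (E : Finset ℕ) : Finset ℕ :=
  {m ∈ Icc 1 ⌊x⌋₊ | ∀ d ∈ E, (m + d).Prime}

lemma primePi_eq_card_primeShifts (x : ℝ) (E : Finset ℕ) : primePi x E = #(primeShifts x E) := by
  rw [primePi, ← Set.ncard_coe_finset]
  congr 1
  ext m
  simp only [Set.mem_ofPred_eq, primeShifts, coe_filter, mem_Icc, and_assoc]
  exact and_congr_right fun hm => and_congr_left fun _ => (Nat.le_floor_iff' hm.ne').symm

lemma primeShifts_insert (x : ℝ) (E : Finset ℕ) (j : ℕ) :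
    primeShifts x (insert j E) = {m ∈ primeShifts x E | (m + j).Prime} := by
  simp only [primeShifts, filter_filter, mem_insert, forall_eq_or_imp]
  exact filter_congr fun _ _ => and_comm

/-- The positions strictly between `0` and `max D` that do not belong to `D`. -/
def gapSet (D : Finset ℕ) : Finset ℕ := range (D.sup id) \ insert 0 D

/-- The primes `m` for which the next `#D` primes are the `m + d`, `d ∈ D`, and are at most `x`. -/
noncomputable def consecutiveShifts (x : ℝ) (D : Finset ℕ) : Finset ℕ :=
  {m ∈ primeShifts x (insert 0 D) | m + D.sup id ≤ ⌊x⌋₊ ∧ ∀ j ∈ gapSet D, ¬ (m + j).Prime}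

lemma mem_consecutiveShifts {x : ℝ} {D : Finset ℕ} {m : ℕ} :
    m ∈ consecutiveShifts x D ↔ (∀ d ∈ insert 0 D, (m + d).Prime) ∧ m + D.sup id ≤ ⌊x⌋₊ ∧
      ∀ j ∈ gapSet D, ¬ (m + j).Prime := by
  simp only [consecutiveShifts, primeShifts, mem_filter, mem_Icc]
  refine ⟨fun ⟨⟨_, hprime⟩, h⟩ => ⟨hprime, h⟩, fun ⟨hprime, hsup, h⟩ => ⟨⟨?_, hprime⟩, hsup, h⟩⟩
  exact ⟨(hprime 0 (mem_insert_self _ _)).pos, (Nat.le_add_right _ _).trans hsup⟩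

lemma sup_id_mem_insert_zero (D : Finset ℕ) : D.sup id ∈ insert 0 D := by
  rcases D.eq_empty_or_nonempty with rfl | hD
  · simp
  · obtain ⟨d, hd, hsup⟩ := exists_mem_eq_sup D hD id
    exact mem_insert_of_mem (hsup ▸ hd)

section
variable {x : ℝ} {D : Finset ℕ}

lemma mem_iff_of_mem_consecutiveShifts (h0 : 0 ∉ D) {m d : ℕ} (hm : m ∈ consecutiveShifts x D) :
    d ∈ D ↔ 0 < d ∧ (m + d).Prime ∧ d ≤ D.sup id := by
  obtain ⟨hprime, -, hgap⟩ := mem_consecutiveShifts.1 hm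
  refine ⟨fun hd => ⟨Nat.pos_of_ne_zero (ne_of_mem_of_not_mem hd h0),
    hprime d (mem_insert_of_mem hd), le_sup (f := id) hd⟩, fun ⟨hd0, hd, hle⟩ => ?_⟩
  by_contra hdD
  have hsup := sup_id_mem_insert_zero D
  refine hgap d (mem_sdiff.2 ⟨mem_range.2 (lt_of_le_of_ne hle ?_), ?_⟩) hd
  · rintro rfl
    exact (mem_insert.1 hsup).elim hd0.ne' hdD
  · exact fun h => (mem_insert.1 h).elim hd0.ne' hdD

lemma Ncham_eq_card_consecutiveShifts (h0 : 0 ∉ D) : Ncham x D = #(consecutiveShifts x D) := by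
  rw [Ncham_eq_ncard_primeOffsets, ← Set.ncard_coe_finset (consecutiveShifts x D),
    ← Set.ncard_image_of_injective _ strictMono_nth_prime.injective]
  congr 1
  ext m
  simp only [Set.mem_image, Set.mem_ofPred_eq, mem_coe]
  constructor
  · rintro ⟨n, ⟨hle, hD⟩, rfl⟩
    have hsup := nth_prime_add_sup_primeOffsets n #D
    rw [hD] at hsup
    refine mem_consecutiveShifts.2 ⟨fun d hd => ?_, hsup.trans_le hle, fun j hj hprime => ?_⟩
    · obtain rfl | hd := mem_insert.1 hd
      · exact Nat.prime_nth_prime n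
      · exact (mem_primeOffsets.1 (hD.symm ▸ hd)).2.1
    · simp only [gapSet, mem_sdiff, mem_range, mem_insert, not_or] at hj
      exact hj.2.2 (hD ▸ mem_primeOffsets.2 ⟨Nat.pos_of_ne_zero hj.2.1, hprime, by lia⟩)
  · intro hm
    obtain ⟨hprime, hsup, -⟩ := mem_consecutiveShifts.1 hm
    obtain ⟨n, rfl⟩ := exists_nth_prime_eq (hprime 0 (mem_insert_self _ _))
    obtain ⟨l, hl⟩ := exists_nth_prime_eq (hprime _ (sup_id_mem_insert_zero D))
    obtain ⟨k, rfl⟩ := Nat.exists_eq_add_of_le (strictMono_nth_prime.le_iff_le.1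
      (hl ▸ Nat.le_add_right _ _ : Nat.nth Nat.Prime n ≤ Nat.nth Nat.Prime l))
    have hD : primeOffsets n k = D := by
      ext d
      rw [mem_primeOffsets, mem_iff_of_mem_consecutiveShifts h0 hm, hl]
      exact and_congr_right fun _ => and_congr_right fun _ => Nat.add_le_add_iff_left
    obtain rfl : #D = k := by rw [← hD, card_primeOffsets]
    exact ⟨n, ⟨hl ▸ hsup, hD⟩, rfl⟩

lemma Ncham_le_primePi (h0 : 0 ∉ D) : Ncham x D ≤ primePi x (insert 0 D) := by
  rw [Ncham_eq_card_consecutiveShifts h0, primePi_eq_card_primeShifts]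
  exact card_filter_le _ _

lemma primePi_insert_zero_le (h0 : 0 ∉ D) :
    primePi x (insert 0 D) ≤
      Ncham x D + ∑ j ∈ gapSet D, primePi x (insert j (insert 0 D)) + D.sup id := by
  simp only [Ncham_eq_card_consecutiveShifts h0, primePi_eq_card_primeShifts]
  have hcover : primeShifts x (insert 0 D) ⊆ (consecutiveShifts x D ∪
      (gapSet D).biUnion fun j => primeShifts x (insert j (insert 0 D))) ∪
        Ioc (⌊x⌋₊ - D.sup id) ⌊x⌋₊ := by
    intro m hm
    obtain ⟨hm0, hmx⟩ := mem_Icc.1 (mem_filter.1 hm).1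
    simp only [mem_union, mem_biUnion, mem_Ioc, primeShifts_insert x (insert 0 D),
      consecutiveShifts, mem_filter, hm, true_and]
    by_cases hprime : ∃ j ∈ gapSet D, (m + j).Prime
    · exact Or.inl (Or.inr hprime)
    · push Not at hprime
      by_cases hsup : m + D.sup id ≤ ⌊x⌋₊
      · exact Or.inl (Or.inl ⟨hsup, hprime⟩)
      · exact Or.inr ⟨by lia, hmx⟩
  calc #(primeShifts x (insert 0 D)) ≤ _ := card_le_card hcover
    _ ≤ _ := card_union_le _ _
    _ ≤ _ := Nat.add_le_add ((card_union_le _ _).trans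
      (Nat.add_le_add_left card_biUnion_le _)) (by rw [Nat.card_Ioc]; lia)

lemma sum_primePi_insert (E J : Finset ℕ) :
    ∑ j ∈ J, primePi x (insert j E) = ∑ m ∈ primeShifts x E, #{j ∈ J | (m + j).Prime} := by
  simp only [primePi_eq_card_primeShifts, primeShifts_insert]
  exact (sum_card_bipartiteAbove_eq_sum_card_bipartiteBelow
    fun (m j : ℕ) => (m + j).Prime).symm

lemma sum_sum_primePi_insert_insert (E J : Finset ℕ) :
    ∑ j ∈ J, ∑ i ∈ J.erase j, primePi x (insert i (insert j E)) =
      ∑ m ∈ primeShifts x E,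
        #{j ∈ J | (m + j).Prime} * (#{j ∈ J | (m + j).Prime} - 1) := by
  simp only [sum_primePi_insert, primeShifts_insert x E]
  rw [sum_comm' (t' := primeShifts x E) (s' := fun m => {j ∈ J | (m + j).Prime})
    (by simp only [mem_filter]; tauto)]
  refine sum_congr rfl fun m _ => ?_
  rw [← smul_eq_mul, ← sum_const]
  refine sum_congr rfl fun j hj => ?_
  rw [filter_erase, card_erase_of_mem hj]

/-- Bonferroni's inequality, for the events that `m + j` is prime with `j ∈ J`. -/
lemma Ncham_add_sum_primePi_le (h0 : 0 ∉ D) {J : Finset ℕ} (hJ : J ⊆ gapSet D) :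
    Ncham x D + ∑ j ∈ J, primePi x (insert j (insert 0 D)) ≤ primePi x (insert 0 D) +
      ∑ j ∈ J, ∑ i ∈ J.erase j, primePi x (insert i (insert j (insert 0 D))) := by
  rw [sum_primePi_insert, sum_sum_primePi_insert_insert, Ncham_eq_card_consecutiveShifts h0,
    primePi_eq_card_primeShifts, consecutiveShifts, card_filter, card_eq_sum_ones (primeShifts x _),
    ← sum_add_distrib, ← sum_add_distrib]
  refine sum_le_sum fun m _ => ?_
  split_ifs with h
  · rw [filter_eq_empty_iff.2 fun j hj => h.2 j (hJ hj)]
    simp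
  · generalize #{j ∈ J | (m + j).Prime} = w
    rcases w with _ | w
    · simp
    · rw [Nat.add_sub_cancel]
      nlinarith

lemma card_filter_consecutiveShifts_le (h0 : 0 ∉ D) (t : ℕ) :
    #{m ∈ consecutiveShifts x D | t ∈ Ioc m (m + D.sup id)} ≤ #D := by
  set R := {m ∈ consecutiveShifts x D | t ∈ Ioc m (m + D.sup id)}
  rcases R.eq_empty_or_nonempty with he | hne
  · simp [he]
  have hmin := mem_filter.1 (R.min'_mem hne)
  have hoffset : R.image (· - R.min' hne) ⊆ (insert 0 D).erase (D.sup id) := by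
    intro d hd
    obtain ⟨m, hm, rfl⟩ := mem_image.1 hd
    have hle : R.min' hne ≤ m := R.min'_le m hm
    have hmR := mem_filter.1 hm
    have hprime := (mem_consecutiveShifts.1 hmR.1).1 0 (mem_insert_self _ _)
    have htm := mem_Ioc.1 hmR.2
    have htmin := mem_Ioc.1 hmin.2
    rw [mem_erase, mem_insert, mem_iff_of_mem_consecutiveShifts h0 hmin.1,
      Nat.add_sub_cancel' hle]
    exact ⟨by lia, (Nat.eq_zero_or_pos _).imp_right fun h => ⟨h, hprime, by lia⟩⟩
  have hinj : Set.InjOn (· - R.min' hne) (R : Set ℕ) := by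
    intro a ha b hb hab
    have := R.min'_le a ha
    have := R.min'_le b hb
    simp only at hab
    lia
  have hcard := card_le_card hoffset
  rwa [card_image_of_injOn hinj, card_erase_of_mem (sup_id_mem_insert_zero D),
    card_insert_of_notMem h0] at hcard

lemma Ncham_mul_sup_le (h0 : 0 ∉ D) : Ncham x D * D.sup id ≤ #D * ⌊x⌋₊ := by
  rw [Ncham_eq_card_consecutiveShifts h0]
  calc #(consecutiveShifts x D) * D.sup id
      = ∑ m ∈ consecutiveShifts x D, #{t ∈ Icc 1 ⌊x⌋₊ | t ∈ Ioc m (m + D.sup id)} := by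
        rw [← smul_eq_mul, ← sum_const]
        refine sum_congr rfl fun m hm => ?_
        have hmx := (mem_consecutiveShifts.1 hm).2.1
        have : {t ∈ Icc 1 ⌊x⌋₊ | t ∈ Ioc m (m + D.sup id)} = Ioc m (m + D.sup id) := by
          ext t
          simp only [mem_filter, mem_Icc, mem_Ioc]
          lia
        rw [this, Nat.card_Ioc, Nat.add_sub_cancel_left]
    _ = ∑ t ∈ Icc 1 ⌊x⌋₊, #{m ∈ consecutiveShifts x D | t ∈ Ioc m (m + D.sup id)} :=
        sum_card_bipartiteAbove_eq_sum_card_bipartiteBelow _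
    _ ≤ #(Icc 1 ⌊x⌋₊) • #D := sum_le_card_nsmul _ _ _ fun t _ =>
        card_filter_consecutiveShifts_le h0 t
    _ = #D * ⌊x⌋₊ := by rw [Nat.card_Icc, Nat.add_sub_cancel, smul_eq_mul, mul_comm]

end

/-! ### Admissible offsets -/

lemma two_le_of_isAdmissible {D : Finset ℕ} (h : IsAdmissible (insert 0 D)) (h0 : 0 ∉ D) {d : ℕ}
    (hd : d ∈ D) : 2 ≤ d := by
  by_contra! hd2
  have hd1 : d = 1 := by have := ne_of_mem_of_not_mem hd h0; lia
  have hpair : nu {0, 1} 2 ≤ nu (insert 0 D) 2 :=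
    card_le_card (image_subset_image (by simp [insert_subset_iff, ← hd1, hd]))
  exact ((h 2 Nat.prime_two).trans_le (by simpa [nu] using hpair)).false

/-- The sets `D` of `n` positive integers at most `B` for which `{0} ∪ D` is admissible: those to
which a Hardy–Littlewood asymptotic for `{0} ∪ D` applies. -/
structure IsAdmissibleOffsets (n : ℕ) (B : ℝ) (D : Finset ℕ) : Prop where
  card_eq : #D = n
  zero_notMem : 0 ∉ D
  sup_le : ↑(D.sup id) ≤ B
  isAdmissible : IsAdmissible (insert 0 D)

namespace IsAdmissibleOffsets

variable {n j : ℕ} {B : ℝ} {D : Finset ℕ}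

lemma card_insert_zero (v : IsAdmissibleOffsets n B D) : #(insert 0 D) = n + 1 := by
  rw [card_insert_of_notMem v.zero_notMem, v.card_eq]

lemma pos (v : IsAdmissibleOffsets n B D) {d : ℕ} (hd : d ∈ D) : 0 < d :=
  Nat.pos_of_ne_zero (ne_of_mem_of_not_mem hd v.zero_notMem)

lemma le_of_mem_insert_zero (v : IsAdmissibleOffsets n B D) :
    ∀ e ∈ insert 0 D, (e : ℝ) ≤ B := by
  intro e he
  have hle : e ≤ D.sup id := by
    obtain rfl | he := mem_insert.1 he
    exacts [Nat.zero_le _, le_sup (f := id) he]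
  exact (Nat.cast_le.2 hle).trans v.sup_le

lemma insert (v : IsAdmissibleOffsets n B D) (hj : j ∉ insert 0 D) (hjB : (j : ℝ) ≤ B)
    (h : IsAdmissible (insert 0 (insert j D))) : IsAdmissibleOffsets (n + 1) B (insert j D) where
  card_eq := by rw [card_insert_of_notMem fun h => hj (mem_insert_of_mem h), v.card_eq]
  zero_notMem h0 := (mem_insert.1 h0).elim (fun h => hj (h ▸ mem_insert_self _ _)) v.zero_notMem
  sup_le := by
    rw [sup_insert, id, Nat.cast_max]
    exact max_le hjB v.sup_le
  isAdmissible := h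

lemma singSeriesMin_le (v : IsAdmissibleOffsets n B D) :
    singSeriesMin (n + 1) ≤ singSeries (Insert.insert 0 D) :=
  v.card_insert_zero ▸ singSeriesMin_le_singSeries v.isAdmissible

lemma singSeries_pos (v : IsAdmissibleOffsets n B D) : 0 < singSeries (Insert.insert 0 D) :=
  (singSeriesMin_pos _).trans_le v.singSeriesMin_le

end IsAdmissibleOffsets

/-! ### Counts of consecutive tuples from Hardy–Littlewood asymptotics -/

/-- The sum of singular series which, times `x / (log x)^{#D+2}`, predicts the number of prime
tuples with offsets `{0} ∪ D` that have a further prime in between. -/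
noncomputable def gapSum (D : Finset ℕ) : ℝ :=
  ∑ j ∈ gapSet D, singSeries (insert j (insert 0 D))

lemma gapSet_subset {D : Finset ℕ} {H : ℕ} (h : D.sup id ≤ H) :
    gapSet D ⊆ Icc 1 H \ insert 0 D := by
  intro j hj
  simp only [gapSet, mem_sdiff, mem_range, mem_insert, mem_Icc] at hj ⊢
  lia

lemma gapSum_nonneg (D : Finset ℕ) : 0 ≤ gapSum D :=
  sum_nonneg fun _ _ => singSeries_nonneg _

lemma card_gapSet_le (D : Finset ℕ) : #(gapSet D) ≤ D.sup id :=
  (card_le_card sdiff_subset).trans_eq (card_range _)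

/-- Constant in the mean value of the singular series of a `k + 1`-set with one element adjoined,
the elements being at most `(log x)^{k+2}`. -/
noncomputable def gapConst (k : ℕ) : ℝ := meanConst (k + 1) (16 * (k + 2))

/-- Constant bounding the contribution of pairs of further primes; `C` comes from the sieve. -/
noncomputable def pairConst (k : ℕ) (C : ℝ) : ℝ :=
  C * (meanConst (k + 1 + 1) (16 * (k + 2)) * meanConst (k + 1) (16 * (k + 2)))

lemma gapConst_pos (k : ℕ) : 0 < gapConst k := meanConst_pos _ _

lemma sum_sum_erase_le {E J : Finset ℕ} {H : ℕ} {f : ℕ → ℕ → ℝ} (hf : ∀ j i, 0 ≤ f j i)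
    (hJ : J ⊆ Icc 1 H \ E) :
    ∑ j ∈ J, ∑ i ∈ J.erase j, f j i ≤
      ∑ j ∈ Icc 1 H \ E, ∑ i ∈ Icc 1 H \ insert j E, f j i := by
  refine (sum_le_sum fun j _ => sum_le_sum_of_subset_of_nonneg (fun i hi => ?_) fun _ _ _ =>
    hf _ _).trans (sum_le_sum_of_subset_of_nonneg hJ fun _ _ _ => sum_nonneg fun _ _ => hf _ _)
  have hiJ := mem_sdiff.1 (hJ (mem_of_mem_erase hi))
  exact mem_sdiff.2 ⟨hiJ.1, fun h => (mem_insert.1 h).elim (ne_of_mem_erase hi) hiJ.2⟩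

/-- The information on prime tuples used for a single `x`. Here `L` stands for `log x`, `U` for
`x / (log x)^{k+1}` and `y` for a sifting level between `(log log x) / 16` and a small multiple of
`log log x`; `δ` and `ε` bound the relative errors in the Hardy–Littlewood asymptotics for `k + 1`
and `k + 2` points, and `C` is the constant of the upper bound sieve for `k + 3` points. -/
structure CountingRegime (k : ℕ) (x U L δ ε C : ℝ) (y : ℕ) : Prop where
  k_pos : 0 < k
  U_pos : 0 < U
  δ_pos : 0 < δ
  ε_pos : 0 < ε
  ε_le_half : ε ≤ 1 / 2
  C_pos : 0 < C
  eq_U_mul : x = U * L ^ (k + 1)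
  three_le_y : 3 ≤ y
  sq_le_y : 4 * (k + 1) ^ 2 ≤ y + 1
  mul_four_pow_le_sqrt : (k : ℝ) * 4 ^ y ≤ √L
  log_le : Real.log L ≤ 16 * y
  abs_primePi_sub_le : ∀ D, IsAdmissibleOffsets k (L ^ (k + 1)) D →
    |primePi x (insert 0 D) - singSeries (insert 0 D) * U| ≤ δ * (singSeries (insert 0 D) * U)
  abs_primePi_sub_le_succ : ∀ D, IsAdmissibleOffsets (k + 1) (L ^ (k + 1)) D →
    |primePi x (insert 0 D) - singSeries (insert 0 D) * (U / L)| ≤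
      ε * (singSeries (insert 0 D) * (U / L))
  primePi_le : ∀ E, #E = k + 3 → primePi x E ≤ C * singSeries E * (U / L ^ 2) + (k + 3)
  error_le : (k + 3) * (L ^ (k + 1)) ^ 2 ≤ δ * (singSeriesMin (k + 1) * U)

namespace CountingRegime

variable {k : ℕ} {x U L δ ε C : ℝ} {y : ℕ} {D : Finset ℕ}

lemma four_pow_le_sqrt (c : CountingRegime k x U L δ ε C y) : (4 : ℝ) ^ y ≤ √L :=
  (le_mul_of_one_le_left (by positivity) (Nat.one_le_cast.2 c.k_pos)).trans c.mul_four_pow_le_sqrt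

lemma le_sqrt (c : CountingRegime k x U L δ ε C y) : 64 ≤ √L :=
  calc (64 : ℝ) = 4 ^ 3 := by norm_num
    _ ≤ 4 ^ y := pow_le_pow_right₀ (by norm_num) c.three_le_y
    _ ≤ √L := c.four_pow_le_sqrt

lemma le_L (c : CountingRegime k x U L δ ε C y) : 64 ≤ L := by
  have h64 := c.le_sqrt
  nlinarith [Real.sq_sqrt (Real.sqrt_pos.1 (by linarith : 0 < √L)).le]

lemma sqrt_le (c : CountingRegime k x U L δ ε C y) : √L ≤ L :=
  Real.sqrt_le_iff.2 ⟨by linarith [c.le_L], by nlinarith [c.le_L]⟩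

lemma le_pow (c : CountingRegime k x U L δ ε C y) : L ≤ L ^ (k + 1) :=
  le_self_pow₀ (by linarith [c.le_L]) (by lia)

lemma pairConst_pos (c : CountingRegime k x U L δ ε C y) : 0 < pairConst k C :=
  mul_pos c.C_pos (mul_pos (meanConst_pos _ _) (meanConst_pos _ _))

lemma error_le_of_isAdmissibleOffsets (c : CountingRegime k x U L δ ε C y)
    (v : IsAdmissibleOffsets k (L ^ (k + 1)) D) :
    (k + 3) * (L ^ (k + 1)) ^ 2 ≤ δ * (singSeries (insert 0 D) * U) :=
  c.error_le.trans (mul_le_mul_of_nonneg_left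
    (mul_le_mul_of_nonneg_right v.singSeriesMin_le c.U_pos.le) c.δ_pos.le)

lemma primePi_insert_le (c : CountingRegime k x U L δ ε C y)
    (v : IsAdmissibleOffsets k (L ^ (k + 1)) D) {j : ℕ} (hj : j ∉ insert 0 D)
    (hjL : (j : ℝ) ≤ L ^ (k + 1)) :
    (primePi x (insert j (insert 0 D)) : ℝ) ≤
      (1 + ε) * (U / L) * singSeries (insert j (insert 0 D)) + (k + 2) := by
  by_cases h : IsAdmissible (insert j (insert 0 D))
  · rw [insert_comm] at h ⊢
    linarith [(abs_le.1 (c.abs_primePi_sub_le_succ _ (v.insert hj hjL h))).2,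
      (Nat.cast_nonneg k : (0 : ℝ) ≤ k)]
  · have hcard := primePi_le_card_of_not_isAdmissible h x
    rw [card_insert_of_notMem hj, v.card_insert_zero] at hcard
    rw [singSeries_eq_zero_of_not_isAdmissible h, mul_zero, zero_add]
    exact_mod_cast hcard

lemma le_primePi_insert (c : CountingRegime k x U L δ ε C y)
    (v : IsAdmissibleOffsets k (L ^ (k + 1)) D) {j : ℕ} (hj : j ∉ insert 0 D)
    (hjL : (j : ℝ) ≤ L ^ (k + 1)) :
    (1 - ε) * (U / L) * singSeries (insert j (insert 0 D)) ≤ primePi x (insert j (insert 0 D)) := by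
  by_cases h : IsAdmissible (insert j (insert 0 D))
  · rw [insert_comm] at h ⊢
    linarith [(abs_le.1 (c.abs_primePi_sub_le_succ _ (v.insert hj hjL h))).1]
  · rw [singSeries_eq_zero_of_not_isAdmissible h, mul_zero]
    positivity

lemma log_pow_le (c : CountingRegime k x U L δ ε C y) :
    Real.log (L ^ (k + 2)) ≤ 16 * (k + 2) * y := by
  rw [Real.log_pow]
  push_cast
  nlinarith [c.log_le, (Nat.cast_nonneg k : (0 : ℝ) ≤ k)]

lemma le_pow_of_mem_insert_zero (c : CountingRegime k x U L δ ε C y)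
    (v : IsAdmissibleOffsets k (L ^ (k + 1)) D) : ∀ e ∈ insert 0 D, (e : ℝ) ≤ L ^ (k + 2) :=
  fun e he => (v.le_of_mem_insert_zero e he).trans
    (pow_le_pow_right₀ (by linarith [c.le_L]) (by lia))

lemma gapSum_le (c : CountingRegime k x U L δ ε C y) (v : IsAdmissibleOffsets k (L ^ (k + 1)) D)
    {H : ℕ} (hDH : D.sup id ≤ H) (hH : 4 ^ y ≤ H) (hHL : (H : ℝ) ≤ L ^ (k + 2)) :
    gapSum D ≤ gapConst k * H * singSeries (insert 0 D) := by
  have hmean := sum_singSeries_insert_le c.three_le_y hH hHL (c.le_pow_of_mem_insert_zero v)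
    c.log_pow_le
  rw [v.card_insert_zero] at hmean
  exact (sum_le_sum_of_subset_of_nonneg (gapSet_subset hDH)
    fun _ _ _ => singSeries_nonneg _).trans hmean

lemma sum_sum_singSeries_le (c : CountingRegime k x U L δ ε C y)
    (v : IsAdmissibleOffsets k (L ^ (k + 1)) D) {H : ℕ} (hH : 4 ^ y ≤ H)
    (hHL : (H : ℝ) ≤ L ^ (k + 2)) {J : Finset ℕ} (hJ : J ⊆ Icc 1 H \ insert 0 D) :
    C * ∑ j ∈ J, ∑ i ∈ J.erase j, singSeries (insert i (insert j (insert 0 D))) ≤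
      pairConst k C * H ^ 2 * singSeries (insert 0 D) := by
  have hmean := sum_sum_singSeries_insert_insert_le c.three_le_y hH hHL
    (c.le_pow_of_mem_insert_zero v) c.log_pow_le
  rw [v.card_insert_zero] at hmean
  have hsum := (sum_sum_erase_le
    (f := fun j i => singSeries (insert i (insert j (insert 0 D))))
    (fun _ _ => singSeries_nonneg _) hJ).trans hmean
  calc C * _ ≤ C * _ := mul_le_mul_of_nonneg_left hsum c.C_pos.le
    _ = pairConst k C * H ^ 2 * singSeries (insert 0 D) := by rw [pairConst]; ring

lemma sum_sum_error_le (c : CountingRegime k x U L δ ε C y)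
    (v : IsAdmissibleOffsets k (L ^ (k + 1)) D) {H : ℕ} (hHL : (H : ℝ) ≤ L ^ (k + 1))
    {J : Finset ℕ} (hJ : J ⊆ Icc 1 H) :
    ∑ j ∈ J, ∑ _i ∈ J.erase j, ((k : ℝ) + 3) ≤ δ * (singSeries (insert 0 D) * U) := by
  have hJH : (#J : ℝ) ≤ H := by simpa using Nat.cast_le (α := ℝ).2 (card_le_card hJ)
  calc ∑ j ∈ J, ∑ _i ∈ J.erase j, ((k : ℝ) + 3) ≤ ∑ _j ∈ J, ∑ _i ∈ J, ((k : ℝ) + 3) :=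
        sum_le_sum fun j _ => sum_le_sum_of_subset_of_nonneg (erase_subset j J)
          fun _ _ _ => by positivity
    _ = (k + 3) * (#J : ℝ) ^ 2 := by simp only [sum_const, nsmul_eq_mul]; ring
    _ ≤ (k + 3) * (L ^ (k + 1)) ^ 2 := by
        have := hJH.trans hHL
        gcongr
    _ ≤ δ * (singSeries (insert 0 D) * U) := c.error_le_of_isAdmissibleOffsets v

lemma sum_sum_primePi_le (c : CountingRegime k x U L δ ε C y)
    (v : IsAdmissibleOffsets k (L ^ (k + 1)) D) {H : ℕ} (hH : 4 ^ y ≤ H)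
    (hHL : (H : ℝ) ≤ L ^ (k + 1)) {J : Finset ℕ} (hJ : J ⊆ Icc 1 H \ insert 0 D) :
    ∑ j ∈ J, ∑ i ∈ J.erase j, (primePi x (insert i (insert j (insert 0 D))) : ℝ) ≤
      singSeries (insert 0 D) * U * (pairConst k C * (H / L) ^ 2 + δ) := by
  have hL := c.le_L
  have hpoint : ∀ j ∈ J, ∀ i ∈ J.erase j, (primePi x (insert i (insert j (insert 0 D))) : ℝ) ≤
      U / L ^ 2 * (C * singSeries (insert i (insert j (insert 0 D)))) + (k + 3) := by
    intro j hj i hi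
    have hiJ := (mem_sdiff.1 (hJ (mem_of_mem_erase hi))).2
    have hcard : #(insert i (insert j (insert 0 D))) = k + 3 := by
      rw [card_insert_of_notMem fun h => (mem_insert.1 h).elim (ne_of_mem_erase hi) hiJ,
        card_insert_of_notMem (mem_sdiff.1 (hJ hj)).2, v.card_insert_zero]
    linarith [c.primePi_le _ hcard]
  have hmain := mul_le_mul_of_nonneg_left
    (c.sum_sum_singSeries_le v hH (hHL.trans (pow_le_pow_right₀ (by linarith) (by lia))) hJ)
    (div_nonneg c.U_pos.le (sq_nonneg L))
  have herror := c.sum_sum_error_le v hHL (hJ.trans sdiff_subset)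
  calc _ ≤ _ := sum_le_sum fun j hj => sum_le_sum (hpoint j hj)
    _ = U / L ^ 2 * (C * ∑ j ∈ J, ∑ i ∈ J.erase j, singSeries (insert i (insert j (insert 0 D)))) +
          ∑ j ∈ J, ∑ _i ∈ J.erase j, ((k : ℝ) + 3) := by
        simp only [sum_add_distrib, mul_sum]
    _ ≤ U / L ^ 2 * (pairConst k C * H ^ 2 * singSeries (insert 0 D)) +
          δ * (singSeries (insert 0 D) * U) := add_le_add hmain herror
    _ = singSeries (insert 0 D) * U * (pairConst k C * (H / L) ^ 2 + δ) := by ring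

lemma sum_primePi_gapSet_le (c : CountingRegime k x U L δ ε C y)
    (v : IsAdmissibleOffsets k (L ^ (k + 1)) D) :
    ∑ j ∈ gapSet D, (primePi x (insert j (insert 0 D)) : ℝ) ≤
      (1 + ε) * (U / L) * gapSum D + (k + 2) * D.sup id :=
  calc _ ≤ ∑ j ∈ gapSet D, ((1 + ε) * (U / L) * singSeries (insert j (insert 0 D)) + (k + 2)) :=
        sum_le_sum fun j hj => by
          obtain ⟨hjI, hjD⟩ := mem_sdiff.1 (gapSet_subset le_rfl hj)
          exact c.primePi_insert_le v hjD
            ((Nat.cast_le.2 (mem_Icc.1 hjI).2).trans v.sup_le)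
    _ = (1 + ε) * (U / L) * gapSum D + (k + 2) * #(gapSet D) := by
        rw [sum_add_distrib, gapSum, mul_sum, sum_const, nsmul_eq_mul, mul_comm (#_ : ℝ)]
    _ ≤ _ := by
        have := card_gapSet_le D
        gcongr

lemma le_Ncham (c : CountingRegime k x U L δ ε C y) (v : IsAdmissibleOffsets k (L ^ (k + 1)) D) :
    singSeries (insert 0 D) * U * (1 - 2 * δ) - (1 + ε) * (U / L) * gapSum D ≤ Ncham x D := by
  have hunion : (primePi x (insert 0 D) : ℝ) ≤
      Ncham x D + ∑ j ∈ gapSet D, (primePi x (insert j (insert 0 D)) : ℝ) + D.sup id :=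
    mod_cast primePi_insert_zero_le v.zero_notMem
  have hmain := (abs_le.1 (c.abs_primePi_sub_le D v)).1
  have hgaps := c.sum_primePi_gapSet_le v
  have herror : (k + 3) * (D.sup id : ℕ) ≤ δ * (singSeries (insert 0 D) * U) :=
    calc (k + 3) * ((D.sup id : ℕ) : ℝ) ≤ (k + 3) * (L ^ (k + 1)) ^ 2 := by
          gcongr
          exact v.sup_le.trans (le_self_pow₀ (by linarith [c.le_L, c.le_pow]) two_ne_zero)
      _ ≤ _ := c.error_le_of_isAdmissibleOffsets v
  linarith

lemma Ncham_le (c : CountingRegime k x U L δ ε C y) (v : IsAdmissibleOffsets k (L ^ (k + 1)) D)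
    {H : ℕ} (hH : 4 ^ y ≤ H) (hHL : (H : ℝ) ≤ L ^ (k + 1)) {J : Finset ℕ} (hJ : J ⊆ gapSet D)
    (hJH : ∀ j ∈ J, j ≤ H) :
    (Ncham x D : ℝ) ≤ singSeries (insert 0 D) * U * (1 + 2 * δ + pairConst k C * (H / L) ^ 2) -
      (1 - ε) * (U / L) * ∑ j ∈ J, singSeries (insert j (insert 0 D)) := by
  have hbonferroni : (Ncham x D : ℝ) + ∑ j ∈ J, (primePi x (insert j (insert 0 D)) : ℝ) ≤
      primePi x (insert 0 D) +
        ∑ j ∈ J, ∑ i ∈ J.erase j, (primePi x (insert i (insert j (insert 0 D))) : ℝ) :=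
    mod_cast Ncham_add_sum_primePi_le v.zero_notMem hJ
  have hJD : J ⊆ Icc 1 H \ insert 0 D := fun j hj => by
    obtain ⟨hjI, hjD⟩ := mem_sdiff.1 (gapSet_subset le_rfl (hJ hj))
    exact mem_sdiff.2 ⟨mem_Icc.2 ⟨(mem_Icc.1 hjI).1, hJH j hj⟩, hjD⟩
  have hmain := (abs_le.1 (c.abs_primePi_sub_le D v)).2
  have hpairs := c.sum_sum_primePi_le v hH hHL hJD
  have hsingles : (1 - ε) * (U / L) * ∑ j ∈ J, singSeries (insert j (insert 0 D)) ≤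
      ∑ j ∈ J, (primePi x (insert j (insert 0 D)) : ℝ) := by
    rw [mul_sum]
    exact sum_le_sum fun j hj => c.le_primePi_insert v (mem_sdiff.1 (hJD hj)).2
      ((Nat.cast_le.2 (hJH j hj)).trans hHL)
  linarith

lemma mul_one_sub_le_Ncham (c : CountingRegime k x U L δ ε C y)
    (v : IsAdmissibleOffsets k (L ^ (k + 1)) D) :
    singSeries (insert 0 D) * U * (1 - 2 * δ - 2 * gapConst k * (D.sup id + √L) / L) ≤
      Ncham x D := by
  have hL := c.le_L
  have hU := c.U_pos
  have hH : ((D.sup id + 4 ^ y : ℕ) : ℝ) ≤ D.sup id + √L := by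
    push_cast
    exact add_le_add_right c.four_pow_le_sqrt _
  have hHL : ((D.sup id + 4 ^ y : ℕ) : ℝ) ≤ L ^ (k + 2) := by
    rw [pow_succ]
    nlinarith [hH, v.sup_le, c.sqrt_le, c.le_pow]
  have hgaps : gapSum D ≤ gapConst k * (D.sup id + √L) * singSeries (insert 0 D) :=
    (c.gapSum_le v (Nat.le_add_right _ _) (Nat.le_add_left _ _) hHL).trans
      (mul_le_mul_of_nonneg_right (mul_le_mul_of_nonneg_left hH (gapConst_pos k).le)
        v.singSeries_pos.le)
  have hloss : (1 + ε) * (U / L) * gapSum D ≤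
      2 * (U / L) * (gapConst k * (D.sup id + √L) * singSeries (insert 0 D)) := by
    have := gapSum_nonneg D
    gcongr
    linarith [c.ε_le_half]
  calc _ = singSeries (insert 0 D) * U * (1 - 2 * δ) -
        2 * (U / L) * (gapConst k * (D.sup id + √L) * singSeries (insert 0 D)) := by ring
    _ ≤ _ := by linarith [c.le_Ncham v]

end CountingRegime

/-! ### Champions have small diameter -/

/-- The positive elements of `primorialTuple (k + 1) y`. As the singular series of
`primorialTuple (k + 1) y` is nearly maximal, champions are compared with this set. -/
def primorialOffsets (k y : ℕ) : Finset ℕ := (primorialTuple (k + 1) y).erase 0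

/-- Multiples `j` of this modulus can be adjoined to a `k + 1`-set containing `0` at the cost of at
most a factor of two in the singular series. -/
def sieveModulus (k : ℕ) : ℕ := primorial (16 * (k + 1))

/-- A constant `c` such that adjoining the multiples of `sieveModulus k` up to `t` to a `k + 1`-set
gives singular series whose sum is at least `c * t` times the original one. -/
noncomputable def multipleConst (k : ℕ) : ℝ := 1 / (4 * sieveModulus k)

section

variable {k y : ℕ} {D : Finset ℕ}

lemma zero_mem_primorialTuple : 0 ∈ primorialTuple (k + 1) y :=
  mem_image.2 ⟨0, mem_range.2 k.succ_pos, mul_zero _⟩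

lemma insert_zero_primorialOffsets :
    insert 0 (primorialOffsets k y) = primorialTuple (k + 1) y :=
  insert_erase zero_mem_primorialTuple

lemma card_primorialOffsets : #(primorialOffsets k y) = k := by
  rw [primorialOffsets, card_erase_of_mem zero_mem_primorialTuple, card_primorialTuple,
    Nat.add_sub_cancel]

lemma zero_notMem_primorialOffsets : 0 ∉ primorialOffsets k y :=
  notMem_erase _ _

lemma sup_id_primorialOffsets_le : (primorialOffsets k y).sup id ≤ k * 4 ^ y := by
  refine Finset.sup_le fun d hd => ?_
  obtain ⟨i, hi, rfl⟩ := mem_image.1 (mem_of_mem_erase hd)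
  rw [id, mul_comm]
  exact Nat.mul_le_mul (Nat.lt_succ_iff.1 (mem_range.1 hi)) (primorial_le_four_pow y)

lemma sieveModulus_pos (k : ℕ) : 0 < sieveModulus k := primorial_pos _

lemma multipleConst_pos (k : ℕ) : 0 < multipleConst k := by
  have : (0 : ℝ) < sieveModulus k := mod_cast sieveModulus_pos k
  rw [multipleConst]
  positivity

lemma multipleConst_le (k : ℕ) : multipleConst k ≤ 1 / 4 := by
  have : (1 : ℝ) ≤ sieveModulus k := mod_cast sieveModulus_pos k
  exact one_div_le_one_div_of_le (by norm_num) (by linarith)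

lemma singSeries_le_two_mul_singSeries_insert_of_dvd {B : ℝ} (v : IsAdmissibleOffsets k B D) {j : ℕ}
    (hj : j ∉ insert 0 D) (hdvd : sieveModulus k ∣ j) :
    singSeries (insert 0 D) ≤ 2 * singSeries (insert j (insert 0 D)) :=
  singSeries_le_two_mul_singSeries_insert (mem_insert_self _ _) hj
    (congrArg (16 * ·) v.card_insert_zero).le
    fun _ hq hlt => (hq.dvd_primorial_iff.2 hlt.le).trans hdvd

lemma div_le_card_filter_dvd_gapSet_add_card {m H : ℕ} (hH : H < D.sup id) :
    H / m ≤ #{j ∈ gapSet D | m ∣ j ∧ j ≤ H} + #D := by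
  rw [← Nat.Ioc_filter_dvd_card_eq_div]
  refine (card_le_card fun j hj => ?_).trans (card_union_le _ _)
  simp only [gapSet, mem_union, mem_filter, mem_sdiff, mem_range, mem_insert, mem_Ioc] at hj ⊢
  grind

end

namespace CountingRegime

variable {k : ℕ} {x U L δ ε C : ℝ} {y : ℕ} {D : Finset ℕ}

lemma log_y_pos (c : CountingRegime k x U L δ ε C y) : 0 < Real.log y :=
  Real.log_pos (mod_cast (by norm_num : 1 < 3).trans_le c.three_le_y)

lemma log_le_two_mul_singSeries (c : CountingRegime k x U L δ ε C y) :
    Real.log y ≤ 2 * singSeries (primorialTuple (k + 1) y) :=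
  log_le_two_mul_singSeries_primorialTuple (Nat.succ_le_succ c.k_pos) c.sq_le_y

lemma singSeries_primorialTuple_pos (c : CountingRegime k x U L δ ε C y) :
    0 < singSeries (primorialTuple (k + 1) y) := by
  linarith [c.log_y_pos, c.log_le_two_mul_singSeries]

lemma sup_id_primorialOffsets_le_sqrt (c : CountingRegime k x U L δ ε C y) :
    (((primorialOffsets k y).sup id : ℕ) : ℝ) ≤ √L :=
  le_trans (mod_cast sup_id_primorialOffsets_le) c.mul_four_pow_le_sqrt

lemma isAdmissibleOffsets_primorialOffsets (c : CountingRegime k x U L δ ε C y) :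
    IsAdmissibleOffsets k (L ^ (k + 1)) (primorialOffsets k y) where
  card_eq := card_primorialOffsets
  zero_notMem := zero_notMem_primorialOffsets
  sup_le := c.sup_id_primorialOffsets_le_sqrt.trans (c.sqrt_le.trans c.le_pow)
  isAdmissible := by
    rw [insert_zero_primorialOffsets, ← singSeries_ne_zero_iff]
    exact c.singSeries_primorialTuple_pos.ne'

lemma le_Ncham_of_isChampion (c : CountingRegime k x U L δ ε C y) {ρ : ℝ}
    (hρ : 2 * δ + 4 * gapConst k * √L / L ≤ ρ) (hD : IsChampion k x D) :
    singSeries (primorialTuple (k + 1) y) * U * (1 - ρ) ≤ Ncham x D := by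
  have v := c.isAdmissibleOffsets_primorialOffsets
  have hlower := c.mul_one_sub_le_Ncham v
  have hU := c.U_pos
  have hL := c.le_L
  have hloss : 2 * gapConst k * ((primorialOffsets k y).sup id + √L) / L ≤
      4 * gapConst k * √L / L := by
    have := gapConst_pos k
    have := c.sup_id_primorialOffsets_le_sqrt
    rw [show 4 * gapConst k * √L = 2 * gapConst k * (√L + √L) by ring]
    gcongr
  have hS := v.singSeries_pos
  rw [insert_zero_primorialOffsets] at hlower hS
  calc _ ≤ _ := mul_le_mul_of_nonneg_left (by linarith) (by positivity)
    _ ≤ _ := hlower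
    _ ≤ _ := mod_cast hD.2.2 _ v.card_eq fun _ => v.pos

lemma isAdmissibleOffsets_of_isChampion (c : CountingRegime k x U L δ ε C y)
    (hρ : 2 * δ + 4 * gapConst k * √L / L ≤ 1 / 2) (hy : 8 * k ≤ Real.log y) (hU : 2 ≤ U)
    (hD : IsChampion k x D) : IsAdmissibleOffsets k (L ^ (k + 1)) D := by
  have h0 : 0 ∉ D := fun h => (hD.2.1 0 h).false
  have hk : (1 : ℝ) ≤ k := mod_cast c.k_pos
  have hmany : 2 * k * U ≤ Ncham x D := by
    have hlower := c.le_Ncham_of_isChampion hρ hD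
    nlinarith [c.log_le_two_mul_singSeries]
  refine ⟨hD.1, h0, ?_, ?_⟩
  · have hdisjoint : (Ncham x D : ℝ) * (D.sup id : ℕ) ≤ k * (U * L ^ (k + 1)) :=
      calc (Ncham x D : ℝ) * (D.sup id : ℕ) ≤ k * (⌊x⌋₊ : ℝ) :=
            mod_cast hD.1 ▸ Ncham_mul_sup_le h0
        _ ≤ k * (U * L ^ (k + 1)) := by
            have hL := c.le_L
            rw [← c.eq_U_mul]
            gcongr
            exact Nat.floor_le (by rw [c.eq_U_mul]; positivity)
    have hle := (mul_le_mul_of_nonneg_right hmany (Nat.cast_nonneg (D.sup id))).trans hdisjoint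
    have : 0 ≤ k * U * (D.sup id : ℕ) := by positivity
    exact le_of_mul_le_mul_left (by linarith : k * U * (D.sup id : ℕ) ≤ k * U * L ^ (k + 1))
      (by positivity)
  · by_contra hadm
    have hfew : Ncham x D ≤ k + 1 := by
      have hcard := (Ncham_le_primePi h0).trans (primePi_le_card_of_not_isAdmissible hadm x)
      rwa [card_insert_of_notMem h0, hD.1] at hcard
    have : (Ncham x D : ℝ) ≤ k + 1 := mod_cast hfew
    nlinarith

lemma le_sum_singSeries_multiples (v : IsAdmissibleOffsets k (L ^ (k + 1)) D) {t : ℝ} (ht : 0 ≤ t)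
    (hmt : 2 * (sieveModulus k : ℝ) * (k + 1) ≤ t) (hsup : t < D.sup id) :
    multipleConst k * t * singSeries (insert 0 D) ≤
      ∑ j ∈ gapSet D with sieveModulus k ∣ j ∧ j ≤ ⌊t⌋₊, singSeries (insert j (insert 0 D)) := by
  set m := sieveModulus k
  set J := {j ∈ gapSet D | m ∣ j ∧ j ≤ ⌊t⌋₊}
  have hm : (0 : ℝ) < m := mod_cast sieveModulus_pos k
  have hcard : t ≤ 2 * m * #J := by
    have hfloor : ⌊t⌋₊ / m ≤ #J + k :=
      v.card_eq ▸ div_le_card_filter_dvd_gapSet_add_card ((Nat.floor_lt ht).2 hsup)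
    have hdiv : (⌊t⌋₊ : ℝ) + 1 ≤ (⌊t⌋₊ / m + 1 : ℕ) * m := by
      rw [Nat.cast_succ (⌊t⌋₊ / m), add_mul, one_mul]
      exact_mod_cast Nat.lt_div_mul_add (a := ⌊t⌋₊) (sieveModulus_pos k)
    have hfloor' : ((⌊t⌋₊ / m + 1 : ℕ) : ℝ) ≤ #J + k + 1 := mod_cast Nat.succ_le_succ hfloor
    nlinarith [Nat.lt_floor_add_one t]
  calc multipleConst k * t * singSeries (insert 0 D)
      ≤ multipleConst k * (2 * m * #J) * singSeries (insert 0 D) := by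
        have := multipleConst_pos k
        have := v.singSeries_pos
        gcongr
    _ = ∑ _j ∈ J, singSeries (insert 0 D) / 2 := by
        rw [show multipleConst k = 1 / (4 * m) from rfl, sum_const, nsmul_eq_mul]
        field_simp
        ring
    _ ≤ _ := sum_le_sum fun j hj => by
        obtain ⟨hgap, hdvd, -⟩ := mem_filter.1 hj
        linarith [singSeries_le_two_mul_singSeries_insert_of_dvd v (mem_sdiff.1 hgap).2 hdvd]

lemma Ncham_le_of_lt_sup (c : CountingRegime k x U L δ ε C y)
    (v : IsAdmissibleOffsets k (L ^ (k + 1)) D) {η : ℝ} (hη0 : 0 < η) (hη1 : η ≤ 1)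
    (hsqrt : √L + 1 ≤ η * L) (hmod : 2 * (sieveModulus k : ℝ) * (k + 1) ≤ η * L)
    (hpair : pairConst k C * η ≤ multipleConst k / 8) (hδ : 2 * δ ≤ multipleConst k * η / 8)
    (hsup : η * L < D.sup id) :
    (Ncham x D : ℝ) ≤ singSeries (insert 0 D) * U * (1 - multipleConst k * η / 4) := by
  have hL := c.le_L
  have hU := c.U_pos
  have hS := v.singSeries_pos
  have hP := c.pairConst_pos
  have hε := c.ε_le_half
  have hM := multipleConst_pos k
  have hfloor : (⌊η * L⌋₊ : ℝ) ≤ η * L := Nat.floor_le (by positivity)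
  have h4y : 4 ^ y ≤ ⌊η * L⌋₊ :=
    Nat.le_floor (by push_cast; linarith [c.four_pow_le_sqrt])
  have hle_pow : (⌊η * L⌋₊ : ℝ) ≤ L ^ (k + 1) := by nlinarith [c.le_pow]
  have hupper := c.Ncham_le v h4y hle_pow
    (filter_subset (fun j => sieveModulus k ∣ j ∧ j ≤ ⌊η * L⌋₊) _)
    fun _ hj => (mem_filter.1 hj).2.2
  have hgain : singSeries (insert 0 D) * U * (multipleConst k * η / 2) ≤ (1 - ε) * (U / L) *
      ∑ j ∈ gapSet D with sieveModulus k ∣ j ∧ j ≤ ⌊η * L⌋₊, singSeries (insert j (insert 0 D)) :=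
    calc _ = 1 / 2 * (U / L) * (multipleConst k * (η * L) * singSeries (insert 0 D)) := by
          field_simp
      _ ≤ (1 - ε) * (U / L) * _ :=
          mul_le_mul (mul_le_mul_of_nonneg_right (by linarith) (by positivity))
            (le_sum_singSeries_multiples v (by positivity) hmod hsup)
            (by positivity) (mul_nonneg (by linarith) (by positivity))
  have hpairs : pairConst k C * (⌊η * L⌋₊ / L) ^ 2 ≤ multipleConst k * η / 8 :=
    calc pairConst k C * (⌊η * L⌋₊ / L) ^ 2 ≤ pairConst k C * η ^ 2 := by
          gcongr
          exact div_le_of_le_mul₀ (by positivity) hη0.le hfloor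
      _ = pairConst k C * η * η := by ring
      _ ≤ multipleConst k / 8 * η := by gcongr
      _ = _ := by ring
  have herror : singSeries (insert 0 D) * U * (1 + 2 * δ + pairConst k C * (⌊η * L⌋₊ / L) ^ 2) ≤
      singSeries (insert 0 D) * U * (1 + multipleConst k * η / 4) :=
    mul_le_mul_of_nonneg_left (by linarith) (by positivity)
  linarith

lemma singSeries_le_exp_mul (c : CountingRegime k x U L δ ε C y)
    (v : IsAdmissibleOffsets k (L ^ (k + 1)) D) :
    singSeries (insert 0 D) ≤
      Real.exp (32 * (k + 1) ^ 4 / Real.log y) * singSeries (primorialTuple (k + 1) y) := by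
  have hy := c.three_le_y
  have hlog := c.log_y_pos
  have hS := c.singSeries_primorialTuple_pos
  have hcompare := singSeries_le_singSeries_primorialTuple (E := insert 0 D) (y := y)
    (insert_nonempty _ _) (by lia) (by rw [v.card_insert_zero]; nlinarith [c.sq_le_y, c.k_pos])
    (one_le_pow₀ (by linarith [c.le_L]) : 1 ≤ L ^ (k + 1)) v.le_of_mem_insert_zero
  rw [v.card_insert_zero] at hcompare
  refine hcompare.trans (mul_le_mul_of_nonneg_right (Real.exp_le_exp.2 ?_) hS.le)
  have : (0 : ℝ) < y := by positivity
  calc 2 * ((k + 1 : ℕ) : ℝ) ^ 3 * Real.log (L ^ (k + 1)) / (y * Real.log y)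
      ≤ 2 * ((k + 1 : ℕ) : ℝ) ^ 3 * ((k + 1 : ℕ) * (16 * y)) / (y * Real.log y) := by
        rw [Real.log_pow]
        have := c.log_le
        gcongr
    _ = 32 * (k + 1) ^ 4 / Real.log y := by
        push_cast
        field_simp
        ring

lemma sup_id_le_of_isChampion (c : CountingRegime k x U L δ ε C y)
    (v : IsAdmissibleOffsets k (L ^ (k + 1)) D) (hD : IsChampion k x D) {η : ℝ} (hη0 : 0 < η)
    (hη1 : η ≤ 1) (hsqrt : √L + 1 ≤ η * L) (hmod : 2 * (sieveModulus k : ℝ) * (k + 1) ≤ η * L)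
    (hpair : pairConst k C * η ≤ multipleConst k / 8)
    (hρ : 2 * δ + 4 * gapConst k * √L / L ≤ multipleConst k * η / 16)
    (hexp : Real.exp (32 * (k + 1) ^ 4 / Real.log y) ≤ 1 + multipleConst k * η / 8) :
    ↑(D.sup id) ≤ η * L := by
  by_contra! hsup
  have hL := c.le_L
  have hU := c.U_pos
  have hgap := gapConst_pos k
  have hmult := multipleConst_pos k
  have hδ : 2 * δ ≤ multipleConst k * η / 8 := by
    have : 0 ≤ 4 * gapConst k * √L / L := by positivity
    have : 0 ≤ multipleConst k * η := by positivity
    linarith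
  have hupper := c.Ncham_le_of_lt_sup v hη0 hη1 hsqrt hmod hpair hδ hsup
  have hlower := c.le_Ncham_of_isChampion hρ hD
  have hcompare := c.singSeries_le_exp_mul v
  have hS := c.singSeries_primorialTuple_pos
  set a := multipleConst k * η
  have ha0 : 0 < a := by positivity
  have ha1 : a ≤ 1 / 4 := by nlinarith [multipleConst_le k]
  have : singSeries (insert 0 D) * U * (1 - a / 4) <
      singSeries (primorialTuple (k + 1) y) * U * (1 - a / 16) :=
    calc singSeries (insert 0 D) * U * (1 - a / 4)
        ≤ (1 + a / 8) * singSeries (primorialTuple (k + 1) y) * U * (1 - a / 4) := by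
          gcongr
          · linarith
          · exact hcompare.trans (mul_le_mul_of_nonneg_right hexp hS.le)
      _ = singSeries (primorialTuple (k + 1) y) * U * ((1 + a / 8) * (1 - a / 4)) := by ring
      _ < _ := mul_lt_mul_of_pos_left (by nlinarith) (by positivity)
  linarith

end CountingRegime

/-! ### Small primes not dividing an integer -/

lemma eventually_le_three_mul_theta :
    ∀ᶠ n : ℕ in Filter.atTop, (n : ℝ) ≤ 3 * Chebyshev.theta n := by
  have hlog := (Real.isLittleO_log_id_atTop.comp_tendsto
    (Filter.tendsto_atTop_add_const_right _ (1 : ℝ) tendsto_natCast_atTop_atTop)).bound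
    (by norm_num : (0 : ℝ) < 1 / 20)
  have hlog_sqrt := ((isLittleO_log_rpow_atTop (by norm_num : (0 : ℝ) < 1 / 2)).comp_tendsto
    tendsto_natCast_atTop_atTop).bound (by norm_num : (0 : ℝ) < 1 / 20)
  filter_upwards [hlog, hlog_sqrt, Filter.eventually_ge_atTop 1] with n hlog hlog_sqrt hn
  have hn : (1 : ℝ) ≤ n := mod_cast hn
  simp only [Function.comp, id, Real.norm_of_nonneg (Real.log_nonneg hn),
    Real.norm_of_nonneg (Real.log_nonneg (by linarith : (1 : ℝ) ≤ n + 1)),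
    Real.norm_of_nonneg (by positivity : (0 : ℝ) ≤ n + 1), ← Real.sqrt_eq_rpow,
    Real.norm_of_nonneg (Real.sqrt_nonneg _)] at hlog hlog_sqrt
  have hsqrt : 2 * √(n : ℝ) * Real.log n ≤ 1 / 10 * n := by
    nlinarith [Real.mul_self_sqrt (by positivity : (0 : ℝ) ≤ n), Real.sqrt_nonneg (n : ℝ)]
  nlinarith [Chebyshev.theta_ge n, Real.log_two_gt_d9]

lemma exists_prime_not_dvd_forall_lt {g : ℕ} (hg : 0 < g) :
    ∃ q, q.Prime ∧ ¬ q ∣ g ∧ ∀ r < q, r.Prime → r ∣ g := by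
  have hex : ∃ q, q.Prime ∧ ¬ q ∣ g := by
    obtain ⟨q, hgq, hq⟩ := Nat.exists_infinite_primes (g + 1)
    exact ⟨q, hq, fun h => (Nat.le_of_dvd hg h).not_gt hgq⟩
  classical
  refine ⟨Nat.find hex, (Nat.find_spec hex).1, (Nat.find_spec hex).2, fun r hr hrp => ?_⟩
  by_contra hrg
  exact Nat.find_min hex hr ⟨hrp, hrg⟩

lemma eventually_exists_prime_not_dvd : ∀ᶠ t : ℝ in Filter.atTop, ∀ g : ℕ, 0 < g →
    Real.log g ≤ t → ∃ q, q.Prime ∧ ¬ q ∣ g ∧ (q : ℝ) ≤ 5 * t := by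
  obtain ⟨n₀, hn₀⟩ := Filter.eventually_atTop.1 eventually_le_three_mul_theta
  filter_upwards [Filter.eventually_ge_atTop (n₀ + 1 : ℝ)] with t ht g hg hgt
  obtain ⟨q, hq, hqg, hmin⟩ := exists_prime_not_dvd_forall_lt hg
  refine ⟨q, hq, hqg, ?_⟩
  have : (0 : ℝ) ≤ n₀ := n₀.cast_nonneg
  obtain hlt | hle := lt_or_ge (q - 1) n₀
  · have : (q : ℝ) ≤ n₀ := mod_cast Nat.le_of_pred_lt hlt
    linarith
  · have hdvd : primorial (q - 1) ∣ g :=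
      prod_primes_dvd g (fun r hr => (mem_filter.1 hr).2.prime) fun r hr => by
        obtain ⟨hr, hrp⟩ := mem_filter.1 hr
        exact hmin r (by have := mem_range.1 hr; have := hq.pos; lia) hrp
    have htheta : Chebyshev.theta (q - 1 : ℕ) ≤ t := by
      rw [Chebyshev.theta_eq_log_primorial, Nat.floor_natCast]
      exact (Real.log_le_log (mod_cast primorial_pos _)
        (mod_cast Nat.le_of_dvd hg hdvd)).trans hgt
    have hq1 := hn₀ _ hle
    rw [Nat.cast_pred hq.pos] at hq1 htheta
    linarith

/-! ### Dividing offsets by a prime -/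

section

variable {E F D : Finset ℕ} {p q n : ℕ} {B : ℝ}

lemma two_le_nu_of_not_dvd {f : ℕ} (h0 : 0 ∈ E) (hf : f ∈ E) (hq : ¬ q ∣ f) : 2 ≤ nu E q :=
  one_lt_card.2 ⟨0 % q, mem_image_of_mem _ h0, f % q, mem_image_of_mem _ hf, fun h =>
    hq (Nat.dvd_of_mod_eq_zero (h.symm.trans (Nat.zero_mod q)))⟩

lemma nu_eq_one_of_forall_dvd (hE : E.Nonempty) (h : ∀ e ∈ E, q ∣ e) : nu E q = 1 := by
  have himage : E.image (· % q) = E.image fun _ => 0 :=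
    image_congr fun e he => Nat.mod_eq_zero_of_dvd (h e he)
  rw [nu, himage, image_const hE, card_singleton]

lemma exists_image_mul_eq (hp : 0 < p) (h : ∀ d ∈ D, p * p ∣ d) :
    ∃ F : Finset ℕ, (∀ f ∈ F, p ∣ f) ∧ F.image (p * ·) = D := by
  refine ⟨D.image (· / p), ?_, ?_⟩
  · rintro f hf
    obtain ⟨d, hd, rfl⟩ := mem_image.1 hf
    obtain ⟨a, rfl⟩ := h d hd
    exact ⟨a, by rw [mul_assoc, Nat.mul_div_cancel_left _ hp]⟩
  · rw [image_image]
    exact (image_congr fun d hd => Nat.mul_div_cancel' ((dvd_mul_right p p).trans (h d hd))).trans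
      image_id

lemma sup_id_image_mul (F : Finset ℕ) (p : ℕ) : (F.image (p * ·)).sup id = p * F.sup id := by
  rw [sup_image, Finset.mul_sup₀]
  rfl

lemma insert_zero_image_mul (F : Finset ℕ) (p : ℕ) :
    insert 0 (F.image (p * ·)) = (insert 0 F).image (p * ·) := by
  rw [image_insert, mul_zero]

lemma singSeries_insert_zero_image_mul (hp : p.Prime) (hF : ∀ f ∈ F, p ∣ f) :
    singSeries (insert 0 (F.image (p * ·))) = singSeries (insert 0 F) := by
  rw [insert_zero_image_mul]
  refine singSeries_image_mul_of_nu_eq_one hp (insert_nonempty _ _)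
    (nu_eq_one_of_forall_dvd (insert_nonempty _ _) fun e he => ?_)
  obtain rfl | he := mem_insert.1 he
  exacts [dvd_zero p, hF e he]

lemma singSeries_mul_one_add_le_of_not_dvd {j : ℕ} (h0 : 0 ∈ E) (hj : j ∈ E) (hp : p.Prime)
    (h : ¬ p ∣ j) : singSeries E * (1 + 1 / p) ≤ singSeries (E.image (p * ·)) := by
  have hscale := singSeries_mul_succ_le_of_two_le_nu hp ⟨0, h0⟩ (two_le_nu_of_not_dvd h0 hj h)
  have : (0 : ℝ) < p := mod_cast hp.pos
  refine le_of_mul_le_mul_right ?_ this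
  rwa [mul_assoc, add_mul, one_mul, one_div_mul_cancel this.ne']

namespace IsAdmissibleOffsets

lemma of_image_mul (hp : p.Prime) (hF : ∀ f ∈ F, p ∣ f)
    (v : IsAdmissibleOffsets n B (F.image (p * ·))) : IsAdmissibleOffsets n B F where
  card_eq := card_image_mul F hp.pos ▸ v.card_eq
  zero_notMem h0 := v.zero_notMem (mem_image.2 ⟨0, h0, mul_zero p⟩)
  sup_le := by
    have hsup := v.sup_le
    rw [sup_id_image_mul] at hsup
    exact (Nat.cast_le.2 (Nat.le_mul_of_pos_left _ hp.pos)).trans hsup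
  isAdmissible := by
    rw [← singSeries_ne_zero_iff, ← singSeries_insert_zero_image_mul hp hF]
    exact v.singSeries_pos.ne'

lemma image_mul (hp : p.Prime) (v : IsAdmissibleOffsets n B F) {B' : ℝ}
    (hB : (p : ℝ) * F.sup id ≤ B') : IsAdmissibleOffsets n B' (F.image (p * ·)) where
  card_eq := (card_image_mul F hp.pos).trans v.card_eq
  zero_notMem h0 := by
    obtain ⟨f, hf, hpf⟩ := mem_image.1 h0
    exact (Nat.mul_pos hp.pos (v.pos hf)).ne' hpf
  sup_le := by
    rw [sup_id_image_mul]
    exact_mod_cast hB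
  isAdmissible := by
    rw [← singSeries_ne_zero_iff, insert_zero_image_mul]
    exact (v.singSeries_pos.trans_le
      (singSeries_le_singSeries_image_mul hp (Finset.insert_nonempty _ _))).ne'

end IsAdmissibleOffsets

end

/-! ### Champions whose gcd is not squarefree -/

namespace CountingRegime

variable {k : ℕ} {x U L δ ε C : ℝ} {y : ℕ} {F : Finset ℕ} {p : ℕ}

lemma one_add_mul_one_sub_le_of_isChampion (c : CountingRegime k x U L δ ε C y) (hp : p.Prime)
    (hF : ∀ f ∈ F, p ∣ f) (v : IsAdmissibleOffsets k (L ^ (k + 1)) (F.image (p * ·)))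
    (hD : IsChampion k x (F.image (p * ·))) {q f : ℕ} (hq : q.Prime) (hf : f ∈ F) (hqf : ¬ q ∣ f)
    {H : ℝ} (hFH : (q : ℝ) * F.sup id ≤ H) (hH : H ≤ L ^ (k + 1))
    (hloss : 2 * δ + 2 * gapConst k * (H + √L) / L ≤ 1) :
    (1 + 1 / q) * (1 - 2 * δ - 2 * gapConst k * (H + √L) / L) ≤ 1 + δ := by
  set S := singSeries (insert 0 F)
  have hU := c.U_pos
  have hL := c.le_L
  have hgap := gapConst_pos k
  have vF := v.of_image_mul hp hF
  have vq := vF.image_mul hq (hFH.trans hH)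
  have hupper : (Ncham x (F.image (p * ·)) : ℝ) ≤ S * U * (1 + δ) := by
    have hle : (Ncham x (F.image (p * ·)) : ℝ) ≤ primePi x (insert 0 (F.image (p * ·))) :=
      mod_cast Ncham_le_primePi v.zero_notMem
    have hasymp := (abs_le.1 (c.abs_primePi_sub_le _ v)).2
    rw [singSeries_insert_zero_image_mul hp hF] at hasymp
    linarith
  have hlower := c.mul_one_sub_le_Ncham vq
  have hchampion : (Ncham x (F.image (q * ·)) : ℝ) ≤ Ncham x (F.image (p * ·)) :=
    mod_cast hD.2.2 _ vq.card_eq fun _ => vq.pos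
  have hseries : S * (1 + 1 / q) ≤ singSeries (insert 0 (F.image (q * ·))) := by
    rw [insert_zero_image_mul]
    exact singSeries_mul_one_add_le_of_not_dvd (mem_insert_self _ _) (mem_insert_of_mem hf) hq hqf
  have hSU : 0 < S * U := mul_pos vF.singSeries_pos hU
  refine le_of_mul_le_mul_left ?_ hSU
  calc S * U * ((1 + 1 / q) * (1 - 2 * δ - 2 * gapConst k * (H + √L) / L))
      = S * (1 + 1 / q) * (U * (1 - 2 * δ - 2 * gapConst k * (H + √L) / L)) := by ring
    _ ≤ singSeries (insert 0 (F.image (q * ·))) *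
          (U * (1 - 2 * δ - 2 * gapConst k * (H + √L) / L)) :=
        mul_le_mul_of_nonneg_right hseries (mul_nonneg hU.le (by linarith))
    _ ≤ singSeries (insert 0 (F.image (q * ·))) *
          (U * (1 - 2 * δ - 2 * gapConst k * ((F.image (q * ·)).sup id + √L) / L)) := by
        have := vq.singSeries_pos
        rw [sup_id_image_mul, Nat.cast_mul]
        gcongr
    _ ≤ S * U * (1 + δ) := by linarith

lemma mul_div_lt_sup_id_of_isChampion (c : CountingRegime k x U L δ ε C y) (hp : p.Prime)
    (hF : ∀ f ∈ F, p ∣ f) (v : IsAdmissibleOffsets k (L ^ (k + 1)) (F.image (p * ·)))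
    (hD : IsChampion k x (F.image (p * ·))) {t ν : ℝ} (hLt : Real.log L ≤ t) (ht : 1 ≤ t)
    (hprime : ∀ g : ℕ, 0 < g → Real.log g ≤ t → ∃ q, q.Prime ∧ ¬ q ∣ g ∧ (q : ℝ) ≤ 5 * t)
    (hν0 : 0 < ν) (hν1 : ν ≤ 1 / 5)
    (hloss : 5 * δ + 20 * gapConst k * ν / t + 4 * gapConst k * √L / L < 1 / (5 * t)) :
    ν * L / t ^ 2 < (F.image (p * ·)).sup id := by
  by_contra! hsup
  have hL := c.le_L
  have hδ := c.δ_pos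
  have hgap := gapConst_pos k
  have vF := v.of_image_mul hp hF
  obtain ⟨f, hf⟩ := card_pos.1 (vF.card_eq ▸ c.k_pos)
  have hFL : ((F.sup id : ℕ) : ℝ) ≤ ν * L / t ^ 2 := by
    rw [sup_id_image_mul] at hsup
    exact (Nat.cast_le.2 (Nat.le_mul_of_pos_left _ hp.pos)).trans hsup
  have hfL : (f : ℝ) ≤ L :=
    calc (f : ℝ) ≤ (F.sup id : ℕ) := mod_cast le_sup (f := id) hf
      _ ≤ ν * L / t ^ 2 := hFL
      _ ≤ L := (div_le_self (by positivity) (one_le_pow₀ ht)).trans (by nlinarith)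
  obtain ⟨q, hq, hqf, hqt⟩ := hprime f (vF.pos hf)
    ((Real.log_le_log (mod_cast vF.pos hf) hfL).trans hLt)
  have hqF : (q : ℝ) * F.sup id ≤ 5 * ν * L / t :=
    calc (q : ℝ) * F.sup id ≤ 5 * t * (ν * L / t ^ 2) := by gcongr
      _ = 5 * ν * L / t := by field_simp
  have hH : 5 * ν * L / t ≤ L ^ (k + 1) :=
    ((div_le_self (by positivity) ht).trans (by nlinarith)).trans c.le_pow
  have hu1 : 1 / (5 * t) ≤ 1 := div_le_one_of_le₀ (by linarith) (by linarith)
  have huq : 1 / (5 * t) ≤ 1 / q := one_div_le_one_div_of_le (mod_cast hq.pos) hqt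
  set τ := 2 * δ + 2 * gapConst k * (5 * ν * L / t + √L) / L with hτ
  have hτu : 2 * τ + δ < 1 / (5 * t) := by
    refine lt_of_eq_of_lt ?_ hloss
    rw [hτ]
    field_simp
    ring
  have hτ0 : 0 ≤ τ := by positivity
  have hcompare := c.one_add_mul_one_sub_le_of_isChampion hp hF v hD hq hf hqf hqF hH (by linarith)
  rw [sub_sub, ← hτ] at hcompare
  nlinarith

end CountingRegime

/-- A constant `c` such that, if all elements of `F` are divisible by the prime `p`, then the gap
sum of `p * F` exceeds that of `F` by at least `c * max (p * F)` times the singular series. -/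
noncomputable def dilationConst (k : ℕ) : ℝ := 1 / (8 * sieveModulus k * (16 * (k + 1) + 1))

section

variable {k p : ℕ} {F : Finset ℕ} {B : ℝ}

lemma dilationConst_pos (k : ℕ) : 0 < dilationConst k := by
  have : (0 : ℝ) < sieveModulus k := mod_cast sieveModulus_pos k
  rw [dilationConst]
  positivity

lemma le_of_prime_of_dvd_sieveModulus (hp : p.Prime) (h : p ∣ sieveModulus k) : p ≤ 16 * (k + 1) :=
  hp.dvd_primorial_iff.1 h

lemma not_mul_self_dvd_sieveModulus_mul {i : ℕ} (hp : p.Prime) (hi : ¬ p ∣ i) :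
    ¬ p * p ∣ sieveModulus k * i := by
  have hcop : p.Coprime i := hp.coprime_iff_not_dvd.2 hi
  exact fun h => hp.not_isUnit
    (squarefree_primorial _ p ((hcop.mul_left hcop).dvd_of_dvd_mul_right h))

lemma le_two_mul_card_filter_not_dvd (hp : 2 ≤ p) (n : ℕ) :
    n ≤ 2 * #{i ∈ Ioc 0 n | ¬ p ∣ i} := by
  have hcard := card_filter_add_card_filter_not (s := Ioc 0 n) (p ∣ ·)
  rw [Nat.Ioc_filter_dvd_card_eq_div, Nat.card_Ioc] at hcard
  have := Nat.div_le_div_left (a := n) hp two_pos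
  lia

/-- The multiples `sieveModulus k * i` with `p ∤ i` in the gaps of `D`. -/
def gapMultiples (k p : ℕ) (D : Finset ℕ) : Finset ℕ :=
  {j ∈ gapSet D | sieveModulus k ∣ j ∧ ¬ p ∣ j / sieveModulus k}

lemma sup_id_le_mul_card_gapMultiples {D : Finset ℕ} (hp : p.Prime) (hD : ∀ d ∈ D, p * p ∣ d)
    (h : 2 * sieveModulus k ≤ D.sup id) :
    D.sup id ≤ 4 * sieveModulus k * #(gapMultiples k p D) := by
  have hm := sieveModulus_pos k
  set m := sieveModulus k
  set I := (D.sup id - 1) / m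
  have himage : ({i ∈ Ioc 0 I | ¬ p ∣ i}).image (m * ·) ⊆ gapMultiples k p D := by
    intro j hj
    obtain ⟨i, hi, rfl⟩ := mem_image.1 hj
    simp only [mem_filter, mem_Ioc] at hi
    obtain ⟨⟨hi0, hiI⟩, hpi⟩ := hi
    have hlt : m * i < D.sup id := by
      have := Nat.mul_le_of_le_div _ _ _ hiI
      lia
    refine mem_filter.2 ⟨mem_sdiff.2 ⟨mem_range.2 hlt, fun hmem => ?_⟩, dvd_mul_right _ _, ?_⟩
    · obtain h0 | hd := mem_insert.1 hmem
      · exact (Nat.mul_pos hm hi0).ne' h0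
      · exact not_mul_self_dvd_sieveModulus_mul hp hpi (hD _ hd)
    · rwa [Nat.mul_div_cancel_left _ hm]
  have hcard : #{i ∈ Ioc 0 I | ¬ p ∣ i} ≤ #(gapMultiples k p D) :=
    (card_image_mul _ hm).symm.trans_le (card_le_card himage)
  have hhalf := le_two_mul_card_filter_not_dvd hp.two_le I
  have hI1 : 1 ≤ I := (Nat.one_le_div_iff hm).2 (by lia)
  have hlt : D.sup id - 1 < I * m + m := Nat.lt_div_mul_add hm
  calc D.sup id ≤ (I + 1) * m := by rw [add_mul, one_mul]; lia
    _ ≤ 4 * #(gapMultiples k p D) * m := Nat.mul_le_mul_right _ (by lia)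
    _ = _ := by ring

lemma singSeries_insert_le_singSeries_insert_image_mul (hp : p.Prime) (j : ℕ) :
    singSeries (insert j (insert 0 F)) ≤
      singSeries (insert (p * j) (insert 0 (F.image (p * ·)))) := by
  rw [insert_zero_image_mul, ← image_insert (p * ·)]
  exact singSeries_le_singSeries_image_mul hp (insert_nonempty _ _)

lemma le_singSeries_insert_of_mem_gapMultiples (v : IsAdmissibleOffsets k B (F.image (p * ·)))
    {j : ℕ} (hj : j ∈ gapMultiples k p (F.image (p * ·))) :
    singSeries (insert 0 (F.image (p * ·))) / 2 ≤
      singSeries (insert j (insert 0 (F.image (p * ·)))) := by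
  obtain ⟨hgap, hdvd, -⟩ := mem_filter.1 hj
  linarith [singSeries_le_two_mul_singSeries_insert_of_dvd v (mem_sdiff.1 hgap).2 hdvd]

lemma singSeries_insert_add_le_of_mem_gapMultiples (hp : p.Prime)
    (v : IsAdmissibleOffsets k B (F.image (p * ·))) {j : ℕ}
    (hj : p * j ∈ gapMultiples k p (F.image (p * ·))) :
    singSeries (insert j (insert 0 F)) +
        singSeries (insert 0 (F.image (p * ·))) / 2 / (16 * (k + 1) + 1) ≤
      singSeries (insert (p * j) (insert 0 (F.image (p * ·)))) := by
  have hhalf := le_singSeries_insert_of_mem_gapMultiples v hj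
  obtain ⟨-, ⟨i, hi⟩, hpi⟩ := mem_filter.1 hj
  rw [hi, Nat.mul_div_cancel_left _ (sieveModulus_pos k)] at hpi
  have hpm : p ∣ sieveModulus k :=
    (hp.dvd_mul.1 (hi ▸ dvd_mul_right p j)).resolve_right hpi
  have hpj : ¬ p ∣ j := fun h =>
    not_mul_self_dvd_sieveModulus_mul hp hpi (hi ▸ Nat.mul_dvd_mul_left p h)
  have hgain := singSeries_mul_one_add_le_of_not_dvd (E := insert j (insert 0 F))
    (mem_insert_of_mem (mem_insert_self _ _)) (mem_insert_self _ _) hp hpj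
  rw [image_insert, ← insert_zero_image_mul] at hgain
  set V := singSeries (insert j (insert 0 F))
  set W := singSeries (insert (p * j) (insert 0 (F.image (p * ·))))
  have hp0 : (0 : ℝ) < p := mod_cast hp.pos
  have hpk : (p : ℝ) + 1 ≤ 16 * (k + 1) + 1 :=
    mod_cast Nat.succ_le_succ (le_of_prime_of_dvd_sieveModulus hp hpm)
  have hV : V ≤ W - W / (p + 1) := by
    rw [show W - W / ((p : ℝ) + 1) = W * p / (p + 1) by field_simp; ring,
      le_div_iff₀ (by positivity)]
    calc V * (p + 1) = V * (1 + 1 / p) * p := by field_simp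
      _ ≤ W * p := by gcongr
  have hW : singSeries (insert 0 (F.image (p * ·))) / 2 / (16 * (k + 1) + 1) ≤ W / (p + 1) :=
    div_le_div₀ (singSeries_nonneg _) hhalf (by positivity) hpk
  linarith

lemma image_mul_gapSet_subset (hp : 0 < p) :
    (gapSet F).image (p * ·) ⊆ gapSet (F.image (p * ·)) := by
  intro j hj
  obtain ⟨i, hi, rfl⟩ := mem_image.1 hj
  obtain ⟨hlt, hnot⟩ := mem_sdiff.1 hi
  rw [gapSet, mem_sdiff, mem_range, sup_id_image_mul, insert_zero_image_mul]
  refine ⟨Nat.mul_lt_mul_of_pos_left (mem_range.1 hlt) hp, fun hmem => hnot ?_⟩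
  obtain ⟨e, he, hei⟩ := mem_image.1 hmem
  exact Nat.eq_of_mul_eq_mul_left hp hei ▸ he

lemma gapSum_add_card_gapMultiples_mul_le (hp : p.Prime)
    (v : IsAdmissibleOffsets k B (F.image (p * ·))) :
    gapSum F + #(gapMultiples k p (F.image (p * ·))) *
        (singSeries (insert 0 (F.image (p * ·))) / 2 / (16 * (k + 1) + 1)) ≤
      gapSum (F.image (p * ·)) := by
  set D := F.image (p * ·)
  set G := gapMultiples k p D
  set J := (gapSet F).image (p * ·)
  set s := singSeries (insert 0 D) / 2 / (16 * ((k : ℝ) + 1) + 1)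
  have hJD : J ⊆ gapSet D := image_mul_gapSet_subset hp.pos
  have hinside : gapSum F + #(J ∩ G) * s ≤ ∑ j ∈ J, singSeries (insert j (insert 0 D)) := by
    have hinj : Set.InjOn (p * ·) (gapSet F : Set ℕ) :=
      fun _ _ _ _ h => Nat.eq_of_mul_eq_mul_left hp.pos h
    rw [← nsmul_eq_mul, ← sum_const, ← sum_ite_mem, sum_image hinj, sum_image hinj, gapSum,
      ← sum_add_distrib]
    refine sum_le_sum fun j _ => ?_
    split_ifs with hj
    · exact singSeries_insert_add_le_of_mem_gapMultiples hp v hj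
    · rw [add_zero]
      exact singSeries_insert_le_singSeries_insert_image_mul hp j
  have houtside : #(G \ J) * s ≤ ∑ j ∈ gapSet D \ J, singSeries (insert j (insert 0 D)) :=
    calc #(G \ J) * s = ∑ _j ∈ G \ J, s := by rw [sum_const, nsmul_eq_mul]
      _ ≤ ∑ j ∈ G \ J, singSeries (insert j (insert 0 D)) := sum_le_sum fun j hj =>
          (div_le_self (by linarith [v.singSeries_pos])
            (by linarith [k.cast_nonneg (α := ℝ)])).trans
            (le_singSeries_insert_of_mem_gapMultiples v (mem_sdiff.1 hj).1)
      _ ≤ _ := sum_le_sum_of_subset_of_nonneg (sdiff_subset_sdiff (filter_subset _ _) le_rfl)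
          fun _ _ _ => singSeries_nonneg _
  have hcard : (#G : ℝ) = #(J ∩ G) + #(G \ J) := by
    rw [inter_comm]
    exact_mod_cast (card_inter_add_card_sdiff G J).symm
  have hsplit : gapSum D = _ := (sum_sdiff hJD).symm
  rw [hsplit, hcard, add_mul]
  linarith

lemma gapSum_add_le_gapSum_image_mul (hp : p.Prime) (hF : ∀ f ∈ F, p ∣ f)
    (v : IsAdmissibleOffsets k B (F.image (p * ·)))
    (hmod : 2 * sieveModulus k ≤ (F.image (p * ·)).sup id) :
    gapSum F + dilationConst k * (F.image (p * ·)).sup id *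
        singSeries (insert 0 (F.image (p * ·))) ≤ gapSum (F.image (p * ·)) := by
  refine le_trans (add_le_add_right ?_ _) (gapSum_add_card_gapMultiples_mul_le hp v)
  have hcard := sup_id_le_mul_card_gapMultiples hp (forall_mem_image.2 fun f hf =>
    Nat.mul_dvd_mul_left p (hF f hf)) hmod
  set D := F.image (p * ·)
  have hcard : ((D.sup id : ℕ) : ℝ) ≤ 4 * sieveModulus k * #(gapMultiples k p D) :=
    mod_cast hcard
  have hm : (0 : ℝ) < sieveModulus k := mod_cast sieveModulus_pos k
  calc dilationConst k * (D.sup id : ℕ) * singSeries (insert 0 D)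
      ≤ dilationConst k * (4 * sieveModulus k * #(gapMultiples k p D)) *
          singSeries (insert 0 D) := by
        have := dilationConst_pos k
        have := v.singSeries_pos
        gcongr
    _ = _ := by
        rw [dilationConst]
        field_simp
        ring

end

namespace CountingRegime

variable {k : ℕ} {x U L δ ε C : ℝ} {y : ℕ} {F : Finset ℕ} {p : ℕ}

lemma mul_gapSum_le_of_isChampion (c : CountingRegime k x U L δ ε C y) (hp : p.Prime)
    (hF : ∀ f ∈ F, p ∣ f) (v : IsAdmissibleOffsets k (L ^ (k + 1)) (F.image (p * ·)))
    (hD : IsChampion k x (F.image (p * ·))) (hsqrt : √L ≤ (F.image (p * ·)).sup id) :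
    (1 - ε) * gapSum (F.image (p * ·)) - (1 + ε) * gapSum F ≤
      singSeries (insert 0 (F.image (p * ·))) *
        (4 * δ + pairConst k C * ((F.image (p * ·)).sup id / L) ^ 2) * L := by
  have vF := v.of_image_mul hp hF
  have hL := c.le_L
  have hU := c.U_pos
  have hchampion : (Ncham x F : ℝ) ≤ Ncham x (F.image (p * ·)) :=
    mod_cast hD.2.2 _ vF.card_eq fun _ => vF.pos
  have hlower := c.le_Ncham vF
  rw [← singSeries_insert_zero_image_mul hp hF] at hlower
  have h4y : 4 ^ y ≤ (F.image (p * ·)).sup id := mod_cast c.four_pow_le_sqrt.trans hsqrt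
  have hupper := c.Ncham_le v h4y v.sup_le subset_rfl fun j hj =>
    (mem_range.1 (mem_sdiff.1 hj).1).le
  rw [← gapSum] at hupper
  refine le_of_mul_le_mul_left ?_ (by positivity : 0 < U / L)
  calc _ ≤ singSeries (insert 0 (F.image (p * ·))) * U *
        (4 * δ + pairConst k C * ((F.image (p * ·)).sup id / L) ^ 2) := by linarith
    _ = _ := by field_simp

lemma not_isChampion_image_mul (c : CountingRegime k x U L δ ε C y) (hp : p.Prime)
    (hF : ∀ f ∈ F, p ∣ f) (v : IsAdmissibleOffsets k (L ^ (k + 1)) (F.image (p * ·))) {η : ℝ}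
    (hsqrt : √L ≤ (F.image (p * ·)).sup id) (hmod : 2 * sieveModulus k ≤ (F.image (p * ·)).sup id)
    (hsup : ↑((F.image (p * ·)).sup id) ≤ η * L) (hε : 2 * gapConst k * ε ≤ dilationConst k / 4)
    (hη : pairConst k C * η ≤ dilationConst k / 4)
    (hδ : 16 * δ * L ≤ dilationConst k * (F.image (p * ·)).sup id) :
    ¬ IsChampion k x (F.image (p * ·)) := by
  intro hD
  have hgain := gapSum_add_le_gapSum_image_mul hp hF v hmod
  have hcompare := c.mul_gapSum_le_of_isChampion hp hF v hD hsqrt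
  have h4y : 4 ^ y ≤ (F.image (p * ·)).sup id := mod_cast c.four_pow_le_sqrt.trans hsqrt
  have hL := c.le_L
  have hmean := c.gapSum_le v le_rfl h4y
    (v.sup_le.trans (pow_le_pow_right₀ (by linarith) (by lia)))
  have hS := v.singSeries_pos
  set D := F.image (p * ·)
  set S := singSeries (insert 0 D)
  set M : ℝ := ((D.sup id : ℕ) : ℝ)
  have hM : 0 < M := by linarith [c.le_sqrt]
  have hpair : pairConst k C * (M / L) ^ 2 * L ≤ dilationConst k / 4 * M :=
    calc pairConst k C * (M / L) ^ 2 * L = pairConst k C * (M / L) * M := by field_simp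
      _ ≤ pairConst k C * η * M := by
          have := c.pairConst_pos
          gcongr
          exact (div_le_iff₀ (by linarith)).2 hsup
      _ ≤ _ := mul_le_mul_of_nonneg_right hη hM.le
  have hFD : gapSum F ≤ gapSum D :=
    (le_add_of_nonneg_right (by have := dilationConst_pos k; positivity)).trans hgain
  have hmain : 3 / 4 * dilationConst k * M * S ≤ (1 - ε) * gapSum D - (1 + ε) * gapSum F :=
    calc 3 / 4 * dilationConst k * M * S
        ≤ dilationConst k * M * S - 2 * gapConst k * ε * M * S := by
          have : 2 * gapConst k * ε * (M * S) ≤ dilationConst k / 4 * (M * S) := by gcongr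
          linarith
      _ ≤ dilationConst k * M * S - 2 * ε * gapSum D := by nlinarith [c.ε_pos]
      _ ≤ _ := by linarith [mul_le_mul_of_nonneg_left hFD c.ε_pos.le]
  have : S * (4 * δ + pairConst k C * (M / L) ^ 2) * L ≤ S * (dilationConst k / 2 * M) := by
    rw [mul_assoc]
    exact mul_le_mul_of_nonneg_left (by linarith) hS.le
  nlinarith [mul_pos (mul_pos (dilationConst_pos k) hM) hS]

end CountingRegime

/-! ### The regime for large `x` -/

/-- The sifting level `⌊(log log x) / 8⌋` used in the counting regime for `x`. -/
noncomputable def siftingLevel (x : ℝ) : ℕ := ⌊Real.log (Real.log x) / 8⌋₊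

/-- The Hardy–Littlewood asymptotic
`π(x, {0} ∪ D) = S({0} ∪ D) x / (log x)^{n+1} (1 + o(1 / w(x)))`, uniformly for the `n`-sets
`D ⊆ [1, (log x)^m]` with `{0} ∪ D` admissible. -/
def HardyLittlewoodAsymptotic (n m : ℕ) (w : ℝ → ℝ) : Prop :=
  ∀ ε : ℝ, 0 < ε → ∀ᶠ x : ℝ in Filter.atTop, ∀ D, IsAdmissibleOffsets n (Real.log x ^ m) D →
    |primePi x (insert 0 D) - singSeries (insert 0 D) * (x / Real.log x ^ (n + 1))| ≤
      ε / w x * (singSeries (insert 0 D) * (x / Real.log x ^ (n + 1)))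

lemma tendsto_log_log_atTop :
    Filter.Tendsto (fun x => Real.log (Real.log x)) Filter.atTop Filter.atTop :=
  Real.tendsto_log_atTop.comp Real.tendsto_log_atTop

lemma tendsto_siftingLevel : Filter.Tendsto siftingLevel Filter.atTop Filter.atTop :=
  tendsto_nat_floor_atTop.comp (tendsto_log_log_atTop.atTop_div_const (by norm_num))

lemma tendsto_log_siftingLevel :
    Filter.Tendsto (fun x => Real.log (siftingLevel x)) Filter.atTop Filter.atTop :=
  Real.tendsto_log_atTop.comp (tendsto_natCast_atTop_atTop.comp tendsto_siftingLevel)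

lemma eventually_exp_div_log_siftingLevel_le (a : ℝ) {b : ℝ} (hb : 0 < b) :
    ∀ᶠ x in Filter.atTop, Real.exp (a / Real.log (siftingLevel x)) ≤ 1 + b := by
  have hexp := (Real.continuous_exp.tendsto 0).comp (tendsto_log_siftingLevel.const_div_atTop a)
  rw [Real.exp_zero] at hexp
  exact hexp.eventually (eventually_le_nhds (by linarith))

lemma eventually_mul_log_pow_le (n : ℕ) (C : ℝ) :
    ∀ᶠ x : ℝ in Filter.atTop, C * Real.log x ^ n ≤ x := by
  filter_upwards [eventually_mul_log_pow_le_sqrt n C, Filter.eventually_ge_atTop 1] with x hx hx1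
  exact hx.trans (Real.sqrt_le_self_iff.2 (.inr hx1))

lemma four_pow_le_exp_two_mul (y : ℕ) : (4 : ℝ) ^ y ≤ Real.exp (2 * y) := by
  have : (4 : ℝ) ≤ Real.exp 2 := by
    rw [show (2 : ℝ) = 1 + 1 by norm_num, Real.exp_add]
    nlinarith [Real.exp_one_gt_d9]
  rw [mul_comm, Real.exp_nat_mul]
  gcongr

lemma mul_four_pow_le_sqrt_of_log {a L : ℝ} {y : ℕ} (hL : 0 < L) (ha : 4 * a ≤ Real.log L)
    (hy : 8 * y ≤ Real.log L) : a * 4 ^ y ≤ √L := by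
  have ha' : a ≤ Real.exp (Real.log L / 4) := by
    linarith [Real.add_one_le_exp (Real.log L / 4)]
  have h4y : (4 : ℝ) ^ y ≤ Real.exp (Real.log L / 4) :=
    (four_pow_le_exp_two_mul y).trans (Real.exp_le_exp.2 (by linarith))
  calc a * 4 ^ y ≤ Real.exp (Real.log L / 4) * Real.exp (Real.log L / 4) := by gcongr
    _ = √L := by
      rw [← Real.exp_add, show Real.log L / 4 + Real.log L / 4 = Real.log L / 2 by ring,
        Real.exp_half, Real.exp_log hL]

lemma eventually_error_le (k : ℕ) {ε s : ℝ} (hε : 0 < ε) (hs : 0 < s) :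
    ∀ᶠ x in Filter.atTop, (k + 3) * (Real.log x ^ (k + 1)) ^ 2 ≤
      ε / Real.log (Real.log x) ^ 2 * (s * (x / Real.log x ^ (k + 1))) := by
  filter_upwards [eventually_mul_log_pow_le (3 * k + 5) ((k + 3) / (ε * s)),
    Real.tendsto_log_atTop.eventually_gt_atTop 0,
    tendsto_log_log_atTop.eventually_gt_atTop 0] with x hpow hL hl
  have hlL : Real.log (Real.log x) ≤ Real.log x := Real.log_le_self hL.le
  rw [div_mul_eq_mul_div, div_le_iff₀ (by positivity)] at hpow
  rw [div_mul_eq_mul_div, le_div_iff₀ (by positivity), ← mul_assoc ε, mul_div_assoc',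
    le_div_iff₀ (by positivity)]
  calc (k + 3) * (Real.log x ^ (k + 1)) ^ 2 * Real.log (Real.log x) ^ 2 * Real.log x ^ (k + 1)
      ≤ (k + 3) * (Real.log x ^ (k + 1)) ^ 2 * Real.log x ^ 2 * Real.log x ^ (k + 1) := by gcongr
    _ = (k + 3) * Real.log x ^ (3 * k + 5) := by ring
    _ ≤ ε * s * x := by linarith

theorem exists_eventually_countingRegime {k : ℕ} (hk : 0 < k)
    (h₁ : HardyLittlewoodAsymptotic k (k + 1) fun x => Real.log (Real.log x) ^ 2)
    (h₂ : HardyLittlewoodAsymptotic (k + 1) (k + 1) fun _ => 1) :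
    ∃ C, 0 < C ∧ ∀ ε, 0 < ε → ε ≤ 1 / 2 → ∀ᶠ x in Filter.atTop,
      CountingRegime k x (x / Real.log x ^ (k + 1)) (Real.log x) (ε / Real.log (Real.log x) ^ 2) ε
        C (siftingLevel x) := by
  obtain ⟨C, hC, hsieve⟩ := exists_primePi_le (k + 3)
  refine ⟨C, hC, fun ε hε hε_half => ?_⟩
  filter_upwards [h₁ ε hε, h₂ ε hε, hsieve, Filter.eventually_gt_atTop 0,
    Real.tendsto_log_atTop.eventually_gt_atTop 0,
    tendsto_log_log_atTop.eventually_ge_atTop (4 * k : ℝ),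
    tendsto_siftingLevel.eventually_ge_atTop 3,
    tendsto_siftingLevel.eventually_ge_atTop (4 * (k + 1) ^ 2),
    eventually_error_le k hε (singSeriesMin_pos (k + 1))] with x h₁ h₂ hsieve hx hL hl hy hyk herror
  have hl0 : 0 < Real.log (Real.log x) := by
    have : (0 : ℝ) < k := mod_cast hk
    linarith
  have hfloor_le : (siftingLevel x : ℝ) ≤ Real.log (Real.log x) / 8 := Nat.floor_le (by positivity)
  have hlt_floor : Real.log (Real.log x) / 8 < siftingLevel x + 1 := Nat.lt_floor_add_one _
  have hy' : (3 : ℝ) ≤ siftingLevel x := mod_cast hy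
  exact
    { k_pos := hk
      U_pos := by positivity
      δ_pos := by positivity
      ε_pos := hε
      ε_le_half := hε_half
      C_pos := hC
      eq_U_mul := (div_mul_cancel₀ _ (by positivity)).symm
      three_le_y := hy
      sq_le_y := hyk.trans (Nat.le_succ _)
      mul_four_pow_le_sqrt := mul_four_pow_le_sqrt_of_log hL hl (by linarith)
      log_le := by linarith
      abs_primePi_sub_le := h₁
      abs_primePi_sub_le_succ := by simpa only [div_one, div_div, ← pow_succ] using h₂
      primePi_le := fun E hE => by
        simpa only [div_div, ← pow_add, mul_div_assoc, Nat.cast_add, Nat.cast_ofNat] using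
          hsieve E hE
      error_le := herror }

/-! ### The gcd of a champion is squarefree -/

/-- Constants for the argument: a champion `D` has largest element at most `η log x`, and more than
`ν log x / (log log x)^2` if its gcd is not squarefree; the relative errors are at most `ε`, and
`√(log x)` is at least `A (log log x)^2`. -/
structure IsParameterChoice (k : ℕ) (C η ν ε A : ℝ) : Prop where
  η_pos : 0 < η
  η_le_one : η ≤ 1
  pairConst_mul_le_multipleConst : pairConst k C * η ≤ multipleConst k / 8
  pairConst_mul_le_dilationConst : pairConst k C * η ≤ dilationConst k / 4
  ν_pos : 0 < ν
  ν_le : ν ≤ 1 / 5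
  gapConst_mul_ν_le : 20 * gapConst k * ν ≤ 1 / 20
  ε_pos : 0 < ε
  ε_le : ε ≤ 1 / 200
  gapConst_mul_ε_le : 2 * gapConst k * ε ≤ dilationConst k / 4
  ε_le_mul_η : 64 * ε ≤ multipleConst k * η
  ε_le_mul_ν : 16 * ε ≤ dilationConst k * ν
  gapConst_le : 80 * gapConst k ≤ A
  sieveModulus_le : 2 * (sieveModulus k : ℝ) * (k + 1) ≤ A
  le_η_mul : 2 ≤ η * A
  le_ν_mul : 1 ≤ ν * A
  gapConst_le_mul : 128 * gapConst k ≤ multipleConst k * η * A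

lemma eventually_mul_le_nhdsGT_zero (a : ℝ) {b : ℝ} (hb : 0 < b) :
    ∀ᶠ t in nhdsWithin (0 : ℝ) (Set.Ioi 0), a * t ≤ b := by
  have hlim : Filter.Tendsto (a * ·) (nhds 0) (nhds 0) := by
    simpa only [mul_zero] using (continuous_const_mul a).tendsto 0
  exact (hlim.mono_left nhdsWithin_le_nhds).eventually (eventually_le_nhds hb)

lemma exists_isParameterChoice (k : ℕ) (C : ℝ) : ∃ η ν ε A, IsParameterChoice k C η ν ε A := by
  have hmult := multipleConst_pos k
  have hdil := dilationConst_pos k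
  obtain ⟨η, hη0, hη1, hη_mult, hη_dil⟩ := (eventually_mem_nhdsWithin.and <|
    (eventually_mul_le_nhdsGT_zero 1 one_pos).and <|
    (eventually_mul_le_nhdsGT_zero (pairConst k C) (by positivity : 0 < multipleConst k / 8)).and <|
    eventually_mul_le_nhdsGT_zero (pairConst k C) (by positivity : 0 < dilationConst k / 4)).exists
  obtain ⟨ν, hν0, hν, hν_gap⟩ := (eventually_mem_nhdsWithin.and <|
    (eventually_mul_le_nhdsGT_zero 1 (by norm_num : (0 : ℝ) < 1 / 5)).and <|
    eventually_mul_le_nhdsGT_zero (20 * gapConst k) (by norm_num : (0 : ℝ) < 1 / 20)).exists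
  rw [Set.mem_Ioi] at hη0 hν0
  obtain ⟨ε, hε0, hε, hε_gap, hεη, hεν⟩ := (eventually_mem_nhdsWithin.and <|
    (eventually_mul_le_nhdsGT_zero 1 (by norm_num : (0 : ℝ) < 1 / 200)).and <|
    (eventually_mul_le_nhdsGT_zero (2 * gapConst k)
      (by positivity : 0 < dilationConst k / 4)).and <|
    (eventually_mul_le_nhdsGT_zero 64 (mul_pos hmult hη0)).and <|
    eventually_mul_le_nhdsGT_zero 16 (mul_pos hdil hν0)).exists
  obtain ⟨A, hA_gap, hA_mod, hAη, hAν, hA⟩ :=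
    ((Filter.eventually_ge_atTop (80 * gapConst k)).and <|
    (Filter.eventually_ge_atTop (2 * (sieveModulus k : ℝ) * (k + 1))).and <|
    ((Filter.tendsto_id.const_mul_atTop hη0).eventually_ge_atTop 2).and <|
    ((Filter.tendsto_id.const_mul_atTop hν0).eventually_ge_atTop 1).and <|
    (Filter.tendsto_id.const_mul_atTop (mul_pos hmult hη0)).eventually_ge_atTop
      (128 * gapConst k)).exists
  rw [one_mul] at hη1 hν hε
  exact ⟨η, ν, ε, A, hη0, hη1, hη_mult, hη_dil, hν0, hν, hν_gap, hε0, hε, hε_gap, hεη, hεν, hA_gap,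
    hA_mod, hAη, hAν, hA⟩

namespace IsParameterChoice

variable {k : ℕ} {C η ν ε A L t : ℝ}

lemma A_pos (s : IsParameterChoice k C η ν ε A) : 0 < A := by
  linarith [s.gapConst_le, gapConst_pos k]

lemma le_sqrt (s : IsParameterChoice k C η ν ε A) (ht : 1 ≤ t) (hA : A * t ^ 2 ≤ √L) : A ≤ √L :=
  (le_mul_of_one_le_right s.A_pos.le (one_le_pow₀ ht)).trans hA

lemma sqrt_pos (s : IsParameterChoice k C η ν ε A) (ht : 1 ≤ t) (hA : A * t ^ 2 ≤ √L) : 0 < √L :=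
  s.A_pos.trans_le (s.le_sqrt ht hA)

lemma two_mul_sqrt_le (s : IsParameterChoice k C η ν ε A) (ht : 1 ≤ t) (hA : A * t ^ 2 ≤ √L) :
    2 * √L ≤ η * L := by
  have hsqrt := s.sqrt_pos ht hA
  calc 2 * √L ≤ η * √L * √L := by
        gcongr
        exact s.le_η_mul.trans (mul_le_mul_of_nonneg_left (s.le_sqrt ht hA) s.η_pos.le)
    _ = η * L := by rw [mul_assoc, Real.mul_self_sqrt (Real.sqrt_pos.1 hsqrt).le]

lemma sqrt_le_mul_div (s : IsParameterChoice k C η ν ε A) (ht : 1 ≤ t) (hA : A * t ^ 2 ≤ √L) :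
    √L ≤ ν * L / t ^ 2 := by
  have hsqrt := s.sqrt_pos ht hA
  have hν := s.ν_pos
  have ht_sq : t ^ 2 ≤ ν * √L :=
    calc t ^ 2 ≤ ν * A * t ^ 2 := le_mul_of_one_le_left (sq_nonneg t) s.le_ν_mul
      _ ≤ ν * √L := by
        rw [mul_assoc]
        gcongr
  rw [le_div_iff₀ (by positivity)]
  calc √L * t ^ 2 ≤ √L * (ν * √L) := by gcongr
    _ = ν * L := by rw [mul_left_comm, Real.mul_self_sqrt (Real.sqrt_pos.1 hsqrt).le]

lemma two_mul_add_le (s : IsParameterChoice k C η ν ε A) (ht : 1 ≤ t) (hA : A * t ^ 2 ≤ √L) :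
    2 * (ε / t ^ 2) + 4 * gapConst k * √L / L ≤ multipleConst k * η / 16 := by
  have hsqrt := s.sqrt_pos ht hA
  have hε : ε / t ^ 2 ≤ ε := div_le_self s.ε_pos.le (one_le_pow₀ ht)
  have hgap : 4 * gapConst k * √L / L ≤ multipleConst k * η / 32 := by
    have := mul_le_mul_of_nonneg_left (s.le_sqrt ht hA) (mul_pos (multipleConst_pos k) s.η_pos).le
    rw [mul_div_assoc, Real.sqrt_div_self', mul_one_div, div_le_iff₀ hsqrt]
    linarith [s.gapConst_le_mul]
  linarith [s.ε_le_mul_η]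

lemma two_mul_add_le_half (s : IsParameterChoice k C η ν ε A) (ht : 1 ≤ t)
    (hA : A * t ^ 2 ≤ √L) : 2 * (ε / t ^ 2) + 4 * gapConst k * √L / L ≤ 1 / 2 := by
  nlinarith [s.two_mul_add_le ht hA, s.η_pos, s.η_le_one, multipleConst_le k]

lemma five_mul_add_add_lt (s : IsParameterChoice k C η ν ε A) (ht : 1 ≤ t)
    (hA : A * t ^ 2 ≤ √L) :
    5 * (ε / t ^ 2) + 20 * gapConst k * ν / t + 4 * gapConst k * √L / L < 1 / (5 * t) := by
  have hsqrt := s.sqrt_pos ht hA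
  have ht0 : 0 < t := by linarith
  have ht_sq : t ≤ t ^ 2 := le_self_pow₀ ht two_ne_zero
  have herror : 5 * (ε / t ^ 2) ≤ 1 / 40 / t := by
    have hε := s.ε_pos
    calc 5 * (ε / t ^ 2) ≤ 5 * (ε / t) := by gcongr
      _ = 5 * ε / t := by ring
      _ ≤ 1 / 40 / t := by
        gcongr
        linarith [s.ε_le]
  have hgap : 20 * gapConst k * ν / t ≤ 1 / 20 / t := by
    gcongr
    exact s.gapConst_mul_ν_le
  have hsmall : 4 * gapConst k * √L / L ≤ 1 / 20 / t := by
    rw [mul_div_assoc, Real.sqrt_div_self', mul_one_div, div_le_div_iff₀ hsqrt ht0]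
    have := mul_le_mul s.gapConst_le ht_sq ht0.le s.A_pos.le
    linarith
  calc _ ≤ 1 / 40 / t + 1 / 20 / t + 1 / 20 / t := by linarith
    _ = 1 / 8 / t := by ring
    _ < 1 / 5 / t := by gcongr; norm_num
    _ = 1 / (5 * t) := div_div _ _ _

end IsParameterChoice

theorem CountingRegime.squarefree_gcd_of_isChampion {k y : ℕ} {x U L t C η ν ε A : ℝ}
    {D : Finset ℕ} (c : CountingRegime k x U L (ε / t ^ 2) ε C y)
    (s : IsParameterChoice k C η ν ε A) (hLt : Real.log L ≤ t) (ht : 1 ≤ t) (hA : A * t ^ 2 ≤ √L)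
    (hprime : ∀ g : ℕ, 0 < g → Real.log g ≤ t → ∃ q, q.Prime ∧ ¬ q ∣ g ∧ (q : ℝ) ≤ 5 * t)
    (hU : 2 ≤ U) (hy : 8 * k ≤ Real.log y)
    (hexp : Real.exp (32 * (k + 1) ^ 4 / Real.log y) ≤ 1 + multipleConst k * η / 8)
    (hD : IsChampion k x D) : Squarefree (D.gcd id) := by
  rw [Nat.squarefree_iff_prime_squarefree]
  intro p hp hpD
  obtain ⟨F, hF, rfl⟩ := exists_image_mul_eq hp.pos fun d hd => hpD.trans (gcd_dvd (f := id) hd)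
  have hsqrt := s.two_mul_sqrt_le ht hA
  have hmod : 2 * (sieveModulus k : ℝ) * (k + 1) ≤ √L := s.sieveModulus_le.trans (s.le_sqrt ht hA)
  have v := c.isAdmissibleOffsets_of_isChampion (s.two_mul_add_le_half ht hA) hy hU hD
  have hupper := c.sup_id_le_of_isChampion v hD s.η_pos s.η_le_one (by linarith [c.le_sqrt])
    (by linarith [c.le_sqrt]) s.pairConst_mul_le_multipleConst (s.two_mul_add_le ht hA) hexp
  have hlower := c.mul_div_lt_sup_id_of_isChampion hp hF v hD hLt ht hprime s.ν_pos s.ν_le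
    (s.five_mul_add_add_lt ht hA)
  have hsqrt_le := (s.sqrt_le_mul_div ht hA).trans hlower.le
  have hmod_le : (2 * sieveModulus k : ℝ) ≤ (F.image (p * ·)).sup id :=
    (le_mul_of_one_le_right (by positivity) (by linarith [(Nat.cast_nonneg k : (0 : ℝ) ≤ k)])).trans
      (hmod.trans hsqrt_le)
  have herror : 16 * (ε / t ^ 2) * L ≤ dilationConst k * (F.image (p * ·)).sup id :=
    calc 16 * (ε / t ^ 2) * L = 16 * ε * (L / t ^ 2) := by ring
      _ ≤ dilationConst k * ν * (L / t ^ 2) :=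
        mul_le_mul_of_nonneg_right s.ε_le_mul_ν (div_nonneg (by linarith [c.le_L]) (sq_nonneg t))
      _ = dilationConst k * (ν * L / t ^ 2) := by ring
      _ ≤ _ := mul_le_mul_of_nonneg_left hlower.le (dilationConst_pos k).le
  exact c.not_isChampion_image_mul hp hF v hsqrt_le (mod_cast hmod_le) hupper s.gapConst_mul_ε_le
    s.pairConst_mul_le_dilationConst herror hD

theorem eventually_squarefree_gcd_of_isChampion {k : ℕ} (hk : 0 < k)
    (h₁ : HardyLittlewoodAsymptotic k (k + 1) fun x => Real.log (Real.log x) ^ 2)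
    (h₂ : HardyLittlewoodAsymptotic (k + 1) (k + 1) fun _ => 1) :
    ∀ᶠ x in Filter.atTop, ∀ D, IsChampion k x D → Squarefree (D.gcd id) := by
  obtain ⟨C, -, hregime⟩ := exists_eventually_countingRegime hk h₁ h₂
  obtain ⟨η, ν, ε, A, s⟩ := exists_isParameterChoice k C
  have hη : 0 < multipleConst k * η / 8 := by
    have := multipleConst_pos k
    have := s.η_pos
    positivity
  filter_upwards [hregime ε s.ε_pos (by linarith [s.ε_le]),
    tendsto_log_log_atTop.eventually_ge_atTop 1,
    Real.tendsto_log_atTop.eventually (eventually_mul_log_pow_le_sqrt 2 A),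
    tendsto_log_log_atTop.eventually eventually_exists_prime_not_dvd,
    eventually_mul_log_pow_le (k + 1) 2,
    tendsto_log_siftingLevel.eventually_ge_atTop (8 * k : ℝ),
    eventually_exp_div_log_siftingLevel_le (32 * (k + 1) ^ 4) hη,
    Real.tendsto_log_atTop.eventually_gt_atTop 0]
    with x c ht hA hprime hU hy hexp hL D hD
  exact c.squarefree_gcd_of_isChampion s le_rfl ht hA hprime
    ((le_div_iff₀ (by positivity)).2 hU) hy hexp hD

/-- Theorem 2: under the strong Hardy–Littlewood conjecture, the gcd of
every sufficiently large `k`-tuple jumping champion is squarefree. -/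
theorem stmt15 (k : ℕ) (hk : 1 ≤ k)
    (HL1 : ∀ ε : ℝ, 0 < ε → ∃ X : ℝ, ∀ x : ℝ, X ≤ x →
      ∀ D : Finset ℕ, D.card = k →
        (∀ d ∈ D, 2 ≤ d ∧ (d : ℝ) ≤ (Real.log x) ^ (k + 1)) →
        singSeries (insert 0 D) ≠ 0 →
        |(primePi x (insert 0 D) : ℝ) -
            singSeries (insert 0 D) * x / (Real.log x) ^ (k + 1)| ≤
          ε * singSeries (insert 0 D) * x /
            ((Real.log x) ^ (k + 1) * (Real.log (Real.log x)) ^ 2))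
    (HL2 : ∀ ε : ℝ, 0 < ε → ∃ X : ℝ, ∀ x : ℝ, X ≤ x →
      ∀ D : Finset ℕ, D.card = k + 1 →
        (∀ d ∈ D, 2 ≤ d ∧ (d : ℝ) ≤ (Real.log x) ^ (k + 1)) →
        singSeries (insert 0 D) ≠ 0 →
        |(primePi x (insert 0 D) : ℝ) -
            singSeries (insert 0 D) * x / (Real.log x) ^ (k + 2)| ≤
          ε * singSeries (insert 0 D) * x / (Real.log x) ^ (k + 2)) :
    ∃ X : ℝ, ∀ x : ℝ, X ≤ x → ∀ D : Finset ℕ, IsChampion k x D →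
      Squarefree (D.gcd id) := by
  have hoffsets : ∀ {n x D}, IsAdmissibleOffsets n (Real.log x ^ (k + 1)) D →
      ∀ d ∈ D, 2 ≤ d ∧ (d : ℝ) ≤ Real.log x ^ (k + 1) := fun v d hd =>
    ⟨two_le_of_isAdmissible v.isAdmissible v.zero_notMem hd,
      v.le_of_mem_insert_zero d (mem_insert_of_mem hd)⟩
  refine Filter.eventually_atTop.1 (eventually_squarefree_gcd_of_isChampion hk ?_ ?_)
  · intro ε hε
    obtain ⟨X, hX⟩ := HL1 ε hε
    filter_upwards [Filter.eventually_ge_atTop X] with x hx D v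
    rw [← mul_div_assoc, div_mul_div_comm, mul_comm (_ ^ 2), ← mul_assoc]
    exact hX x hx D v.card_eq (hoffsets v) v.singSeries_pos.ne'
  · intro ε hε
    obtain ⟨X, hX⟩ := HL2 ε hε
    filter_upwards [Filter.eventually_ge_atTop X] with x hx D v
    rw [div_one, ← mul_div_assoc, ← mul_div_assoc, ← mul_assoc]
    exact hX x hx D v.card_eq (hoffsets v) v.singSeries_pos.ne'
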